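/- Let n ≥ 2 be an integer, p a prime with p ≥ (2n·n!)², and M ∈ ℤ_p[Y] a monic polynomial of degree n whose reduction modulo p is a Morse polynomial in F_p[Y]. Then there exists b ∈ ℤ_p such that M(Y) + b is irreducible in ℚ_p[Y] and has a root in the unramified extension of ℚ_p of degree n; hence the degree n unramified extension of ℚ_p is realized by M(Y) + b. -/

import Mathlib

/-!
# Realizing the unramified extension by a translate of a Morse polynomial

Over the residue field, the point is to find `b` in `F_p` such that `M + b` is irreducible; this is
an effective Chebotarev statement for the cover `y ↦ -M(y)` of the line. Let `A` be an algebraic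
closure of `F_p`, `N` the image of `M` in `A[X]`, and `R` the universal ring `Rb N n` over which
`N + T` acquires an ordered list of roots `x₁, …, xₙ`. It is the coordinate ring of an affine curve,
a Galois cover of the `T`-line with group `Sₙ`.

*Geometry of the curve.* Artin's monomials `∏ xₗ ^ aₗ` with `aₗ ≤ l` form a basis of `R` over `A[T]`.
At infinity `N + T` has `n` Laurent series roots with distinct leading coefficients because `n ≠ 0`
in `A`; so the filtration `G` by weight (`x` has weight `1`, `T` has weight `n`) is read off in
Artin coordinates (`Rb.mem_G_iff`), and its graded pieces are reduced. Over a finite value `b`, the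
Morse condition gives power series solutions which detect divisibility by `T - b`
(`Rb.exists_locHoms`). Together these show that `R` is an integrally closed domain: an idempotent
of the fraction ring is integral over `R`, hence of weight zero, hence a constant.

*Points.* For a permutation `τ`, let `Sk k τ` be the set of points `y` with `y i ^ p ^ k = y (τ i)`.
Stepanov's method bounds `#Sk k τ` by `p ^ k + O(p ^ (k / 2))`. The union over `τ` contains all
ordered root tuples over unramified values in `F_{p^k}`, which turns the upper bounds into
`#Sk k τ = p ^ k + O(p ^ (k / 2))` (`Rb.Sk_bound`).

*Removing the implied constant.* Fix an `n`-cycle `σ`. The elements of `R` fixed by Frobenius twisted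
by `σ` form a Dedekind domain over `F_p` (Lang's theorem and descent) whose `F_{p^k}`-points
correspond to `Sk k (σ ^ k)`. Counting ideals of given degree gives the Euler product
(`Zeta.euler`), and counting elements `T ^ m + (lower weight)` in an ideal gives an elementary
functional equation (`Filt.card_symm`, `Filt.card_add`), so that the zeta function is rational with
controlled degree. A rational function whose logarithmic derivative converges for `|t| < p^(-1/2)`
has no zeros or poles there, whence `|#Sk 1 σ - p| ≤ (n! (2n - 3) + 1) √p` (`Rb.card_Sk_one`).

*Conclusion modulo `p`.* If `p ≥ (2n·n!)²`, this leaves a point of `Sk 1 σ` with distinct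
coordinates: they are the roots of a translate `M + b` with `b` in `F_p`, permuted cyclically by
Frobenius, so `M + b` is irreducible (`Rb.exists_irreducible`).

*Lifting.* For monic `f` over `ℤ_p` that is irreducible modulo `p`, the ring `ℤ_p[X]/(f)` is
`p`-adically complete, and Hensel's lemma gives `p ^ n` Teichmüller roots of `X ^ (p ^ n) - X` in it.
Hence `ℚ_p[X]/(f)` is the splitting field of that polynomial
(`Rb.isSplittingField_adjoinRoot`).
-/

open Polynomial

/-- `M` is a Morse polynomial: over an algebraic closure, the zeros of the
derivative `M'` are simple, and `M` takes pairwise distinct values at the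
distinct zeros of `M'`. -/
def IsMorse {k : Type*} [Field k] (M : Polynomial k) : Prop :=
  (Polynomial.derivative (M.map (algebraMap k (AlgebraicClosure k)))).roots.Nodup ∧
  ∀ β ∈ (Polynomial.derivative (M.map (algebraMap k (AlgebraicClosure k)))).roots,
    ∀ β' ∈ (Polynomial.derivative (M.map (algebraMap k (AlgebraicClosure k)))).roots,
      β ≠ β' →
        (M.map (algebraMap k (AlgebraicClosure k))).eval β ≠
          (M.map (algebraMap k (AlgebraicClosure k))).eval β'

/-- The unramified extension of `ℚ_p` of degree `d`, characterized as the
splitting field of `X^(p^d) - X` over `ℚ_p`. -/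
noncomputable def UnramifiedExt (p : ℕ) [Fact p.Prime] (d : ℕ) : Type :=
  ((X : Polynomial ℚ_[p]) ^ (p ^ d) - X).SplittingField

noncomputable instance (p : ℕ) [Fact p.Prime] (d : ℕ) : Field (UnramifiedExt p d) :=
  inferInstanceAs (Field ((X : Polynomial ℚ_[p]) ^ (p ^ d) - X).SplittingField)

noncomputable instance (p : ℕ) [Fact p.Prime] (d : ℕ) : Algebra ℚ_[p] (UnramifiedExt p d) :=
  inferInstanceAs (Algebra ℚ_[p] ((X : Polynomial ℚ_[p]) ^ (p ^ d) - X).SplittingField)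

noncomputable section
/-! ### Artin monomials and Vandermonde determinants -/

/-- Exponent vectors `a` with `a l ≤ l`, the exponents of Artin's monomials. -/
abbrev Ar (n : ℕ) : Type := (l : Fin n) → Fin ((l : ℕ) + 1)

/-- The monomial `∏ x l ^ a l`. -/
def mon {C : Type*} [CommRing C] {n : ℕ} (x : Fin n → C) (a : Ar n) : C := ∏ l, x l ^ (a l : ℕ)

theorem card_Ar (n : ℕ) : Fintype.card (Ar n) = n.factorial := by
  simp [Fintype.card_pi, Fin.prod_univ_eq_prod_range (fun i => i + 1) n,
    Finset.prod_range_add_one_eq_factorial]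

theorem vand_cons_dvd {C : Type*} [CommRing C] {n : ℕ} (w : Fin (n + 1) → C) (i : Fin (n + 1)) :
    (Matrix.vandermonde (w ∘ i.succAbove)).det ∣ (Matrix.vandermonde w).det := by
  have h : Matrix.vandermonde (w ∘ i.cycleRange.symm) =
      (Matrix.vandermonde w).submatrix i.cycleRange.symm id := by
    ext; simp [Matrix.vandermonde]
  have h2 := Matrix.det_permute (i.cycleRange.symm) (Matrix.vandermonde w)
  rw [← h] at h2
  have h3 : (Matrix.vandermonde (w ∘ i.succAbove)).det ∣
      (Matrix.vandermonde (w ∘ i.cycleRange.symm)).det := by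
    rw [Matrix.det_vandermonde (w ∘ i.cycleRange.symm), Fin.prod_univ_succ,
      Matrix.det_vandermonde]
    apply Dvd.dvd.mul_left
    apply dvd_of_eq
    refine Finset.prod_congr rfl fun x _ => ?_
    rw [Fin.prod_Ioi_succ]
    simp
  rw [h2] at h3
  have : IsUnit ((Equiv.Perm.sign i.cycleRange.symm : ℤˣ) : C) := by
    rcases Int.units_eq_one_or (Equiv.Perm.sign i.cycleRange.symm) with h | h <;> rw [h] <;> simp
  exact (this.dvd_mul_left).1 h3

/-- The entries of the adjugate of a Vandermonde matrix are divisible by the Vandermonde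
determinant of the remaining nodes. -/
theorem vand_adj_dvd {C : Type*} [CommRing C] {n : ℕ} (w : Fin (n + 1) → C) (i k : Fin (n + 1)) :
    (Matrix.vandermonde (w ∘ i.succAbove)).det ∣ (Matrix.vandermonde w).adjugate k i := by
  set V := Matrix.vandermonde w
  set W : Fin (n + 1) → C[X] := Function.update (fun j => Polynomial.C (w j)) i X
  have h1 : Matrix.vandermonde W =
      ((V.map Polynomial.C).updateRow i (fun k => X ^ (k : ℕ))) := by
    ext a b : 1
    by_cases h : a = i
    · subst h; simp [W, Matrix.vandermonde_apply]
    · simp [W, Matrix.vandermonde_apply, h, V]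
  have h2 : (Matrix.vandermonde W).det =
      ∑ k : Fin (n + 1), Polynomial.C (V.adjugate k i) * X ^ (k : ℕ) := by
    rw [h1, ← Matrix.cramer_transpose_apply, Matrix.cramer_eq_adjugate_mulVec,
      ← Matrix.adjugate_transpose]
    have := RingHom.map_adjugate (Polynomial.C : C →+* C[X]) V
    simp only [RingHom.mapMatrix_apply] at this
    rw [← this]
    simp [Matrix.mulVec, dotProduct]
  have h3 := vand_cons_dvd W i
  have h4 : W ∘ i.succAbove = Polynomial.C ∘ (w ∘ i.succAbove) := by
    ext1 j; simp [W, Fin.succAbove_ne]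
  have h5 : (Matrix.vandermonde (Polynomial.C ∘ (w ∘ i.succAbove))).det =
     Polynomial.C (Matrix.vandermonde (w ∘ i.succAbove)).det := by
    rw [RingHom.map_det]; congr 1; ext1 a b; simp [Matrix.vandermonde_apply]
  rw [h4, h5, h2, Polynomial.C_dvd_iff_dvd_coeff] at h3
  have := h3 k
  simpa [Polynomial.finsetSum_coeff, Polynomial.coeff_C_mul, Polynomial.coeff_X_pow, Fin.val_inj] using this

/-- Lagrange interpolation without denominators: values of a polynomial at all nodes control
its coefficients up to the Vandermonde determinant. -/
theorem lagrange_dvd {C : Type*} [CommRing C] {n : ℕ} (w f : Fin (n + 1) → C) (d : C)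
    (h : ∀ i, d ∣ (Matrix.vandermonde (w ∘ i.succAbove)).det * ∑ k, f k * w i ^ (k : ℕ))
    (k : Fin (n + 1)) : d ∣ (Matrix.vandermonde w).det * f k := by
  have h1 : (Matrix.vandermonde w).det • f =
      (Matrix.vandermonde w).adjugate.mulVec ((Matrix.vandermonde w).mulVec f) := by
    rw [Matrix.mulVec_mulVec, Matrix.adjugate_mul, Matrix.smul_mulVec, Matrix.one_mulVec]
  have h2 := congrFun h1 k
  simp only [Pi.smul_apply, smul_eq_mul] at h2
  rw [h2]
  simp only [Matrix.mulVec, dotProduct]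
  refine Finset.dvd_sum fun i _ => ?_
  obtain ⟨e, he⟩ := vand_adj_dvd w i k
  rw [he, mul_right_comm]
  apply Dvd.dvd.mul_right
  convert h i using 3
  simp [Matrix.vandermonde_apply, mul_comm]

/-- If a combination of Artin monomials is divisible by `d` at every reordering of `α`, then so
are its coefficients, up to the Vandermonde determinant of `α`. The induction peels off the last
variable with `lagrange_dvd`. -/
theorem artin_dvd {C : Type*} [CommRing C] (d : C) : ∀ {n : ℕ} (α : Fin n → C) (c : Ar n → C),
    (∀ π : Fin n → Fin n, Function.Injective π → d ∣ ∑ a, c a * mon (α ∘ π) a) →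
    ∀ a, d ∣ (Matrix.vandermonde α).det * c a := by
  intro n
  induction n with
  | zero =>
    intro α c h a
    have := h id Function.injective_id
    rw [Fintype.sum_subsingleton _ a] at this
    simpa [mon] using this
  | succ n ih =>
    intro α c h a
    obtain ⟨⟨k, a'⟩, rfl⟩ := (Fin.snocEquiv (fun l : Fin (n + 1) => Fin ((l : ℕ) + 1))).surjective a
    refine lagrange_dvd α (fun k => c (Fin.snocEquiv _ (k, a'))) d (fun i => ?_) k
    refine ih (α ∘ i.succAbove) (fun a' => ∑ k, c (Fin.snocEquiv _ (k, a')) * α i ^ (k : ℕ)) ?_ a'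
    intro π hπ
    have := h (Fin.snoc (i.succAbove ∘ π) i) (Fin.snoc_injective_iff.2
      ⟨Fin.succAbove_right_injective.comp hπ, by
        rintro ⟨x, hx⟩; exact Fin.succAbove_ne i _ hx⟩)
    convert this using 1
    rw [← (Fin.snocEquiv (fun l : Fin (n + 1) => Fin ((l : ℕ) + 1))).sum_comp, Fintype.sum_prod_type,
      Finset.sum_comm]
    refine Finset.sum_congr rfl fun a' _ => ?_
    rw [Finset.sum_mul]
    refine Finset.sum_congr rfl fun k _ => ?_
    rw [mul_assoc]
    congr 1
    simp [mon, Fin.prod_univ_castSucc, mul_comm]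

theorem artin_zero {C : Type*} [CommRing C] [IsDomain C] {n : ℕ} (α : Fin n → C)
    (hα : Function.Injective α) (c : Ar n → C)
    (h : ∀ π : Fin n → Fin n, Function.Injective π → ∑ a, c a * mon (α ∘ π) a = 0) : c = 0 := by
  ext a
  have := artin_dvd 0 α c (fun π hπ => by rw [h π hπ]) a
  rw [zero_dvd_iff] at this
  exact (mul_eq_zero.1 this).resolve_left (Matrix.det_vandermonde_ne_zero_iff.2 hα)
end

/-! ### The universal splitting algebra of a monic polynomial -/

theorem exists_lift_of_coeff_mem {S : Type*} [CommRing S] (U : Subring S) (p : S[X])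
    (h : ∀ k, p.coeff k ∈ U) : ∃ q : U[X], q.map U.subtype = p := by
  refine (Polynomial.mem_lifts p).1 ((Polynomial.lifts_iff_coeff_lifts p).2 ?_)
  intro k
  exact ⟨⟨_, h k⟩, rfl⟩

theorem closure_insert_poly {S : Type*} [CommRing S] (U : Subring S) (y : S) (r : S)
    (hr : r ∈ Subring.closure ((U : Set S) ∪ {y})) : ∃ q : U[X], r = (q.map U.subtype).eval y := by
  have : Subring.closure ((U : Set S) ∪ {y}) ≤ (Polynomial.eval₂RingHom U.subtype y).range := by
    rw [Subring.closure_le]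
    rintro z (hz | hz)
    · exact ⟨C ⟨z, hz⟩, by simp⟩
    · exact ⟨X, by simpa using hz.symm⟩
  obtain ⟨q, hq⟩ := this hr
  exact ⟨q, by rw [← hq, Polynomial.eval_map]; rfl⟩

/-- If `∏ (X - x i)` has coefficients in `U`, then Artin monomials in `x` span `U[x]` over `U`:
the last variable is a root of the full product, and the remaining product has coefficients in
`U[x_last]`. -/
theorem artin_span {S : Type*} [CommRing S] : ∀ {m : ℕ} (U : Subring S) (x : Fin m → S),
    (∀ k, (∏ i, (X - C (x i))).coeff k ∈ U) →
    ∀ r ∈ Subring.closure ((U : Set S) ∪ Set.range x),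
      ∃ c : Ar m → S, (∀ a, c a ∈ U) ∧ r = ∑ a, c a * mon x a := by
  intro m
  induction m with
  | zero =>
    intro U x _ r hr
    refine ⟨fun _ => r, fun _ => ?_, ?_⟩
    · simpa using hr
    · rw [Fintype.sum_subsingleton _ (fun i => i.elim0)]; simp [mon]
  | succ m ih =>
    intro U x hU r hr
    set U' := Subring.closure ((U : Set S) ∪ {x (Fin.last m)}) with hU'
    have hUU' : U ≤ U' := fun z hz => Subring.subset_closure (Or.inl hz)
    have hxU' : x (Fin.last m) ∈ U' := Subring.subset_closure (Or.inr rfl)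
    have hr' : r ∈ Subring.closure ((U' : Set S) ∪ Set.range (x ∘ Fin.castSucc)) := by
      refine Subring.closure_mono (Set.union_subset ?_ ?_) hr
      · exact fun z hz => Or.inl (hUU' hz)
      · rintro _ ⟨i, rfl⟩
        induction i using Fin.lastCases with
        | last => exact Or.inl hxU'
        | cast i => exact Or.inr ⟨i, rfl⟩
    have hcoef : ∀ k, (∏ i, (X - C ((x ∘ Fin.castSucc) i))).coeff k ∈ U' := by
      obtain ⟨G, hG⟩ := exists_lift_of_coeff_mem U' _ (fun k => hUU' (hU k))
      have h1 := Polynomial.map_divByMonic U'.subtype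
        (p := G) (q := X - C ⟨_, hxU'⟩) (monic_X_sub_C _)
      rw [hG, Fin.prod_univ_castSucc] at h1
      simp only [Polynomial.map_sub, Polynomial.map_X, Polynomial.map_C, Subring.subtype_apply] at h1
      rw [mul_comm, Polynomial.mul_divByMonic_cancel_left _ (monic_X_sub_C _)] at h1
      intro k
      simp only [Function.comp]
      rw [← h1, Polynomial.coeff_map]
      exact Subtype.property _
    obtain ⟨c', hc', hrc⟩ := ih U' (x ∘ Fin.castSucc) hcoef r hr'
    obtain ⟨G, hG⟩ := exists_lift_of_coeff_mem U _ hU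
    have hGm : G.Monic := by
      apply Polynomial.monic_of_injective U.subtype_injective
      rw [hG]; exact monic_prod_of_monic _ _ fun i _ => monic_X_sub_C _
    have hred : ∀ z ∈ U', ∃ u : Fin (m + 1) → S, (∀ k, u k ∈ U) ∧
        z = ∑ k, u k * x (Fin.last m) ^ (k : ℕ) := by
      intro z hz
      rcases subsingleton_or_nontrivial S with hS | hS
      · exact ⟨fun _ => 0, fun _ => U.zero_mem, Subsingleton.elim _ _⟩
      have hGd : G.natDegree = m + 1 := by
        rw [← Polynomial.natDegree_map_eq_of_injective U.subtype_injective, hG,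
          Polynomial.natDegree_prod_of_monic _ _ fun i _ => monic_X_sub_C _]
        simp
      obtain ⟨q, hq⟩ := closure_insert_poly U _ z hz
      refine ⟨fun k => ((q %ₘ G).coeff k : S), fun k => Subtype.property _, ?_⟩
      have hlt : (q %ₘ G).natDegree < m + 1 := by
        rw [← hGd]
        refine natDegree_modByMonic_lt _ hGm ?_
        intro h; rw [h] at hGd; simp at hGd
      have hroot : (G.map U.subtype).eval (x (Fin.last m)) = 0 := by
        rw [hG, Polynomial.eval_prod]
        exact Finset.prod_eq_zero (Finset.mem_univ (Fin.last m)) (by simp)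
      have hqe : (q.map U.subtype).eval (x (Fin.last m)) =
          ((q %ₘ G).map U.subtype).eval (x (Fin.last m)) := by
        conv_lhs => rw [← Polynomial.modByMonic_add_div q G, Polynomial.map_add, Polynomial.map_mul,
          Polynomial.eval_add, Polynomial.eval_mul, hroot, zero_mul, add_zero]
      rw [hq, hqe, Polynomial.eval_eq_sum_range' (n := m + 1), Fin.sum_univ_eq_sum_range
        (fun k => (((q %ₘ G).coeff k : U) : S) * x (Fin.last m) ^ k)]
      · simp
      · exact lt_of_le_of_lt natDegree_map_le hlt
    choose u hu hu2 using fun a => hred (c' a) (hc' a)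
    refine ⟨fun a => u (Fin.init a) (a (Fin.last m)), fun a => hu _ _, ?_⟩
    rw [← (Fin.snocEquiv (fun l : Fin (m + 1) => Fin ((l : ℕ) + 1))).sum_comp,
      Fintype.sum_prod_type, Finset.sum_comm, hrc]
    refine Finset.sum_congr rfl fun a' _ => ?_
    rw [hu2 a', Finset.sum_mul]
    refine Finset.sum_congr rfl fun k _ => ?_
    have : Fin.init ((Fin.snocEquiv fun l : Fin (m + 1) => Fin ((l : ℕ) + 1)) (k, a')) = a' := by
      simp [Fin.snocEquiv]
    beta_reduce
    rw [this]
    simp [mon, Fin.prod_univ_castSucc]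
    ring

noncomputable section

/-- The relations expressing `∏ (X - x i) = F`, coefficient by coefficient. -/
def SAIdeal {B : Type} [CommRing B] (F : B[X]) (n : ℕ) : Ideal (MvPolynomial (Fin n) B) :=
  Ideal.span (Set.range fun k : ℕ =>
    (∏ i : Fin n, (X - C (MvPolynomial.X i : MvPolynomial (Fin n) B)) -
      F.map MvPolynomial.C).coeff k)

/-- The universal `B`-algebra over which `F` is a product `∏ (X - x i)` of `n` linear factors. -/
def SA {B : Type} [CommRing B] (F : B[X]) (n : ℕ) : Type := MvPolynomial (Fin n) B ⧸ SAIdeal F n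

namespace SA
variable {B : Type} [CommRing B] (F : B[X]) (n : ℕ)

instance : CommRing (SA F n) := inferInstanceAs (CommRing (MvPolynomial (Fin n) B ⧸ SAIdeal F n))
instance {A : Type*} [CommRing A] [Algebra A B] : Algebra A (SA F n) :=
  inferInstanceAs (Algebra A (MvPolynomial (Fin n) B ⧸ SAIdeal F n))
instance {A : Type*} [CommRing A] [Algebra A B] : IsScalarTower A B (SA F n) :=
  inferInstanceAs (IsScalarTower A B (MvPolynomial (Fin n) B ⧸ SAIdeal F n))

/-- The quotient map from the polynomial ring. -/
def mk : MvPolynomial (Fin n) B →ₐ[B] SA F n := Ideal.Quotient.mkₐ B (SAIdeal F n)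

theorem mk_surjective : Function.Surjective (mk F n) := Ideal.Quotient.mk_surjective

/-- The universal roots. -/
def x (i : Fin n) : SA F n := mk F n (MvPolynomial.X i)

theorem prod_x : ∏ i : Fin n, (X - C (x F n i)) = F.map (algebraMap B (SA F n)) := by
  have h : (∏ i : Fin n, (X - C (MvPolynomial.X i : MvPolynomial (Fin n) B)) -
      F.map MvPolynomial.C).map (mk F n : _ →+* SA F n) = 0 := by
    ext k
    rw [Polynomial.coeff_map, Polynomial.coeff_zero]
    exact Ideal.Quotient.eq_zero_iff_mem.2 (Ideal.subset_span ⟨k, rfl⟩)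
  rw [Polynomial.map_sub, sub_eq_zero, Polynomial.map_prod, Polynomial.map_map] at h
  simp only [Polynomial.map_sub, Polynomial.map_X, Polynomial.map_C] at h
  exact h

variable {F n} {D : Type*} [CommRing D]

/-- The universal property of `SA F n`. -/
def lift (φ : B →+* D) (y : Fin n → D) (h : ∏ i, (X - C (y i)) = F.map φ) : SA F n →+* D :=
  Ideal.Quotient.lift (SAIdeal F n) (MvPolynomial.eval₂Hom φ y) (by
    have : SAIdeal F n ≤ RingHom.ker (MvPolynomial.eval₂Hom φ y) := by
      refine Ideal.span_le.2 ?_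
      rintro _ ⟨k, rfl⟩
      rw [SetLike.mem_coe, RingHom.mem_ker, ← Polynomial.coeff_map, Polynomial.map_sub,
        Polynomial.map_prod, Polynomial.map_map]
      simp only [Polynomial.map_sub, Polynomial.map_X, Polynomial.map_C, MvPolynomial.coe_eval₂Hom,
        MvPolynomial.eval₂_X, h]
      have : (MvPolynomial.eval₂Hom φ y).comp MvPolynomial.C = φ := by ext; simp
      rw [this]; simp
    exact fun a ha => this ha)

@[simp] theorem lift_x (φ : B →+* D) (y : Fin n → D) (h : ∏ i, (X - C (y i)) = F.map φ) (i) :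
    lift φ y h (x F n i) = y i := by
  change MvPolynomial.eval₂Hom φ y (MvPolynomial.X i) = _
  simp

@[simp] theorem lift_algebraMap (φ : B →+* D) (y : Fin n → D) (h : ∏ i, (X - C (y i)) = F.map φ)
    (b : B) : lift φ y h (algebraMap B _ b) = φ b := by
  change MvPolynomial.eval₂Hom φ y (MvPolynomial.C b) = _
  simp

theorem hom_ext {f g : SA F n →+* D} (h1 : ∀ b, f (algebraMap B _ b) = g (algebraMap B _ b))
    (h2 : ∀ i, f (x F n i) = g (x F n i)) : f = g := by
  have : f.comp (mk F n : MvPolynomial (Fin n) B →+* SA F n) = g.comp (mk F n : _ →+* SA F n) := by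
    apply MvPolynomial.ringHom_ext
    · intro b; exact h1 b
    · intro i; exact h2 i
  ext r
  obtain ⟨r, rfl⟩ := mk_surjective F n r
  exact congrArg (fun f => f r) this

theorem closure_eq_top : Subring.closure ((((algebraMap B (SA F n)).range : Set (SA F n)) ∪
    Set.range (x F n))) = ⊤ := by
  rw [eq_top_iff]
  rintro r -
  obtain ⟨r, rfl⟩ := mk_surjective F n r
  induction r using MvPolynomial.induction_on with
  | C b => exact Subring.subset_closure (Or.inl ⟨b, rfl⟩)
  | add p q hp hq => rw [map_add]; exact add_mem hp hq
  | mul_X p i hp => rw [map_mul]; exact mul_mem hp (Subring.subset_closure (Or.inr ⟨i, rfl⟩))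

theorem exists_artin (r : SA F n) :
    ∃ c : Ar n → B, r = ∑ a, algebraMap B _ (c a) * mon (x F n) a := by
  obtain ⟨c, hc, h⟩ := artin_span (algebraMap B (SA F n)).range (x F n)
    (fun k => by rw [prod_x, Polynomial.coeff_map]; exact ⟨_, rfl⟩) r
    (by rw [closure_eq_top]; trivial)
  choose c' hc' using hc
  exact ⟨c', by simpa [hc'] using h⟩

end SA
end

noncomputable section
/-! ### Power series roots near a finite value and at infinity -/

theorem prod_eq_of_roots {D : Type*} [CommRing D] [IsDomain D] {n : ℕ} (Q : D[X]) (hQ : Q.Monic)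
    (hd : Q.natDegree = n) (y : Fin n → D) (hy : Function.Injective y) (h : ∀ i, Q.eval (y i) = 0) :
    ∏ i, (X - C (y i)) = Q := by
  have h1 : Multiset.map y Finset.univ.val ≤ Q.roots := by
    rw [Multiset.le_iff_subset ((Multiset.nodup_map_iff_of_injective hy).2 Finset.univ.nodup)]
    intro z hz
    obtain ⟨i, -, rfl⟩ := Multiset.mem_map.1 hz
    exact (mem_roots hQ.ne_zero).2 (h i)
  have h2 : ∏ i, (X - C (y i)) ∣ Q := by
    have := (Multiset.prod_X_sub_C_dvd_iff_le_roots hQ.ne_zero _).2 h1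
    rw [Multiset.map_map] at this
    exact this
  have hm : (∏ i, (X - C (y i))).Monic := monic_prod_of_monic _ _ fun i _ => monic_X_sub_C _
  refine (eq_of_monic_of_dvd_of_natDegree_le hm hQ h2 ?_).symm
  rw [hd, Polynomial.natDegree_prod_of_monic _ _ fun i _ => monic_X_sub_C _]
  simp

theorem exists_fin_enum {A : Type*} {m : ℕ} (s : Multiset A) (hs : s.Nodup)
    (hc : Multiset.card s = m) : ∃ g : Fin m → A, Function.Injective g ∧ ∀ i, g i ∈ s := by
  classical
  subst hc
  obtain ⟨l, rfl⟩ := Quot.exists_rep s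
  refine ⟨fun i => l.get (i.cast (by simp)), ?_, fun i => ?_⟩
  · intro i j h
    have h2 := (List.nodup_iff_injective_get.1 hs) h
    exact Fin.ext (congrArg Fin.val h2)
  · exact List.get_mem _ _

/-- A monic polynomial over `A⟦t⟧` whose reduction has simple roots splits, by Hensel's lemma. -/
theorem hensel_roots {A : Type*} [Field A] [IsAlgClosed A] {m : ℕ} (Q : (PowerSeries A)[X])
    (hQ : Q.Monic) (hd : Q.natDegree = m)
    (hr : (Q.map (PowerSeries.constantCoeff (R := A))).roots.Nodup) :
    ∃ y : Fin m → PowerSeries A, ∏ i, (X - C (y i)) = Q ∧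
      Function.Injective (fun i => PowerSeries.constantCoeff (R := A) (y i)) := by
  classical
  set Q0 := Q.map (PowerSeries.constantCoeff (R := A)) with hQ0
  have hQ0m : Q0.Monic := hQ.map _
  have hc : Multiset.card Q0.roots = m := by
    rw [← (IsAlgClosed.splits Q0).natDegree_eq_card_roots, hQ0, hQ.natDegree_map, hd]
  obtain ⟨g, hg, hg2⟩ := exists_fin_enum Q0.roots hr hc
  have hH : ∀ i, ∃ y : PowerSeries A, Q.eval y = 0 ∧ PowerSeries.constantCoeff (R := A) y = g i := by
    intro i
    have hroot : Q0.eval (g i) = 0 := (mem_roots hQ0m.ne_zero).1 (hg2 i)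
    have hder : Q0.derivative.eval (g i) ≠ 0 := by
      intro h
      have h1 : 1 < Q0.rootMultiplicity (g i) :=
        (one_lt_rootMultiplicity_iff_isRoot hQ0m.ne_zero).2 ⟨hroot, h⟩
      have h2 := Multiset.nodup_iff_count_le_one.1 hr (g i)
      rw [count_roots] at h2
      omega
    have hcomp : ∀ P : (PowerSeries A)[X], PowerSeries.constantCoeff (R := A)
        (P.eval (PowerSeries.C (g i))) = (P.map (PowerSeries.constantCoeff (R := A))).eval (g i) := by
      intro P
      rw [← Polynomial.eval₂_at_apply, Polynomial.eval_map, PowerSeries.constantCoeff_C]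
    obtain ⟨y, hy1, hy2⟩ := HenselianRing.is_henselian
      (I := Ideal.span {(PowerSeries.X : PowerSeries A)}) Q hQ (PowerSeries.C (g i))
      (by rw [Ideal.mem_span_singleton, PowerSeries.X_dvd_iff, hcomp]; exact hroot)
      (by
        apply IsUnit.map
        rw [PowerSeries.isUnit_iff_constantCoeff, hcomp, ← Polynomial.derivative_map]
        exact IsUnit.mk0 _ hder)
    rw [Ideal.mem_span_singleton, PowerSeries.X_dvd_iff, map_sub, PowerSeries.constantCoeff_C,
      sub_eq_zero] at hy2
    exact ⟨y, hy1, hy2⟩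
  choose y hy1 hy2 using hH
  have hinj : Function.Injective (fun i => PowerSeries.constantCoeff (R := A) (y i)) := by
    simpa [hy2] using hg
  exact ⟨y, prod_eq_of_roots Q hQ hd y (Function.Injective.of_comp hinj) hy1, hinj⟩

/-- After removing one root `β` from `N + b`, taken to be critical if there is a critical root,
the Morse condition leaves only simple roots. -/
theorem quot_nodup {A : Type*} [Field A] (N : A[X])
    (hM1 : N.derivative.roots.Nodup) (hN' : N.derivative ≠ 0)
    (hM2 : ∀ β ∈ N.derivative.roots, ∀ β' ∈ N.derivative.roots, β ≠ β' → N.eval β ≠ N.eval β')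
    (hdpos : N.natDegree ≠ 0)
    (b β : A) (hβ : N.eval β = -b) (hcrit : (∃ γ, N.derivative.eval γ = 0 ∧ N.eval γ = -b) →
      N.derivative.eval β = 0) :
    ((N + C b) /ₘ (X - C β)).roots.Nodup := by
  have hroot : (N + C b).IsRoot β := by simp [hβ]
  have hfac := mul_divByMonic_eq_iff_isRoot.2 hroot
  set Q := (N + C b) /ₘ (X - C β)
  have hNb : (N + C b) ≠ 0 := by
    intro h
    have h2 : N = C (-b) := by rw [C_neg]; exact eq_neg_of_add_eq_zero_left h
    rw [h2] at hdpos; simp at hdpos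
  have hQ0 : Q ≠ 0 := by
    intro h; rw [h, mul_zero] at hfac; exact hNb hfac.symm
  classical
  rw [Multiset.nodup_iff_count_le_one]
  intro γ
  rw [count_roots]
  by_contra hlt
  push Not at hlt
  obtain ⟨S, hS⟩ := (le_rootMultiplicity_iff hQ0).1 hlt
  rw [hS] at hfac
  have hder : N.derivative = (X - C γ) * (2 * (X - C β) * S + (X - C γ) * (S + (X - C β) * S.derivative)) := by
    have := congrArg derivative hfac
    simp only [derivative_add, derivative_C, add_zero, derivative_mul, derivative_sub, derivative_X,
      derivative_pow] at this
    rw [← this]; simp; rw [show (C 2 : A[X]) = 2 from rfl]; ring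
  have hγ : N.derivative.eval γ = 0 := by rw [hder]; simp
  have hγb : N.eval γ = -b := by
    have := congrArg (eval γ) hfac
    simp at this
    exact eq_neg_of_add_eq_zero_left this.symm
  have hβ' := hcrit ⟨γ, hγ, hγb⟩
  have hγβ : γ = β := by
    by_contra hne
    exact hM2 γ ((mem_roots hN').2 hγ) β ((mem_roots hN').2 hβ') hne (by rw [hγb, hβ])
  subst hγβ
  have h2 : 1 < N.derivative.rootMultiplicity γ := by
    refine (le_rootMultiplicity_iff hN').2 ⟨2 * S + (S + (X - C γ) * S.derivative), ?_⟩
    rw [hder]; ring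
  have h3 := Multiset.nodup_iff_count_le_one.1 hM1 γ
  rw [count_roots] at h3
  omega

/-- Near the value `b` there is a full system of power series roots `y` of `N + τ`, where `τ` is
`b` plus a uniformizer or the square of one, and the Vandermonde determinant of `y` is less
divisible than `τ - b`. The parameter is the displacement of one root `β` of `N + b`, chosen
critical if possible; the other roots follow by Hensel's lemma. -/
theorem local_lemma {A : Type*} [Field A] [IsAlgClosed A] {n : ℕ} (N : A[X]) (hN : N.Monic)
    (hd : N.natDegree = n) (hn : n ≠ 0)
    (hM1 : N.derivative.roots.Nodup) (hN' : N.derivative ≠ 0)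
    (hM2 : ∀ β ∈ N.derivative.roots, ∀ β' ∈ N.derivative.roots, β ≠ β' → N.eval β ≠ N.eval β')
    (b : A) :
    ∃ (τ : PowerSeries A) (y : Fin n → PowerSeries A),
      PowerSeries.constantCoeff τ = b ∧ Function.Injective y ∧
      ∏ i, (X - C (y i)) = N.map PowerSeries.C + C τ ∧
      ∀ c : PowerSeries A, τ - PowerSeries.C b ∣ (Matrix.vandermonde y).det * c →
        PowerSeries.constantCoeff c = 0 := by
  obtain ⟨m, rfl⟩ := Nat.exists_eq_succ_of_ne_zero hn
  obtain ⟨β, hβ, hcrit⟩ : ∃ β, N.eval β = -b ∧ ((∃ γ, N.derivative.eval γ = 0 ∧ N.eval γ = -b) →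
      N.derivative.eval β = 0) := by
    by_cases h : ∃ γ, N.derivative.eval γ = 0 ∧ N.eval γ = -b
    · obtain ⟨γ, h1, h2⟩ := h
      exact ⟨γ, h2, fun _ => h1⟩
    · obtain ⟨β, hβ⟩ := IsAlgClosed.exists_root (N + C b) (by
        rw [degree_add_C, degree_eq_natDegree hN.ne_zero, hd]
        · exact_mod_cast hn
        · rw [degree_eq_natDegree hN.ne_zero, hd]; exact_mod_cast Nat.succ_pos m)
      refine ⟨β, eq_neg_of_add_eq_zero_left (by simpa using hβ), fun h' => absurd h' h⟩
  set ι := (PowerSeries.C : A →+* PowerSeries A)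
  set cc := (PowerSeries.constantCoeff (R := A))
  have hccι : cc.comp ι = RingHom.id A := by ext; simp [cc, ι]
  set y0 : PowerSeries A := ι β + PowerSeries.X with hy0
  set ND := N.map ι with hND
  set τ := - ND.eval y0 with hτ
  have hccev : ∀ P : A[X], cc ((P.map ι).eval y0) = P.eval β := by
    intro P
    rw [← Polynomial.eval₂_at_apply, Polynomial.eval₂_map, hccι]
    simp [hy0, cc, ι, Polynomial.eval₂_eq_eval_map]
  have hccτ : cc τ = b := by rw [hτ, map_neg, hccev, hβ, neg_neg]
  set P := ND + C τ with hP
  have hNDm : ND.Monic := hN.map _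
  have hNDd : ND.natDegree = m + 1 := by rw [hND, hN.natDegree_map, hd]
  have hPm : P.Monic := hNDm.add_of_left (by
    refine lt_of_le_of_lt degree_C_le ?_
    rw [degree_eq_natDegree hNDm.ne_zero, hNDd]; exact_mod_cast Nat.succ_pos m)
  have hPd : P.natDegree = m + 1 := by rw [hP, natDegree_add_C, hNDd]
  have hroot : P.IsRoot y0 := by simp [hP, hτ]
  have hfac := mul_divByMonic_eq_iff_isRoot.2 hroot
  set Q := P /ₘ (X - C y0) with hQ
  have hQm : Q.Monic := by
    have : ((X - C y0) * Q).Monic := by rw [hfac]; exact hPm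
    exact Monic.of_mul_monic_left (monic_X_sub_C _) this
  have hQd : Q.natDegree = m := by
    rw [hQ, natDegree_divByMonic _ (monic_X_sub_C _), hPd]; simp
  have hQ0 : Q.map cc = (N + C b) /ₘ (X - C β) := by
    rw [hQ, Polynomial.map_divByMonic _ (monic_X_sub_C _), hP, hND]
    simp [Polynomial.map_map, hccι, hccτ, hy0, cc, ι]
  obtain ⟨y', hy', hinj⟩ := hensel_roots Q hQm hQd (by
    change (Q.map cc).roots.Nodup
    rw [hQ0]; exact quot_nodup N hM1 hN' hM2 (by rw [hd]; exact hn) b β hβ hcrit)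
  -- the value `Q(y₀)` is the derivative of `P` at `y₀`
  have hQev : Q.eval y0 = (N.derivative.map ι).eval y0 := by
    have := congrArg (fun f => (derivative f).eval y0) hfac
    simpa [hP, hND, derivative_map] using this
  have hprod : ∏ j, (y0 - y' j) = (N.derivative.map ι).eval y0 := by
    rw [← hQev, ← hy', eval_prod]; simp
  have hg : ∃ k, τ - ι b = - ((N.derivative.eval β) • PowerSeries.X + k * PowerSeries.X ^ 2) := by
    obtain ⟨k, hk⟩ := Polynomial.binomExpansion ND (ι β) PowerSeries.X
    refine ⟨k, ?_⟩
    have h1 : ND.eval (ι β) = ι (-b) := by rw [hND, eval_map, eval₂_at_apply, hβ]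
    have h2 : ND.derivative.eval (ι β) = ι (N.derivative.eval β) := by
      rw [hND, derivative_map, eval_map, eval₂_at_apply]
    rw [hτ, hy0, hk, h1, h2, map_neg, PowerSeries.smul_eq_C_mul]
    ring
  have hder2 : ∃ k, (N.derivative.map ι).eval y0 = ι (N.derivative.eval β) +
      ι (N.derivative.derivative.eval β) * PowerSeries.X + k * PowerSeries.X ^ 2 := by
    obtain ⟨k, hk⟩ := Polynomial.binomExpansion (N.derivative.map ι) (ι β) PowerSeries.X
    refine ⟨k, ?_⟩
    rw [hy0, hk, derivative_map, eval_map, eval_map, eval₂_at_apply, eval₂_at_apply]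
  have hnd : ¬ (τ - ι b ∣ (N.derivative.map ι).eval y0) := by
    rintro ⟨q, hq⟩
    obtain ⟨k, hk⟩ := hg
    obtain ⟨k2, hk2⟩ := hder2
    have hb0 : N.derivative.eval β = 0 := by
      have := congrArg cc hq
      rw [hccev, map_mul, hk] at this
      simpa [cc] using this
    rw [hb0] at hk hk2
    rw [hk, hk2] at hq
    have h1 := congrArg (PowerSeries.coeff 1) hq
    have h2 : - ((0 : A) • PowerSeries.X + k * PowerSeries.X ^ 2) * q =
      PowerSeries.X ^ 2 * (- k * q) := by rw [zero_smul]; ring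
    rw [h2, mul_comm k2] at h1
    simp only [map_add, map_zero, zero_add, PowerSeries.coeff_X_pow_mul'] at h1
    simp [ι] at h1
    have h3 : 1 < N.derivative.rootMultiplicity β :=
      (one_lt_rootMultiplicity_iff_isRoot hN').2 ⟨hb0, h1⟩
    classical
    have h4 := Multiset.nodup_iff_count_le_one.1 hM1 β
    rw [count_roots] at h4
    omega
  have hprodP : ∏ i, (X - C ((Fin.cons y0 y' : Fin (m + 1) → PowerSeries A) i)) = P := by
    rw [Fin.prod_univ_succ]; simp only [Fin.cons_zero, Fin.cons_succ]; rw [hy', hfac]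
  have hvand : (Matrix.vandermonde (Fin.cons y0 y' : Fin (m + 1) → PowerSeries A)).det =
      (∏ j, (y' j - y0)) * (Matrix.vandermonde y').det := by
    rw [Matrix.det_vandermonde, Fin.prod_univ_succ, Matrix.det_vandermonde]
    congr 1
    · rw [Fin.prod_Ioi_zero]; simp
    · refine Finset.prod_congr rfl fun x _ => ?_
      rw [Fin.prod_Ioi_succ]
      simp
  have hunit : IsUnit (Matrix.vandermonde y').det := by
    rw [PowerSeries.isUnit_iff_constantCoeff, RingHom.map_det]
    have : (PowerSeries.constantCoeff.mapMatrix (Matrix.vandermonde y')) =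
        Matrix.vandermonde (fun i => cc (y' i)) := by
      ext a b; simp [Matrix.vandermonde_apply, cc]
    rw [this]
    exact IsUnit.mk0 _ (Matrix.det_vandermonde_ne_zero_iff.2 hinj)
  refine ⟨τ, Fin.cons y0 y', hccτ, ?_, hprodP, ?_⟩
  · rw [Fin.cons_injective_iff]
    refine ⟨?_, Function.Injective.of_comp hinj⟩
    rintro ⟨j, hj⟩
    apply hnd
    rw [← hprod, Finset.prod_eq_zero (Finset.mem_univ j) (by rw [hj, sub_self])]
    exact dvd_zero _
  · intro c hc
    by_contra hne
    have hcu : IsUnit c := by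
      rw [PowerSeries.isUnit_iff_constantCoeff]; exact IsUnit.mk0 _ hne
    apply hnd
    rw [hcu.dvd_mul_right, hvand, hunit.dvd_mul_right] at hc
    rw [← hprod]
    have : ∏ j, (y' j - y0) = (-1) ^ m * ∏ j, (y0 - y' j) := by
      rw [show ((-1 : PowerSeries A) ^ m) = ∏ j : Fin m, (-1) by simp, ← Finset.prod_mul_distrib]
      exact Finset.prod_congr rfl fun j _ => by ring
    rw [this] at hc
    exact ((IsUnit.pow m isUnit_one.neg).dvd_mul_left).1 hc

/-- With `T = -v ^ (-n)` and `x = w / v`, the equation `N(x) + T = 0` becomes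
`v ^ n N(w / v) - 1 = 0`, whose reduction `w ^ n - 1` is separable. -/
theorem infinity_roots {A : Type*} [Field A] [IsAlgClosed A] {n : ℕ} (N : A[X]) (hN : N.Monic)
    (hd : N.natDegree = n) (hn : (n : A) ≠ 0) :
    ∃ w : Fin n → PowerSeries A,
      (∏ i, (X - C (w i)) = (N.map PowerSeries.C).scaleRoots PowerSeries.X - 1) ∧
      Function.Injective (fun i => PowerSeries.constantCoeff (R := A) (w i)) := by
  have hn0 : n ≠ 0 := by rintro rfl; simp at hn
  set Q := (N.map (PowerSeries.C (R := A))).scaleRoots PowerSeries.X - 1 with hQ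
  have h1 : ((N.map (PowerSeries.C (R := A))).scaleRoots PowerSeries.X).Monic :=
    (monic_scaleRoots_iff _).2 (hN.map _)
  have h1d : ((N.map (PowerSeries.C (R := A))).scaleRoots PowerSeries.X).natDegree = n := by
    rw [natDegree_scaleRoots, hN.natDegree_map, hd]
  have hQm : Q.Monic := by
    rw [hQ, sub_eq_add_neg]
    refine h1.add_of_left ?_
    rw [degree_neg, degree_one, degree_eq_natDegree h1.ne_zero, h1d]
    exact_mod_cast Nat.pos_of_ne_zero hn0
  have hQd : Q.natDegree = n := by
    rw [hQ, show (1 : (PowerSeries A)[X]) = C 1 from rfl, natDegree_sub_C, h1d]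
  have hQ0 : Q.map (PowerSeries.constantCoeff (R := A)) = X ^ n - 1 := by
    rw [hQ]
    ext k
    simp only [Polynomial.map_sub, Polynomial.map_one, coeff_sub, coeff_map, coeff_scaleRoots,
      map_mul, map_pow, PowerSeries.constantCoeff_X, PowerSeries.constantCoeff_C, hN.natDegree_map,
      hd, coeff_X_pow]
    congr 1
    split_ifs with h
    · subst h; simp only [Nat.sub_self, pow_zero, mul_one]; rw [← hd]; exact hN
    · rcases lt_or_gt_of_ne h with h | h
      · rw [zero_pow (by omega), mul_zero]
      · rw [coeff_eq_zero_of_natDegree_lt (by omega), zero_mul]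
  obtain ⟨w, hw, hinj⟩ := hensel_roots Q hQm hQd (by
    rw [hQ0]
    exact nodup_roots (X_pow_sub_one_separable_iff.2 hn))
  exact ⟨w, hw, hinj⟩
end

/-! ### The coordinate ring of the curve of ordered roots and its weight filtration -/

noncomputable section

/-- `N` is a monic Morse polynomial of degree `n ≥ 2`, with `n` invertible, over a field which
in applications is algebraically closed. -/
structure MorseData {A : Type} [Field A] (N : A[X]) (n : ℕ) : Prop where
  monic : N.Monic
  deg : N.natDegree = n
  two_le : 2 ≤ n
  cast_ne : (n : A) ≠ 0
  nodup : N.derivative.roots.Nodup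
  crit : ∀ β ∈ N.derivative.roots, ∀ γ ∈ N.derivative.roots, β ≠ γ → N.eval β ≠ N.eval γ

/-- The generic translate `N + T`, as a polynomial over `A[T]`. -/
def FF {A : Type} [Field A] (N : A[X]) : A[X][X] := N.map C + C X

/-- The coordinate ring of the curve of pairs of a value `T` and an ordered list of roots of
`N + T`. -/
abbrev Rb {A : Type} [Field A] (N : A[X]) (n : ℕ) : Type := SA (FF N) n

namespace Rb
variable {A : Type} [Field A] {N : A[X]} {n : ℕ}

theorem FF_map {D : Type*} [CommRing D] (N : A[X]) (φ : A[X] →+* D) :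
    (FF N).map φ = N.map (φ.comp C) + C (φ X) := by
  simp [FF, Polynomial.map_map]

variable (N n) in
/-- The coordinate `T`. -/
def T : Rb N n := algebraMap A[X] _ X

variable (N n) in
/-- The universal roots of `N + T`. -/
def xx (i : Fin n) : Rb N n := SA.x (FF N) n i

/-- A value `τ` together with an ordered list `y` of roots of `N + τ` defines a point of the curve. -/
def ev {D : Type*} [CommRing D] (φ : A →+* D) (τ : D) (y : Fin n → D)
    (h : ∏ i, (X - C (y i)) = N.map φ + C τ) : Rb N n →+* D :=
  SA.lift (Polynomial.eval₂RingHom φ τ) y (by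
    rw [h, FF_map]; congr 2
    · ext; simp
    · simp)

section
variable {D : Type*} [CommRing D] (φ : A →+* D) (τ : D) (y : Fin n → D)
    (h : ∏ i, (X - C (y i)) = N.map φ + C τ)

@[simp] theorem ev_T : ev φ τ y h (T N n) = τ := by simp [ev, T]
@[simp] theorem ev_xx (i) : ev φ τ y h (xx N n i) = y i := by simp [ev, xx]
@[simp] theorem ev_poly (q : A[X]) :
    ev φ τ y h (algebraMap A[X] (Rb N n) q) = q.eval₂ φ τ := by simp [ev]
@[simp] theorem ev_A (c : A) : ev φ τ y h (algebraMap A (Rb N n) c) = φ c := by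
  rw [IsScalarTower.algebraMap_apply A A[X] (Rb N n)]; simp
@[simp] theorem ev_mon (a : Ar n) : ev φ τ y h (mon (xx N n) a) = mon y a := by
  simp [mon, map_prod]
end

theorem hom_ext {D : Type*} [CommRing D] {f g : Rb N n →+* D}
    (h0 : ∀ c : A, f (algebraMap A _ c) = g (algebraMap A _ c)) (h1 : f (T N n) = g (T N n))
    (h2 : ∀ i, f (xx N n i) = g (xx N n i)) : f = g := by
  refine SA.hom_ext (fun b => ?_) h2
  have : f.comp (algebraMap A[X] (Rb N n)) = g.comp (algebraMap A[X] (Rb N n)) := by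
    apply Polynomial.ringHom_ext
    · intro c
      have := h0 c
      rw [IsScalarTower.algebraMap_apply A A[X] (Rb N n)] at this
      exact this
    · exact h1
  exact congrArg (fun f => f b) this

theorem prod_xx : ∏ i, (X - C (xx N n i)) = N.map (algebraMap A (Rb N n)) + C (T N n) := by
  have := SA.prod_x (FF N) n
  rw [FF_map] at this
  rw [IsScalarTower.algebraMap_eq A A[X] (Rb N n)]
  exact this

/-- The total degree of an Artin exponent. -/
def wt (a : Ar n) : ℕ := ∑ l, (a l : ℕ)

theorem wt_le (a : Ar n) : wt a ≤ n * (n - 1) := by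
  unfold wt
  calc ∑ l, (a l : ℕ) ≤ ∑ l : Fin n, (n - 1) := Finset.sum_le_sum fun l _ => by
        have := (a l).2; have := l.2; omega
    _ = n * (n - 1) := by simp

variable (N n) in
/-- The combination of Artin monomials with given coefficients in `A[T]`. -/
def art : (Ar n → A[X]) →ₗ[A[X]] Rb N n where
  toFun P := ∑ a, algebraMap A[X] _ (P a) * mon (xx N n) a
  map_add' P Q := by simp [add_mul, Finset.sum_add_distrib]
  map_smul' c P := by simp [Finset.mul_sum, mul_assoc, Algebra.smul_def]

theorem art_apply (P : Ar n → A[X]) :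
  art N n P = ∑ a, algebraMap A[X] _ (P a) * mon (xx N n) a := rfl

theorem art_surjective : Function.Surjective (art N n) := fun r => by
  obtain ⟨c, hc⟩ := SA.exists_artin r
  exact ⟨c, hc.symm⟩

variable (N n) in
/-- The span of the monomials in `T` and the `x`'s of weight less than `c`, where `T` has weight
`n` and each `x` has weight `1`. The strict inequality makes `G 0` trivial. -/
def G (c : ℕ) : Submodule A (Rb N n) :=
  Submodule.span A {r | ∃ (i : ℕ) (b : Fin n → ℕ), n * i + ∑ l, b l < c ∧
    r = T N n ^ i * ∏ l, xx N n l ^ b l}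

theorem G_mono {c d : ℕ} (h : c ≤ d) : G N n c ≤ G N n d :=
  Submodule.span_mono (by rintro r ⟨i, b, h1, h2⟩; exact ⟨i, b, h1.trans_le h, h2⟩)

theorem G_zero : G N n 0 = ⊥ := by
  rw [G, Submodule.span_eq_bot]
  rintro r ⟨i, b, h, -⟩
  omega

theorem mono_mem_G (i : ℕ) (b : Fin n → ℕ) (c : ℕ) (h : n * i + ∑ l, b l < c) :
    T N n ^ i * ∏ l, xx N n l ^ b l ∈ G N n c := Submodule.subset_span ⟨i, b, h, rfl⟩

theorem T_mem_G : T N n ∈ G N n (n + 1) := by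
  simpa using mono_mem_G (N := N) (n := n) 1 0 (n + 1) (by simp)

theorem one_mem_G : (1 : Rb N n) ∈ G N n 1 := by
  simpa using mono_mem_G (N := N) (n := n) 0 0 1 (by simp)

theorem mul_mem_G {a b : ℕ} {r s : Rb N n} (hr : r ∈ G N n (a + 1)) (hs : s ∈ G N n (b + 1)) :
    r * s ∈ G N n (a + b + 1) := by
  have h := Submodule.mul_mem_mul hr hs
  unfold G at h
  rw [Submodule.span_mul_span] at h
  refine Submodule.span_mono ?_ h
  rintro _ ⟨_, ⟨i, b1, h1, rfl⟩, _, ⟨j, b2, h2, rfl⟩, rfl⟩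
  refine ⟨i + j, b1 + b2, ?_, ?_⟩
  · simp only [Pi.add_apply, Finset.sum_add_distrib]; rw [mul_add]; omega
  · simp only [Pi.add_apply, pow_add, Finset.prod_mul_distrib]; ring

theorem art_mem_G {P : Ar n → A[X]} {c : ℕ}
    (h : ∀ a i, (P a).coeff i ≠ 0 → n * i + wt a < c) : art N n P ∈ G N n c := by
  rw [art_apply]
  refine Submodule.sum_mem _ fun a _ => ?_
  rw [(P a).as_sum_support_C_mul_X_pow, map_sum, Finset.sum_mul]
  refine Submodule.sum_mem _ fun i hi => ?_
  rw [map_mul, map_pow, mul_assoc]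
  have : algebraMap A[X] (Rb N n) (C ((P a).coeff i)) = algebraMap A _ ((P a).coeff i) :=
    (IsScalarTower.algebraMap_apply A A[X] (Rb N n) _).symm
  rw [this, ← Algebra.smul_def]
  exact Submodule.smul_mem _ _ (mono_mem_G i (fun l => a l) c (h a i (mem_support_iff.1 hi)))

theorem exists_mem_G (r : Rb N n) : ∃ c, r ∈ G N n c := by
  obtain ⟨P, rfl⟩ := art_surjective r
  refine ⟨n * (∑ a, (P a).natDegree) + n * (n - 1) + 1, art_mem_G fun a i hi => ?_⟩
  have h1 : i ≤ ∑ a, (P a).natDegree := (le_natDegree_of_ne_zero hi).trans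
    (Finset.single_le_sum (f := fun a => (P a).natDegree) (fun _ _ => Nat.zero_le _) (Finset.mem_univ a))
  have := wt_le a
  have := Nat.mul_le_mul_left n h1
  omega

end Rb
end

/-! ### Laurent series points at infinity -/

set_option linter.unusedSectionVars false

noncomputable section
namespace Rb
variable {A : Type} [Field A] [IsAlgClosed A] {N : A[X]} {n : ℕ}

/-- The field of Laurent series over `A`, as the fraction field of the power series ring. -/
abbrev KK (A : Type) [Field A] : Type := FractionRing (PowerSeries A)
/-- The uniformizer of the Laurent series field. -/
abbrev vK (A : Type) [Field A] : KK A := algebraMap (PowerSeries A) (KK A) PowerSeries.X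

theorem vK_ne : vK A ≠ 0 := by
  rw [Ne, FaithfulSMul.algebraMap_eq_zero_iff]; exact PowerSeries.X_ne_zero

theorem exists_inf_hom (hN : MorseData N n) : ∃ w : Fin n → PowerSeries A,
    Function.Injective (fun i => PowerSeries.constantCoeff (R := A) (w i)) ∧
    ∀ π : Fin n → Fin n, Function.Injective π → ∃ e : Rb N n →+* KK A,
      (∀ c : A, e (algebraMap A _ c) = algebraMap (PowerSeries A) (KK A) (PowerSeries.C c)) ∧
      vK A ^ n * e (T N n) = -1 ∧
      ∀ i, vK A * e (xx N n i) = algebraMap (PowerSeries A) (KK A) (w (π i)) := by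
  obtain ⟨w, hw, hinj⟩ := infinity_roots N hN.monic hN.deg hN.cast_ne
  refine ⟨w, hinj, fun π hπ => ?_⟩
  set ι : PowerSeries A →+* KK A := algebraMap _ _
  have hιinj : Function.Injective ι := IsFractionRing.injective _ _
  have hn0 : n ≠ 0 := by have := hN.two_le; omega
  have hNm : (N.map (ι.comp PowerSeries.C)).Monic := hN.monic.map _
  have hNd : (N.map (ι.comp PowerSeries.C)).natDegree = n := by rw [hN.monic.natDegree_map, hN.deg]
  have hv := vK_ne (A := A)
  have key : ∏ i, (X - C ((fun i => (vK A)⁻¹ * ι (w (π i))) i)) =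
      N.map (ι.comp PowerSeries.C) + C (-((vK A)^n)⁻¹) := by
    refine prod_eq_of_roots _ ?_ ?_ _ ?_ ?_
    · refine hNm.add_of_left (lt_of_le_of_lt degree_C_le ?_)
      rw [degree_eq_natDegree hNm.ne_zero, hNd]; exact_mod_cast Nat.pos_of_ne_zero hn0
    · rw [natDegree_add_C, hNd]
    · intro i j hij
      have h1 := mul_left_cancel₀ (inv_ne_zero hv) hij
      have h2 := hιinj h1
      exact hπ (hinj (congrArg (PowerSeries.constantCoeff (R := A)) h2))
    · intro i
      have h1 := congrArg (eval₂ ι (ι (w (π i)))) hw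
      rw [eval₂_finsetProd, Finset.prod_eq_zero (Finset.mem_univ (π i)) (by simp), eval₂_sub,
        eval₂_one] at h1
      have h2 := scaleRoots_eval₂_mul (p := N.map PowerSeries.C) ι ((vK A)⁻¹ * ι (w (π i)))
        PowerSeries.X
      rw [mul_inv_cancel_left₀ (by exact hv), sub_eq_zero.1 h1.symm, hN.monic.natDegree_map, hN.deg,
        eval₂_map] at h2
      rw [eval_add, eval_C, eval_map]
      have h3 : eval₂ (ι.comp PowerSeries.C) ((vK A)⁻¹ * ι (w (π i))) N = ((vK A) ^ n)⁻¹ :=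
        eq_inv_of_mul_eq_one_right h2.symm
      rw [h3, add_neg_cancel]
  refine ⟨ev _ _ _ key, fun c => by simp [ι], ?_, fun i => ?_⟩
  · rw [ev_T, mul_neg, mul_inv_cancel₀ (pow_ne_zero _ hv)]
  · rw [ev_xx, mul_inv_cancel_left₀ hv]

/-- A point of the curve at infinity: with uniformizer `v`, it sends `T` to `-v ^ (-n)` and `x i` to
`w i / v`, so that `w i` carries the leading coefficient of `x i`. -/
structure InfHom (e : Rb N n →+* KK A) (w : Fin n → PowerSeries A) : Prop where
  onA : ∀ c : A, e (algebraMap A _ c) = algebraMap (PowerSeries A) (KK A) (PowerSeries.C c)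
  onT : vK A ^ n * e (T N n) = -1
  onx : ∀ i, vK A * e (xx N n i) = algebraMap (PowerSeries A) (KK A) (w i)

theorem InfHom.mono {e : Rb N n →+* KK A} {w : Fin n → PowerSeries A} (h : InfHom e w)
    (i : ℕ) (b : Fin n → ℕ) (k : ℕ) (hk : n * i + ∑ l, b l ≤ k) :
    vK A ^ k * e (T N n ^ i * ∏ l, xx N n l ^ b l) = algebraMap (PowerSeries A) (KK A)
      ((-1) ^ i * PowerSeries.X ^ (k - (n * i + ∑ l, b l)) * ∏ l, w l ^ b l) := by
  obtain ⟨j, rfl⟩ := Nat.exists_eq_add_of_le hk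
  have h1 : vK A ^ (n * i + ∑ l, b l + j) * e (T N n ^ i * ∏ l, xx N n l ^ b l) =
    vK A ^ j * (vK A ^ n * e (T N n)) ^ i * ∏ l, (vK A * e (xx N n l)) ^ b l := by
    simp only [map_mul, map_pow, map_prod, mul_pow, Finset.prod_mul_distrib, Finset.prod_pow_eq_pow_sum]
    rw [pow_add, pow_add, pow_mul]; ring
  rw [h1, h.onT]
  simp only [h.onx, Nat.add_sub_cancel_left, map_mul, map_pow, map_neg, map_one, map_prod]
  ring

/-- An element of weight at most `k` has a pole of order at most `k` at infinity. -/
theorem InfHom.integral {e : Rb N n →+* KK A} {w : Fin n → PowerSeries A} (h : InfHom e w)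
    {r : Rb N n} {k : ℕ} (hr : r ∈ G N n (k + 1)) :
    ∃ d : PowerSeries A, algebraMap (PowerSeries A) (KK A) d = vK A ^ k * e r := by
  induction hr using Submodule.span_induction with
  | mem r hr =>
    obtain ⟨i, b, h1, rfl⟩ := hr
    exact ⟨_, (h.mono i b k (by omega)).symm⟩
  | zero => exact ⟨0, by simp⟩
  | add r s _ _ h1 h2 =>
    obtain ⟨d1, h1⟩ := h1
    obtain ⟨d2, h2⟩ := h2
    exact ⟨d1 + d2, by rw [map_add, h1, h2, map_add]; ring⟩
  | smul c r _ h1 =>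
    obtain ⟨d1, h1⟩ := h1
    exact ⟨PowerSeries.C c * d1, by rw [Algebra.smul_def, map_mul, h1, map_mul, h.onA]; ring⟩

theorem InfHom.const_zero {e : Rb N n →+* KK A} {w : Fin n → PowerSeries A} (h : InfHom e w)
    {r : Rb N n} {k : ℕ} (hr : r ∈ G N n k) (d : PowerSeries A)
    (hd : algebraMap (PowerSeries A) (KK A) d = vK A ^ k * e r) :
    PowerSeries.constantCoeff d = 0 := by
  have hinj : Function.Injective (algebraMap (PowerSeries A) (KK A)) := IsFractionRing.injective _ _
  cases k with
  | zero =>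
    rw [G_zero, Submodule.mem_bot] at hr
    subst hr
    rw [map_zero, mul_zero] at hd
    rw [(map_eq_zero_iff _ hinj).1 hd, map_zero]
  | succ k =>
    obtain ⟨d', hd'⟩ := h.integral hr
    have : d = PowerSeries.X * d' := by
      apply hinj
      rw [hd, map_mul, hd', pow_succ]; ring
    rw [this]; simp

theorem exists_infHoms (hN : MorseData N n) : ∃ (w : Fin n → PowerSeries A)
    (e : {π : Fin n → Fin n // Function.Injective π} → (Rb N n →+* KK A)),
    Function.Injective (fun i => PowerSeries.constantCoeff (R := A) (w i)) ∧
    ∀ π, InfHom (e π) (w ∘ π.1) := by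
  obtain ⟨w, hw, h⟩ := exists_inf_hom hN
  choose e h1 h2 h3 using fun π : {π : Fin n → Fin n // Function.Injective π} => h π.1 π.2
  exact ⟨w, e, hw, fun π => ⟨h1 π, h2 π, h3 π⟩⟩

theorem InfHom.art_eq {e : Rb N n →+* KK A} {w : Fin n → PowerSeries A} (h : InfHom e w)
    (P : Ar n → A[X]) (k : ℕ) (hP : ∀ a i, (P a).coeff i ≠ 0 → n * i + wt a ≤ k) :
    vK A ^ k * e (art N n P) = algebraMap (PowerSeries A) (KK A)
      (∑ a, ∑ i ∈ (P a).support, PowerSeries.C ((P a).coeff i) *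
        ((-1) ^ i * PowerSeries.X ^ (k - (n * i + wt a)) * mon w a)) := by
  rw [art_apply, map_sum, map_sum, Finset.mul_sum]
  refine Finset.sum_congr rfl fun a _ => ?_
  conv_lhs => rw [(P a).as_sum_support_C_mul_X_pow]
  rw [map_sum, Finset.sum_mul, map_sum, Finset.mul_sum, map_sum]
  refine Finset.sum_congr rfl fun i hi => ?_
  have : algebraMap A[X] (Rb N n) (C ((P a).coeff i)) = algebraMap A _ ((P a).coeff i) :=
    (IsScalarTower.algebraMap_apply A A[X] (Rb N n) _).symm
  have h2 := h.mono i (fun l => a l) k (hP a i (mem_support_iff.1 hi))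
  have h3 : algebraMap A[X] (Rb N n) (C ((P a).coeff i) * X ^ i) * mon (xx N n) a =
      algebraMap A _ ((P a).coeff i) * (T N n ^ i * ∏ l, xx N n l ^ (a l : ℕ)) := by
    rw [map_mul, map_pow, this, mul_assoc]; rfl
  rw [h3, map_mul, h.onA, mul_left_comm, h2, ← map_mul]
  rfl

/-- If the combination has a pole of order less than `k` at all points at infinity, then its
terms of weight `k` vanish, since Artin monomials are independent on the distinct leading
coefficients. -/
theorem lead_zero (hN : MorseData N n) (P : Ar n → A[X]) (k : ℕ)
    (hP : ∀ a i, (P a).coeff i ≠ 0 → n * i + wt a ≤ k)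
    (w : Fin n → PowerSeries A)
    (e : {π : Fin n → Fin n // Function.Injective π} → (Rb N n →+* KK A))
    (hw : Function.Injective (fun i => PowerSeries.constantCoeff (R := A) (w i)))
    (he : ∀ π, InfHom (e π) (w ∘ π.1))
    (h0 : ∀ π d, algebraMap (PowerSeries A) (KK A) d = vK A ^ k * e π (art N n P) →
      PowerSeries.constantCoeff d = 0) (a : Ar n) (i : ℕ) (hi : (P a).coeff i ≠ 0) :
    n * i + wt a < k := by
  have hn0 : 0 < n := by have := hN.two_le; omega
  have hz := artin_zero (fun i => PowerSeries.constantCoeff (R := A) (w i)) hw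
    (fun a => ∑ i ∈ (P a).support, (P a).coeff i * ((-1) ^ i * 0 ^ (k - (n * i + wt a)))) (by
      intro π hπ
      have h1 := h0 ⟨π, hπ⟩ _ ((he ⟨π, hπ⟩).art_eq P k hP).symm
      rw [map_sum] at h1
      refine Eq.trans ?_ h1
      refine Finset.sum_congr rfl fun a _ => ?_
      rw [map_sum, Finset.sum_mul]
      refine Finset.sum_congr rfl fun i _ => ?_
      simp [mon, map_prod, mul_assoc])
  refine lt_of_le_of_ne (hP a i hi) fun heq => ?_
  have h2 := congrFun hz a
  rw [Finset.sum_eq_single i] at h2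
  · rw [heq, Nat.sub_self, pow_zero, mul_one] at h2
    simp at h2
    exact hi h2
  · intro j hj hji
    have h3 := hP a j (mem_support_iff.1 hj)
    rw [zero_pow, mul_zero, mul_zero]
    intro h4
    have : n * j = n * i := by omega
    exact hji (Nat.eq_of_mul_eq_mul_left hn0 this)
  · intro h; simp at h; exact absurd h hi

/-- Membership in the filtration is read off in Artin coordinates. -/
theorem mem_G_iff (hN : MorseData N n) (P : Ar n → A[X]) (c : ℕ) :
    art N n P ∈ G N n c ↔ ∀ a i, (P a).coeff i ≠ 0 → n * i + wt a < c := by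
  refine ⟨fun h => ?_, art_mem_G⟩
  obtain ⟨w, e, hw, he⟩ := exists_infHoms hN
  have key : ∀ k, (∀ a i, (P a).coeff i ≠ 0 → n * i + wt a < c + k) →
      ∀ a i, (P a).coeff i ≠ 0 → n * i + wt a < c := by
    intro k
    induction k with
    | zero => exact fun h => h
    | succ k ih =>
      intro h2
      refine ih (lead_zero hN P (c + k) (fun a i hi => Nat.lt_succ_iff.1 (h2 a i hi)) w e hw he ?_)
      intro π d hd
      exact (he π).const_zero (G_mono (Nat.le_add_right c k) h) d hd
  refine key (n * (∑ a, (P a).natDegree) + n * (n - 1) + 1) fun a i hi => ?_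
  have h1 : i ≤ ∑ a, (P a).natDegree := (le_natDegree_of_ne_zero hi).trans
    (Finset.single_le_sum (f := fun a => (P a).natDegree) (fun _ _ => Nat.zero_le _) (Finset.mem_univ a))
  have := wt_le a
  have := Nat.mul_le_mul_left n h1
  omega

theorem art_injective (hN : MorseData N n) : Function.Injective (art N n) := by
  rw [← LinearMap.ker_eq_bot, LinearMap.ker_eq_bot']
  intro P hP
  have h := (mem_G_iff hN P 0).1 (by rw [hP]; exact zero_mem _)
  ext a i
  by_contra hne
  exact absurd (h a i hne) (by omega)

/-- The graded ring of the filtration has no elements of square zero. -/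
theorem sq_mem_G (hN : MorseData N n) {r : Rb N n} {c : ℕ} (h1 : r ∈ G N n (c + 1))
    (h2 : r ^ 2 ∈ G N n (2 * c)) : r ∈ G N n c := by
  obtain ⟨w, e, hw, he⟩ := exists_infHoms hN
  have hinj : Function.Injective (algebraMap (PowerSeries A) (KK A)) := IsFractionRing.injective _ _
  obtain ⟨P, rfl⟩ := art_surjective r
  refine (mem_G_iff hN P c).2 (lead_zero hN P c
    (fun a i hi => Nat.lt_succ_iff.1 ((mem_G_iff hN P _).1 h1 a i hi)) w e hw he ?_)
  intro π d hd
  have := (he π).const_zero h2 (d ^ 2) (by rw [map_pow, hd, map_pow]; ring)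
  rw [map_pow] at this
  exact pow_eq_zero_iff (two_ne_zero) |>.1 this

end Rb
end

/-! ### The coordinate ring is an integrally closed domain -/

noncomputable section
namespace Rb
variable {A : Type} [Field A] [IsAlgClosed A] {N : A[X]} {n : ℕ}

theorem MorseData.deriv_ne (hN : MorseData N n) : N.derivative ≠ 0 := by
  intro h
  have h1 := congrArg (fun q => q.coeff (n - 1)) h
  have h2 : n - 1 + 1 = n := by have := hN.two_le; omega
  have h3 : N.coeff n = 1 := by rw [← hN.deg]; exact hN.monic
  simp only [coeff_derivative, h2, h3, coeff_zero, one_mul] at h1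
  rw [← Nat.cast_succ, Nat.succ_eq_add_one, h2] at h1
  exact hN.cast_ne h1

/-- The power series points of the curve over the value `b`: they are jointly injective enough to
detect divisibility by `T - b`. -/
theorem exists_locHoms (hN : MorseData N n) (b : A) :
    ∃ (τ : PowerSeries A) (e : {π : Fin n → Fin n // Function.Injective π} → (Rb N n →+* PowerSeries A)),
      (∀ π (q : A[X]), e π (algebraMap A[X] _ q) = q.eval₂ PowerSeries.C τ) ∧
      ∀ r, (∀ π, τ - PowerSeries.C b ∣ e π r) →
        ∃ r', r = algebraMap A[X] _ (X - C b) * r' := by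
  obtain ⟨τ, y, h1, h2, h3, h4⟩ := local_lemma N hN.monic hN.deg (by have := hN.two_le; omega)
    hN.nodup (MorseData.deriv_ne hN) hN.crit b
  have h5 : ∀ π : {π : Fin n → Fin n // Function.Injective π},
      ∏ i, (X - C ((y ∘ π.1) i)) = N.map PowerSeries.C + C τ := by
    intro π
    rw [← h3]
    exact Function.Bijective.prod_comp (Finite.injective_iff_bijective.1 π.2) (fun i => X - C (y i))
  refine ⟨τ, fun π => ev PowerSeries.C τ (y ∘ π.1) (h5 π), fun π q => by simp, fun r hr => ?_⟩
  obtain ⟨P, rfl⟩ := art_surjective r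
  have h6 : ∀ a, (X - C b) ∣ P a := by
    intro a
    have h7 := artin_dvd (τ - PowerSeries.C b) y (fun a => (P a).eval₂ PowerSeries.C τ) (by
      intro π hπ
      have := hr ⟨π, hπ⟩
      rw [art_apply, map_sum] at this
      simpa using this) a
    have h8 := h4 _ h7
    rw [hom_eval₂, h1] at h8
    rw [dvd_iff_isRoot, IsRoot]
    have : (PowerSeries.constantCoeff (R := A)).comp PowerSeries.C = RingHom.id A := by ext; simp
    rw [this] at h8
    exact h8
  choose P' hP' using h6
  refine ⟨art N n P', ?_⟩
  rw [← Algebra.smul_def, ← map_smul]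
  congr 1
  ext1 a
  simp [hP' a]

theorem poly_torsion (hN : MorseData N n) {s : A[X]} (hs : s ≠ 0) {r : Rb N n}
    (h : algebraMap A[X] _ s * r = 0) : r = 0 := by
  obtain ⟨P, rfl⟩ := art_surjective r
  rw [← Algebra.smul_def, ← map_smul, map_eq_zero_iff _ (art_injective hN)] at h
  rw [(smul_eq_zero.1 h).resolve_left hs, map_zero]

theorem sq_zero (hN : MorseData N n) {r : Rb N n} (h : r ^ 2 = 0) : r = 0 := by
  obtain ⟨c, hc⟩ := exists_mem_G r
  induction c with
  | zero => rw [G_zero] at hc; exact hc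
  | succ c ih => exact ih (sq_mem_G hN hc (by rw [h]; exact zero_mem _))

theorem isReduced (hN : MorseData N n) : IsReduced (Rb N n) := by
  refine (isReduced_iff_pow_one_lt 2 (by norm_num)).2 fun r h => sq_zero hN h

theorem nontrivial (hN : MorseData N n) : Nontrivial (Rb N n) := (art_injective hN).nontrivial

theorem algebraMap_inj (hN : MorseData N n) : Function.Injective (algebraMap A[X] (Rb N n)) := by
  have := nontrivial hN
  rw [injective_iff_map_eq_zero]
  intro s hs
  by_contra hne
  exact one_ne_zero (poly_torsion hN hne (r := 1) (by rw [hs, zero_mul]))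

theorem mem_G_one {r : Rb N n} (hn : n ≠ 0) (h : r ∈ G N n 1) : ∃ c : A, r = algebraMap A _ c := by
  have : G N n 1 ≤ Submodule.span A {1} := by
    refine Submodule.span_mono ?_
    rintro r ⟨i, b, h1, rfl⟩
    have h2 : n * i = 0 := by omega
    have h3 : ∑ l, b l = 0 := by omega
    have h4 : i = 0 := (Nat.mul_eq_zero.1 h2).resolve_left hn
    have h5 : ∀ l, b l = 0 := by simpa using h3
    simp [h4, h5]
  obtain ⟨c, hc⟩ := Submodule.mem_span_singleton.1 (this h)
  exact ⟨c, by rw [← hc, Algebra.smul_def, mul_one]⟩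

/-- An idempotent has weight zero because the graded ring is reduced, so it is a constant. -/
theorem idem (hN : MorseData N n) {r : Rb N n} (h : r ^ 2 = r) : r = 0 ∨ r = 1 := by
  have h1 : r ∈ G N n 1 := by
    obtain ⟨c, hc⟩ := exists_mem_G r
    induction c with
    | zero => exact G_mono (Nat.zero_le 1) hc
    | succ c ih =>
      rcases Nat.eq_zero_or_pos c with rfl | hc0
      · exact hc
      · exact ih (sq_mem_G hN hc (by rw [h]; exact G_mono (by omega) hc))
  obtain ⟨c, rfl⟩ := mem_G_one (by have := hN.two_le; omega) h1
  have := nontrivial hN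
  rw [← map_pow] at h
  have h2 := (algebraMap A (Rb N n)).injective h
  have h3 : c * (c - 1) = 0 := by linear_combination h2
  rcases mul_eq_zero.1 h3 with h | h
  · left; rw [h, map_zero]
  · right; rw [sub_eq_zero.1 h, map_one]

/-- Idempotents of the total fraction ring are trivial: an idempotent `r / s` is integral, so the
linear factors of `s` can be cancelled one after another by `exists_locHoms`. -/
theorem quasi_idem (hN : MorseData N n) : ∀ (k : ℕ) (s : A[X]), s.natDegree = k → s ≠ 0 →
    ∀ r : Rb N n, r ^ 2 = algebraMap A[X] _ s * r → r = 0 ∨ r = algebraMap A[X] _ s := by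
  intro k
  induction k with
  | zero =>
    intro s hs hs0 r hr
    obtain ⟨c, rfl⟩ := natDegree_eq_zero.1 hs
    have hc : c ≠ 0 := by rintro rfl; simp at hs0
    have hinv : algebraMap A[X] (Rb N n) (C c⁻¹) * algebraMap A[X] (Rb N n) (C c) = 1 := by
      rw [← map_mul, ← C_mul, inv_mul_cancel₀ hc, C_1, map_one]
    rcases idem hN (r := algebraMap A[X] _ (C c⁻¹) * r) (by
      rw [mul_pow, hr]; linear_combination (algebraMap A[X] (Rb N n) (C c⁻¹) * r) * hinv) with h | h
    · left; linear_combination (algebraMap A[X] (Rb N n) (C c)) * h - r * hinv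
    · right; linear_combination (algebraMap A[X] (Rb N n) (C c)) * h - r * hinv
  | succ k ih =>
    intro s hs hs0 r hr
    obtain ⟨b, hb⟩ := IsAlgClosed.exists_root s (by
      rw [degree_eq_natDegree hs0, hs]; exact_mod_cast Nat.succ_ne_zero k)
    obtain ⟨s1, rfl⟩ := dvd_iff_isRoot.2 hb
    have hs1 : s1 ≠ 0 := by rintro rfl; simp at hs0
    have hs1d : s1.natDegree = k := by
      rw [natDegree_mul (X_sub_C_ne_zero b) hs1, natDegree_X_sub_C] at hs; omega
    obtain ⟨τ, e, he1, he2⟩ := exists_locHoms hN b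
    obtain ⟨r', rfl⟩ := he2 r (by
      intro π
      have h1 := congrArg (e π) hr
      rw [map_pow, map_mul, he1, eval₂_mul] at h1
      simp only [eval₂_sub, eval₂_X, eval₂_C] at h1
      have h2 : e π r * (e π r - (τ - PowerSeries.C b) * eval₂ PowerSeries.C τ s1) = 0 := by
        linear_combination h1
      rcases mul_eq_zero.1 h2 with h | h
      · rw [h]; exact dvd_zero _
      · rw [sub_eq_zero.1 h]; exact dvd_mul_right _ _)
    have h3 : r' ^ 2 - algebraMap A[X] _ s1 * r' = 0 := by
      apply poly_torsion hN (pow_ne_zero 2 (X_sub_C_ne_zero b))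
      rw [map_mul] at hr
      rw [map_pow]
      linear_combination hr
    rcases ih s1 hs1d hs1 r' (sub_eq_zero.1 h3) with h | h
    · left; rw [h, mul_zero]
    · right; rw [h, map_mul]

theorem module_finite : Module.Finite A[X] (Rb N n) :=
  Module.Finite.of_surjective (art N n) art_surjective

theorem isIntegral (r : Rb N n) : IsIntegral A[X] r := by
  have := module_finite (N := N) (n := n)
  exact IsIntegral.of_finite _ r

/-- A zero divisor would yield a nontrivial idempotent with polynomial denominator, since `Rb N n`
is reduced and finite over `A[T]`. -/
theorem noZeroDivisors (hN : MorseData N n) : NoZeroDivisors (Rb N n) := by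
  refine ⟨fun {f g} hfg => ?_⟩
  by_contra hcon
  push Not at hcon
  obtain ⟨hf, hg⟩ := hcon
  have := isReduced hN
  obtain ⟨χ, hχ, hχf⟩ := isIntegral f
  obtain ⟨χ1, hχ1, hχ2⟩ := exists_eq_pow_rootMultiplicity_mul_and_not_dvd χ hχ.ne_zero 0
  set j := χ.rootMultiplicity 0
  set s := χ1.coeff 0 with hs
  have hs0 : s ≠ 0 := by
    intro h
    apply hχ2
    rw [C_0, sub_zero, X_dvd_iff]; exact h
  obtain ⟨u, hu⟩ : ∃ u : Rb N n, aeval f χ1 = algebraMap A[X] _ s + f * u := by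
    refine ⟨aeval f χ1.divX, ?_⟩
    conv_lhs => rw [← divX_mul_X_add χ1]
    simp [hs]; ring
  have hz : f * aeval f χ1 = 0 := by
    refine pow_eq_zero_iff (n := j + 1) (by omega) |>.1 ?_
    have h1 : aeval f χ = 0 := hχf
    rw [hχ1] at h1
    simp at h1
    rw [mul_pow, pow_succ, pow_succ]
    linear_combination (f * aeval f χ1 ^ j) * h1
  rw [hu] at hz
  rcases quasi_idem hN _ s rfl hs0 (-(f * u)) (by linear_combination u * hz) with h | h
  · exact hf (poly_torsion hN hs0 (r := f) (by linear_combination hz + f * h))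
  · exact hg (poly_torsion hN hs0 (r := g) (by rw [← h]; linear_combination (-u) * hfg))

theorem isDomain (hN : MorseData N n) : IsDomain (Rb N n) := by
  have := nontrivial hN
  have := noZeroDivisors hN
  exact NoZeroDivisors.to_isDomain _

/-- In an integrally closed domain, `r / s` integral implies `s ∣ r`; integrality is written as
`s ^ deg p * p(r / s) = 0`. -/
theorem dvd_of_integral_domain {D : Type*} [CommRing D] [IsDomain D] [IsIntegrallyClosed D]
    (p : D[X]) (hp : p.Monic) (r s : D) (h : (p.scaleRoots s).eval r = 0) : s ∣ r := by
  by_cases hs : s = 0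
  · subst hs
    rw [eval_eq_sum_range, natDegree_scaleRoots, Finset.sum_range_succ] at h
    have h2 : ∑ i ∈ Finset.range p.natDegree, (p.scaleRoots 0).coeff i * r ^ i = 0 := by
      refine Finset.sum_eq_zero fun i hi => ?_
      rw [coeff_scaleRoots, zero_pow (by have := Finset.mem_range.1 hi; omega)]; simp
    rw [h2, coeff_scaleRoots_natDegree, hp.leadingCoeff, zero_add, one_mul] at h
    have h3 : r = 0 := by by_contra hr; exact pow_ne_zero _ hr h
    rw [h3]
  · set K := FractionRing D
    set ι := algebraMap D K
    have hι : Function.Injective ι := IsFractionRing.injective _ _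
    have hs' : ι s ≠ 0 := by rwa [Ne, map_eq_zero_iff _ hι]
    have h1 := scaleRoots_eval₂_mul (p := p) ι (ι r / ι s) s
    rw [mul_div_cancel₀ _ hs', eval₂_at_apply, h, map_zero] at h1
    have h2 : eval₂ ι (ι r / ι s) p = 0 :=
      (mul_eq_zero.1 h1.symm).resolve_left (pow_ne_zero _ hs')
    obtain ⟨y, hy⟩ := IsIntegrallyClosed.isIntegral_iff.1 (⟨p, hp, h2⟩ : IsIntegral D (ι r / ι s))
    refine ⟨y, hι ?_⟩
    rw [map_mul]
    change ι y = _ at hy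
    rw [hy, mul_div_cancel₀ _ hs']

/-- Integral closedness for polynomial denominators, one linear factor at a time, through the power
series points of `exists_locHoms`. -/
theorem scaleRoots_dvd (hN : MorseData N n) : ∀ (k : ℕ) (s : A[X]), s.natDegree = k → s ≠ 0 →
    ∀ (r : Rb N n) (p : (Rb N n)[X]), p.Monic → (p.scaleRoots (algebraMap A[X] _ s)).eval r = 0 →
    algebraMap A[X] _ s ∣ r := by
  have := isDomain hN
  intro k
  induction k with
  | zero =>
    intro s hs hs0 r p _ _
    obtain ⟨c, rfl⟩ := natDegree_eq_zero.1 hs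
    have hc : c ≠ 0 := by rintro rfl; simp at hs0
    exact (((isUnit_C.2 (IsUnit.mk0 c hc)).map (algebraMap A[X] (Rb N n)))).dvd
  | succ k ih =>
    intro s hs hs0 r p hp hpr
    obtain ⟨b, hb⟩ := IsAlgClosed.exists_root s (by
      rw [degree_eq_natDegree hs0, hs]; exact_mod_cast Nat.succ_ne_zero k)
    obtain ⟨s1, rfl⟩ := dvd_iff_isRoot.2 hb
    have hs1 : s1 ≠ 0 := by rintro rfl; simp at hs0
    have hs1d : s1.natDegree = k := by
      rw [natDegree_mul (X_sub_C_ne_zero b) hs1, natDegree_X_sub_C] at hs; omega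
    obtain ⟨τ, e, he1, he2⟩ := exists_locHoms hN b
    obtain ⟨r', rfl⟩ := he2 r (by
      intro π
      have h1 : ((p.map (e π)).scaleRoots (e π (algebraMap A[X] _ ((X - C b) * s1)))).eval (e π r)
          = 0 := by
        rw [← Polynomial.map_scaleRoots _ _ _ (by rw [hp.leadingCoeff]; simp), eval_map,
          eval₂_at_apply, hpr, map_zero]
      have h2 := dvd_of_integral_domain _ (hp.map _) _ _ h1
      refine dvd_trans ?_ h2
      rw [he1, eval₂_mul]
      simp)
    rw [map_mul]
    refine mul_dvd_mul_left _ (ih s1 hs1d hs1 r' p hp ?_)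
    have h3 : algebraMap A[X] (Rb N n) (X - C b) ≠ 0 := by
      rw [Ne, map_eq_zero_iff _ (algebraMap_inj hN)]; exact X_sub_C_ne_zero b
    rw [map_mul, mul_comm (algebraMap A[X] (Rb N n) (X - C b)) (algebraMap A[X] (Rb N n) s1),
      scaleRoots_mul] at hpr
    have h4 := scaleRoots_eval₂_mul (p := p.scaleRoots (algebraMap A[X] (Rb N n) s1))
      (RingHom.id _) r' (algebraMap A[X] (Rb N n) (X - C b))
    simp only [RingHom.id_apply, eval₂_id] at h4
    rw [h4] at hpr
    exact (mul_eq_zero.1 hpr).resolve_left (pow_ne_zero _ h3)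

theorem exists_poly_multiple (hN : MorseData N n) {f : Rb N n} (hf : f ≠ 0) :
    ∃ (s : A[X]) (g : Rb N n), s ≠ 0 ∧ f * g = algebraMap A[X] _ s := by
  have := isDomain hN
  have h := Ideal.comap_ne_bot_of_integral_mem hf (Ideal.mem_span_singleton_self f) (isIntegral f)
  obtain ⟨s, hs, hs0⟩ := Submodule.exists_mem_ne_zero_of_ne_bot h
  obtain ⟨g, hg⟩ := Ideal.mem_span_singleton.1 (Ideal.mem_comap.1 hs)
  exact ⟨s, g, hs0, hg.symm⟩

/-- `Rb` is integrally closed, in a denominator-free form. -/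
theorem dvd_of_scaleRoots (hN : MorseData N n) (r f : Rb N n) (hf : f ≠ 0) (p : (Rb N n)[X])
    (hp : p.Monic) (h : (p.scaleRoots f).eval r = 0) : f ∣ r := by
  have := isDomain hN
  obtain ⟨s, g, hs, hg⟩ := exists_poly_multiple hN hf
  have hg0 : g ≠ 0 := by
    rintro rfl; rw [mul_zero] at hg
    exact hs ((map_eq_zero_iff _ (algebraMap_inj hN)).1 hg.symm)
  have h4 := scaleRoots_eval₂_mul (p := p.scaleRoots f) (RingHom.id _) r g
  simp only [RingHom.id_apply, eval₂_id] at h4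
  rw [h, mul_zero, ← scaleRoots_mul, hg] at h4
  have h5 := scaleRoots_dvd hN _ s rfl hs (g * r) p hp h4
  rw [← hg, mul_comm f] at h5
  exact (mul_dvd_mul_iff_left hg0).1 h5

end Rb
end

/-! ### Filtered rings with prescribed dimensions -/

noncomputable section

namespace Rb
/-- The dimension of the `c`-th filtration step. -/
def rk (n c : ℕ) : ℕ := ∑ a : Ar n, (c - wt a + (n - 1)) / n

theorem rk_add {n c : ℕ} (hn : 0 < n) (h : n * (n - 1) ≤ c) :
    rk n (c + n) = rk n c + n.factorial := by
  unfold rk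
  rw [← card_Ar, Fintype.card_eq_sum_ones, ← Finset.sum_add_distrib]
  refine Finset.sum_congr rfl fun a _ => ?_
  have := wt_le a
  rw [show c + n - wt a + (n - 1) = c - wt a + (n - 1) + n by omega, Nat.add_div_right _ hn]

theorem rk_add_mul {n c : ℕ} (hn : 0 < n) (h : n * (n - 1) ≤ c) (m : ℕ) :
    rk n (c + m * n) = rk n c + m * n.factorial := by
  induction m with
  | zero => simp
  | succ m ih => rw [add_mul, one_mul, ← add_assoc, rk_add hn (by omega), ih]; ring

theorem rk_add_le {n : ℕ} (hn : 0 < n) (m c : ℕ) :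
    rk n (m + c) ≤ rk n m + (c / n + 1) * n.factorial := by
  unfold rk
  rw [← card_Ar, Fintype.card_eq_sum_ones, Finset.mul_sum, ← Finset.sum_add_distrib]
  refine Finset.sum_le_sum fun a _ => ?_
  rw [mul_one, ← Nat.lt_succ_iff, Nat.div_lt_iff_lt_mul hn]
  have h1 := Nat.lt_div_mul_add hn (a := m - wt a + (n - 1))
  have h2 := Nat.lt_div_mul_add hn (a := c)
  set q := (m - wt a + (n - 1)) / n
  set s := c / n
  have : (q + (s + 1)).succ * n = q * n + s * n + n + n := by simp [Nat.succ_eq_add_one]; ring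
  omega

theorem rk_mono {n : ℕ} {c d : ℕ} (h : c ≤ d) : rk n c ≤ rk n d :=
  Finset.sum_le_sum fun a _ => Nat.div_le_div_right (by omega)

/-- The rank grows at least like `(n - 1)! * c`. -/
theorem rk_lower {n : ℕ} (hn : 0 < n) (c : ℕ) :
    (n - 1).factorial * c ≤ rk n c + (n - 1).factorial * (n * (n - 1)) := by
  have h1 : n.factorial * c ≤ n * rk n c + n.factorial * (n * (n - 1)) := by
    unfold rk
    rw [← card_Ar, Fintype.card_eq_sum_ones, Finset.mul_sum, Finset.sum_mul, Finset.sum_mul,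
      ← Finset.sum_add_distrib]
    refine Finset.sum_le_sum fun a _ => ?_
    have := wt_le a
    have h1 := Nat.lt_div_mul_add hn (a := c - wt a + (n - 1))
    rw [mul_comm n]
    omega
  obtain ⟨m, rfl⟩ := Nat.exists_eq_succ_of_ne_zero hn.ne'
  simp only [Nat.succ_eq_add_one, Nat.add_sub_cancel, Nat.factorial_succ] at *
  have : (m+1) * (m.factorial * c) ≤ (m+1) * (rk (m+1) c + m.factorial * ((m+1)*m)) := by
    calc _ = (m + 1) * m.factorial * c := by ring
      _ ≤ _ := h1
      _ = _ := by ring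
  exact Nat.le_of_mul_le_mul_left this (Nat.succ_pos m)
end Rb
open Rb Module

/-- A filtered `k`-algebra with the formal properties of `Rb N n`: the index `c` collects the
elements of weight less than `c`, the element `T` has weight `n`, multiplication by `T` is
strict (`cancel`) and is surjective on graded pieces of large weight (`reduce`), and the
dimensions are those given by Artin monomials. -/
structure Filt (k R : Type) [Field k] [CommRing R] [Algebra k R] (n : ℕ) where
  G : ℕ → Submodule k R
  T : R
  mono : Monotone G
  exh : ∀ r, ∃ c, r ∈ G c
  one_mem : (1 : R) ∈ G 1
  mul_mem : ∀ {a b : ℕ} {r s : R}, r ∈ G (a + 1) → s ∈ G (b + 1) → r * s ∈ G (a + b + 1)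
  T_mem : T ∈ G (n + 1)
  cancel : ∀ {c : ℕ} {y : R}, T * y ∈ G (c + n) → y ∈ G c
  reduce : ∀ {c : ℕ} {x : R}, n * (n - 1) < c → x ∈ G (c + 1) →
    ∃ y ∈ G (c + 1 - n), x - T * y ∈ G c
  fin : ∀ c, FiniteDimensional k (G c)
  finrank_eq : ∀ c, finrank k (G c) = rk n c

namespace Filt
variable {k R : Type} [Field k] [CommRing R] [Algebra k R] {n : ℕ} (F : Filt k R n)

theorem T_pow_mem (i : ℕ) : F.T ^ i ∈ F.G (n * i + 1) := by
  induction i with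
  | zero => simpa using F.one_mem
  | succ i ih => rw [pow_succ]; exact F.mul_mem ih F.T_mem

theorem cancel_pow {c : ℕ} {y : R} (m : ℕ) (h : F.T ^ m * y ∈ F.G (c + m * n)) : y ∈ F.G c := by
  induction m generalizing c with
  | zero => simpa using h
  | succ m ih =>
    refine ih (F.cancel ?_)
    rw [← mul_assoc, ← pow_succ']
    convert h using 2; ring

theorem reduce_pow {c : ℕ} {x : R} (m : ℕ) (hc : n * (n - 1) + m * n < c) (hx : x ∈ F.G (c + 1)) :
    ∃ y ∈ F.G (c + 1 - (m + 1) * n), x - F.T ^ (m + 1) * y ∈ F.G c := by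
  induction m with
  | zero => simpa using F.reduce (by omega) hx
  | succ m ih =>
    have e1 : (m + 1) * n = m * n + n := by ring
    have e2 : (m + 1 + 1) * n = m * n + n + n := by ring
    obtain ⟨y, hy, h⟩ := ih (by omega)
    rw [e1] at hc hy
    obtain ⟨z, hz, h'⟩ := F.reduce (c := c - (m * n + n)) (x := y) (by omega)
      (by convert hy using 2; omega)
    refine ⟨z, by convert hz using 2; omega, ?_⟩
    have h2 : F.T ^ (m + 1) * (y - F.T * z) ∈ F.G c := by
      have := F.T_pow_mem (m + 1)
      have h3 := F.mul_mem this (show y - F.T * z ∈ F.G (c - (m * n + n) - 1 + 1) by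
        convert h' using 2; omega)
      convert h3 using 2
      have : n * (m + 1) = m * n + n := by ring
      omega
    convert add_mem h h2 using 1
    ring

/-- Elements of the form `T ^ m + (lower terms)`. -/
def IsTop (m : ℕ) (h : R) : Prop := h - F.T ^ m ∈ F.G (m * n)

variable {F}

theorem IsTop.cancel {m : ℕ} {h : R} (hn : 0 < n) (hm : 0 < m) (H : F.IsTop m h) {c : ℕ} {y : R}
    (hy : h * y ∈ F.G (c + m * n)) : y ∈ F.G c := by
  have hmn : 0 < m * n := Nat.mul_pos hm hn
  have key : ∀ j, y ∈ F.G (c + j) → y ∈ F.G c := by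
    intro j
    induction j with
    | zero => exact id
    | succ j ih =>
      intro hj
      refine ih (F.cancel_pow m ?_)
      have h1 : (h - F.T ^ m) * y ∈ F.G (c + j + m * n) := by
        have := F.mul_mem (a := m * n - 1) (b := c + j) (r := h - F.T ^ m) (s := y)
          (by have H' : h - F.T ^ m ∈ F.G (m * n) := H; convert H' using 2; omega) hj
        convert this using 2; omega
      convert sub_mem (F.mono (by omega) hy) h1 using 1
      ring
  obtain ⟨d, hd⟩ := F.exh y
  exact key d (F.mono (by omega) hd)

theorem IsTop.reduce {m : ℕ} {h : R} (hn : 0 < n) (hm : 0 < m) (H : F.IsTop m h) (x : R) :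
    ∃ w, x - h * w ∈ F.G (n * (n - 1) + (m - 1) * n + 1) := by
  have hmn : m * n = (m - 1) * n + n := by
    obtain ⟨q, rfl⟩ := Nat.exists_eq_succ_of_ne_zero hm.ne'
    simp [Nat.succ_mul]
  have key : ∀ j x, x ∈ F.G (n * (n - 1) + (m - 1) * n + 1 + j) →
      ∃ w, x - h * w ∈ F.G (n * (n - 1) + (m - 1) * n + 1) := by
    intro j
    induction j with
    | zero => intro x hx; exact ⟨0, by simpa using hx⟩
    | succ j ih =>
      intro x hx
      obtain ⟨y, hy, hxy⟩ := F.reduce_pow (c := n * (n - 1) + (m - 1) * n + 1 + j) (m - 1)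
        (by omega) hx
      rw [Nat.sub_add_cancel hm] at hy hxy
      by_cases hz : n * (n - 1) + (m - 1) * n + 1 + j + 1 - m * n = 0
      · exfalso
        have : 0 ≤ n * (n-1) := Nat.zero_le _
        have h2 : n ≤ 1 ∨ n ≤ n * (n - 1) := by
          rcases Nat.lt_or_ge 1 n with h | h
          · exact Or.inr (Nat.le_mul_of_pos_right _ (by omega))
          · exact Or.inl h
        omega
      have h1 : (h - F.T ^ m) * y ∈ F.G (n * (n - 1) + (m - 1) * n + 1 + j) := by
        have := F.mul_mem (a := m * n - 1)
          (b := n * (n - 1) + (m - 1) * n + 1 + j + 1 - m * n - 1) (r := h - F.T ^ m) (s := y)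
          (by have H' : h - F.T ^ m ∈ F.G (m * n) := H; convert H' using 2; omega) (by convert hy using 2; omega)
        convert this using 2; omega
      obtain ⟨w, hw⟩ := ih (x - h * y) (by convert sub_mem hxy h1 using 1; ring)
      exact ⟨w + y, by convert hw using 1; ring⟩
  obtain ⟨d, hd⟩ := F.exh x
  exact key d x (F.mono (by omega) hd)

variable [IsDomain R]

/-- An element of weight at most `c` has at most `(c / n + 1) * n!` zeros. -/
theorem finrank_quot_le (hn : 0 < n) {u : R} (hu : u ≠ 0) {c : ℕ} (huc : u ∈ F.G (c + 1)) :
    Module.Finite k (R ⧸ Ideal.span {u}) ∧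
      finrank k (R ⧸ Ideal.span {u}) ≤ (c / n + 1) * n.factorial := by
  have key : Module.rank k (R ⧸ Ideal.span {u}) ≤ ((c / n + 1) * n.factorial : ℕ) := by
    refine rank_le fun s hs => ?_
    choose w hw using fun x : s => Ideal.Quotient.mk_surjective (I := Ideal.span {u}) (x : _)
    choose d hd using fun x : s => F.exh (w x)
    set m := ∑ x, d x
    have hwm : ∀ x, w x ∈ F.G (m + 1 + c) := fun x => F.mono
      ((Finset.single_le_sum (f := d) (fun _ _ => Nat.zero_le _) (Finset.mem_univ x)).trans
        (by omega)) (hd x)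
    have := F.fin
    let L0 : (s → k) × F.G (m + 1) →ₗ[k] R :=
      (Fintype.linearCombination k w).coprod ((LinearMap.mulLeft k u).comp (F.G (m + 1)).subtype)
    have hL0 : ∀ a g, L0 (a, g) = ∑ i, a i • w i + u * g := fun a g => by
      simp [L0, Fintype.linearCombination_apply]
    let L : (s → k) × F.G (m + 1) →ₗ[k] F.G (m + 1 + c) := L0.codRestrict _ (by
      rintro ⟨a, g⟩
      rw [hL0]
      refine add_mem (Submodule.sum_mem _ fun i _ => Submodule.smul_mem _ _ (hwm i)) ?_
      have := F.mul_mem huc g.2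
      convert this using 2; omega)
    have hL : Function.Injective L := by
      rw [← LinearMap.ker_eq_bot, LinearMap.ker_eq_bot']
      rintro ⟨a, g⟩ h
      have h1 : ∑ i, a i • w i + u * g = 0 := by rw [← hL0]; exact congrArg Subtype.val h
      have h2 : ∑ i, a i • (i : R ⧸ Ideal.span {u}) = 0 := by
        have h3 : Ideal.Quotient.mkₐ k (Ideal.span {u}) (∑ i, a i • w i) = 0 := by
          rw [Ideal.Quotient.mkₐ_eq_mk, Ideal.Quotient.eq_zero_iff_mem, Ideal.mem_span_singleton]
          exact ⟨-g, by linear_combination h1⟩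
        rw [map_sum] at h3
        simp only [map_smul, Ideal.Quotient.mkₐ_eq_mk, hw] at h3
        exact h3
      have h4 : a = 0 := funext (Fintype.linearIndependent_iff.1 hs a h2)
      subst h4
      have : (g : R) = 0 := by
        simp at h1; rw [h1.resolve_left hu]; rfl
      ext <;> simp [this]
    have h5 := LinearMap.finrank_le_finrank_of_injective hL
    rw [Module.finrank_prod, F.finrank_eq, F.finrank_eq, Module.finrank_fintype_fun_eq_card,
      Fintype.card_coe] at h5
    have := rk_add_le hn (m + 1) c
    omega
  have hfin : Module.Finite k (R ⧸ Ideal.span {u}) := by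
    rw [← Module.rank_lt_aleph0_iff]
    exact key.trans_lt (Cardinal.natCast_lt_aleph0)
  exact ⟨hfin, Module.finrank_le_of_rank_le key⟩

/-- Every nonzero element divides one with leading part `T ^ m`. -/
theorem exists_top_multiple (hn : 0 < n) {u : R} (hu : u ≠ 0) :
    ∃ m v, 0 < m ∧ F.IsTop m (u * v) := by
  obtain ⟨c, hc⟩ := F.exh u
  have := (finrank_quot_le hn hu (F.mono (Nat.le_succ c) hc)).1
  obtain ⟨s, hs, h0⟩ := Algebra.IsIntegral.isIntegral (R := k)
    (Ideal.Quotient.mkₐ k (Ideal.span {u}) F.T)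
  have h1 : Ideal.Quotient.mkₐ k (Ideal.span {u}) (aeval F.T s) = 0 := by
    rw [← Polynomial.aeval_algHom_apply]; exact h0
  rw [Ideal.Quotient.mkₐ_eq_mk, Ideal.Quotient.eq_zero_iff_mem, Ideal.mem_span_singleton] at h1
  obtain ⟨v, hv⟩ := h1
  refine ⟨s.natDegree + 1, v * F.T, Nat.succ_pos _, ?_⟩
  have h2 : u * (v * F.T) - F.T ^ (s.natDegree + 1) =
      ∑ i ∈ Finset.range s.natDegree, s.coeff i • F.T ^ (i + 1) := by
    rw [← mul_assoc, ← hv, aeval_eq_sum_range, Finset.sum_range_succ, hs.coeff_natDegree, one_smul,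
      add_mul, Finset.sum_mul, pow_succ, add_sub_cancel_right]
    simp [pow_succ]
  rw [IsTop, h2]
  refine Submodule.sum_mem _ fun i hi => Submodule.smul_mem _ _ (F.mono ?_ (F.T_pow_mem _))
  have hi := Finset.mem_range.1 hi
  have := Nat.mul_le_mul_left n hi
  have h3 : (s.natDegree + 1) * n = n * s.natDegree + n := by ring
  rw [Nat.succ_eq_add_one] at this
  omega

/-- Residue classes modulo `u` have representatives of bounded weight. -/
theorem exists_rep (hn : 2 ≤ n) {u : R} (hu : u ≠ 0) {c : ℕ} (huc : u ∈ F.G (c + 1)) (r : R) :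
    ∃ w, r - u * w ∈ F.G (n * (n - 1) + c + 1 - n) := by
  obtain ⟨m, v, hm, H⟩ := exists_top_multiple (F := F) (by omega) hu
  obtain ⟨w, hw⟩ := H.reduce (by omega) hm (v * r)
  have hD : n ≤ n * (n - 1) := Nat.le_mul_of_pos_right _ (by omega)
  have hmn : m * n = (m - 1) * n + n := by
    obtain ⟨q, rfl⟩ := Nat.exists_eq_succ_of_ne_zero hm.ne'
    simp [Nat.succ_mul]
  refine ⟨w, H.cancel (by omega) hm ?_⟩
  have := F.mul_mem huc hw
  have e : u * v * (r - u * w) = u * (v * r - u * v * w) := by ring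
  rw [e]
  convert this using 2; omega

theorem IsTop.ne_zero {m : ℕ} {h : R} (hn : 0 < n) (hm : 0 < m) (H : F.IsTop m h) : h ≠ 0 := by
  rintro rfl
  have := H.cancel hn hm (c := 0) (y := 1) (by simp)
  have h0 := F.finrank_eq 0
  have : rk n 0 = 0 := by
    unfold rk; exact Finset.sum_eq_zero fun a _ => by simp; omega
  rw [this] at h0
  have := F.fin 0
  rw [Submodule.finrank_eq_zero] at h0
  simp [h0] at *

theorem IsTop.finrank_quot {m : ℕ} {h : R} (hn : 0 < n) (hm : 0 < m) (H : F.IsTop m h) :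
    finrank k (R ⧸ Ideal.span {h}) = m * n.factorial := by
  have := F.fin
  have hmn : m * n = (m - 1) * n + n := by
    obtain ⟨q, rfl⟩ := Nat.exists_eq_succ_of_ne_zero hm.ne'
    simp [Nat.succ_mul]
  set D := n * (n - 1)
  let f : F.G (D + m * n) →ₗ[k] R ⧸ Ideal.span {h} :=
    (Ideal.Quotient.mkₐ k (Ideal.span {h})).toLinearMap.comp (F.G _).subtype
  have hf : ∀ x, f x = Ideal.Quotient.mk _ (x : R) := fun x => rfl
  have hsurj : LinearMap.range f = ⊤ := by
    rw [LinearMap.range_eq_top]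
    intro x
    obtain ⟨x, rfl⟩ := Ideal.Quotient.mk_surjective x
    obtain ⟨w, hw⟩ := H.reduce hn hm x
    refine ⟨⟨_, F.mono (by omega) hw⟩, ?_⟩
    rw [hf, Ideal.Quotient.eq, Ideal.mem_span_singleton]
    exact ⟨-w, by ring⟩
  let g : F.G D →ₗ[k] F.G (D + m * n) :=
    ((LinearMap.mulLeft k h).comp (F.G D).subtype).codRestrict _ (by
      intro x
      have h1 : h ∈ F.G (m * n + 1) := by
        have := add_mem (F.mono (Nat.le_succ _) H) (F.mono (by rw [mul_comm]) (F.T_pow_mem m))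
        simpa using this
      by_cases hD : D = 0
      · have hx := x.2
        have := F.mul_mem h1 (F.mono (by omega : D ≤ 0 + 1) hx)
        have h0 := F.finrank_eq 0
        have : rk n 0 = 0 := by
          unfold rk; exact Finset.sum_eq_zero fun a _ => by simp; omega
        rw [this, Submodule.finrank_eq_zero] at h0
        have hx0 : ∀ z ∈ F.G D, z = 0 := by rw [hD, h0]; simp
        simp [hx0 _ hx]
      · have := F.mul_mem h1 (show (x : R) ∈ F.G (D - 1 + 1) by
          convert x.2 using 2; omega)
        change h * (x : R) ∈ _
        convert this using 2; omega)
  have hgv : ∀ x, (g x : R) = h * x := fun x => rfl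
  have hginj : Function.Injective g := by
    intro x y hxy
    have := congrArg Subtype.val hxy
    rw [hgv, hgv] at this
    exact Subtype.ext (mul_left_cancel₀ (H.ne_zero hn hm) this)
  have hgr : LinearMap.range g = LinearMap.ker f := by
    ext x
    rw [LinearMap.mem_ker, hf, Ideal.Quotient.eq_zero_iff_mem, Ideal.mem_span_singleton]
    constructor
    · rintro ⟨y, rfl⟩
      exact ⟨y, hgv y⟩
    · rintro ⟨y, hy⟩
      refine ⟨⟨y, H.cancel hn hm (by rw [← hy]; exact x.2)⟩, Subtype.ext ?_⟩
      rw [hgv]; exact hy.symm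
  have h1 := LinearMap.finrank_range_add_finrank_ker f
  rw [hsurj, finrank_top, ← hgr, LinearMap.finrank_range_of_inj hginj, F.finrank_eq, F.finrank_eq,
    rk_add_mul hn (le_refl D)] at h1
  omega

/-- For `m` large compared with the degree of `J`, the step `G (m * n)` surjects onto `R ⧸ J`. -/
theorem sup_eq_top (hn : 2 ≤ n) (J : Ideal R) [Module.Finite k (R ⧸ J)] {m : ℕ}
    (hm : finrank k (R ⧸ J) + (n.factorial * (2 * n - 3) + 1) ≤ m * n.factorial) (r : R) :
    ∃ g ∈ F.G (m * n), r - g ∈ J := by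
  have := F.fin
  have hfpos := n.factorial_pos
  have hm2 : 2 * n - 3 < m := by
    by_contra hlt
    push Not at hlt
    have := Nat.mul_le_mul_right n.factorial hlt
    rw [mul_comm (2 * n - 3)] at this
    omega
  obtain ⟨q, hnq⟩ : ∃ q, n = q + 2 := ⟨n - 2, by omega⟩
  have h2m : (2 * q + 2) * n ≤ m * n := Nat.mul_le_mul_right _ (by omega)
  obtain ⟨c, hc⟩ : ∃ c, c + 1 + n * (n - 1) = m * n + n := by
    refine ⟨m * n + n - n * (n - 1) - 1, ?_⟩
    have : n * (n - 1) + 1 ≤ m * n + n := by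
      rw [show n - 1 = q + 1 by omega]
      nlinarith
    omega
  have hrk : finrank k (R ⧸ J) < rk n (c + 1) := by
    have h1 := rk_lower (n := n) (by omega) (c + 1)
    have h2 : n.factorial = n * (n - 1).factorial := (Nat.mul_factorial_pred (by omega)).symm
    rw [h2] at hm
    set f := (n - 1).factorial
    have e1 : 2 * n - 3 = 2 * q + 1 := by omega
    have e2 : n - 1 = q + 1 := by omega
    rw [e1] at hm
    rw [e2] at h1 hc
    have : f * (c + 1) + f * (n * (q + 1)) = f * (m * n + n) := by rw [← mul_add, hc]
    clear_value f
    have e3 : n * f * (2 * q + 1) + f * n = f * (n * (q + 1)) + f * (n * (q + 1)) := by ring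
    have e4 : f * (m * n + n) = m * (n * f) + f * n := by ring
    omega
  have := F.fin (c + 1)
  let f : F.G (c + 1) →ₗ[k] R ⧸ J :=
    (Ideal.Quotient.mkₐ k J).toLinearMap.comp (F.G _).subtype
  have hker : LinearMap.ker f ≠ ⊥ := LinearMap.ker_ne_bot_of_finrank_lt (by rwa [F.finrank_eq])
  obtain ⟨u, hu, hu0⟩ := Submodule.exists_mem_ne_zero_of_ne_bot hker
  have huJ : (u : R) ∈ J := by
    have : f u = Ideal.Quotient.mk J (u : R) := rfl
    rw [LinearMap.mem_ker, this, Ideal.Quotient.eq_zero_iff_mem] at hu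
    exact hu
  obtain ⟨w, hw⟩ := exists_rep (F := F) hn (u := (u : R)) (by simpa using hu0) u.2 r
  refine ⟨r - u * w, F.mono (by omega) hw, ?_⟩
  rw [sub_sub_cancel]
  exact J.mul_mem_right _ huJ

end Filt
end

/-! ### The filtration of the coordinate ring, and its semilinear automorphisms -/

noncomputable section
namespace Rb
open Module
variable {A : Type} [Field A] {N : A[X]} {n : ℕ}

section Filt
variable [IsAlgClosed A]

theorem T_mul_art (P : Ar n → A[X]) : T N n * art N n P = art N n (fun a => X * P a) := by
  have : (fun a => X * P a) = (X : A[X]) • P := rfl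
  rw [this, map_smul, Algebra.smul_def]; rfl

theorem G_cancel (hN : MorseData N n) {c : ℕ} {y : Rb N n} (h : T N n * y ∈ G N n (c + n)) :
    y ∈ G N n c := by
  obtain ⟨P, rfl⟩ := art_surjective y
  rw [T_mul_art, mem_G_iff hN] at h
  rw [mem_G_iff hN]
  intro a i hi
  have := h a (i + 1) (by rwa [coeff_X_mul])
  rw [mul_add] at this
  omega

theorem G_reduce (hN : MorseData N n) {c : ℕ} {x : Rb N n} (hc : n * (n - 1) < c)
    (h : x ∈ G N n (c + 1)) : ∃ y ∈ G N n (c + 1 - n), x - T N n * y ∈ G N n c := by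
  obtain ⟨P, rfl⟩ := art_surjective x
  rw [mem_G_iff hN] at h
  refine ⟨art N n (fun a => (P a).divX), ?_, ?_⟩
  · rw [mem_G_iff hN]
    intro a i hi
    rw [coeff_divX] at hi
    have := h a _ hi
    rw [mul_add] at this
    omega
  · rw [T_mul_art, ← map_sub, mem_G_iff hN]
    intro a i hi
    have h1 : P a - X * (P a).divX = C ((P a).coeff 0) := by
      have := X_mul_divX_add (P a)
      linear_combination -this
    rw [Pi.sub_apply, h1, coeff_C] at hi
    have := wt_le a
    split_ifs at hi with h0
    · subst h0; omega
    · simp at hi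

theorem lt_ceil_iff {n i w c : ℕ} (hn : 0 < n) : i < (c - w + (n - 1)) / n ↔ n * i + w < c := by
  rw [← Nat.succ_le_iff, Nat.le_div_iff_mul_le hn, Nat.succ_mul, mul_comm]
  omega

/-- Artin coordinates identify `G c` with a product of spaces of polynomials of bounded degree. -/
def artLT (N : A[X]) (n c : ℕ) :
    ((a : Ar n) → degreeLT A ((c - wt a + (n - 1)) / n)) →ₗ[A] Rb N n where
  toFun P := art N n fun a => (P a : A[X])
  map_add' P Q := by rw [← map_add]; rfl
  map_smul' r P := by
    have : (fun a => (((r • P) a : _) : A[X])) = (C r) • fun a => (P a : A[X]) := by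
      ext1 a; simp [smul_eq_C_mul]
    rw [this, map_smul]
    exact algebraMap_smul A[X] r _

theorem artLT_injective (hN : MorseData N n) (c : ℕ) : Function.Injective (artLT N n c) := by
  intro P Q h
  have := art_injective hN h
  ext1 a
  exact Subtype.ext (congrFun this a)

theorem artLT_range (hN : MorseData N n) (c : ℕ) : LinearMap.range (artLT N n c) = G N n c := by
  have hn : 0 < n := by have := hN.two_le; omega
  ext r
  constructor
  · rintro ⟨P, rfl⟩
    refine (mem_G_iff hN _ _).2 fun a i hi => ?_
    rw [← lt_ceil_iff hn]
    by_contra hlt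
    push Not at hlt
    exact hi (coeff_eq_zero_of_degree_lt ((mem_degreeLT.1 (P a).2).trans_le (by exact_mod_cast hlt)))
  · intro h
    obtain ⟨P, rfl⟩ := art_surjective r
    rw [mem_G_iff hN] at h
    refine ⟨fun a => ⟨P a, ?_⟩, rfl⟩
    rw [mem_degreeLT, degree_lt_iff_coeff_zero]
    intro i hi
    by_contra h0
    exact absurd ((lt_ceil_iff hn).2 (h a i h0)) (by omega)

/-- The description of `G c` in Artin coordinates, as a linear equivalence. -/
def artEquiv (hN : MorseData N n) (c : ℕ) :
    ((a : Ar n) → degreeLT A ((c - wt a + (n - 1)) / n)) ≃ₗ[A] G N n c :=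
  (LinearEquiv.ofInjective _ (artLT_injective hN c)).trans (LinearEquiv.ofEq _ _ (artLT_range hN c))

theorem finite_G (hN : MorseData N n) (c : ℕ) : FiniteDimensional A (G N n c) := by
  have : ∀ m, FiniteDimensional A (degreeLT A m) := fun m =>
    LinearEquiv.finiteDimensional (degreeLTEquiv A m).symm
  exact LinearEquiv.finiteDimensional (artEquiv hN c)

theorem finrank_G (hN : MorseData N n) (c : ℕ) : finrank A (G N n c) = rk n c := by
  have : ∀ m, FiniteDimensional A (degreeLT A m) := fun m =>
    LinearEquiv.finiteDimensional (degreeLTEquiv A m).symm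
  rw [← (artEquiv hN c).finrank_eq, Module.finrank_pi_fintype]
  refine Finset.sum_congr rfl fun a _ => ?_
  rw [(degreeLTEquiv A _).finrank_eq]
  simp

/-- The weight filtration of the coordinate ring. -/
def filt (hN : MorseData N n) : Filt A (Rb N n) n where
  G := G N n
  T := T N n
  mono := fun _ _ h => G_mono h
  exh := exists_mem_G
  one_mem := one_mem_G
  mul_mem := mul_mem_G
  T_mem := T_mem_G
  cancel := G_cancel hN
  reduce := G_reduce hN
  fin := finite_G hN
  finrank_eq := finrank_G hN
end Filt

/-- The endomorphism acting by `φ` on the constants and by `τ` on the roots. -/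
def Phi (φ : A →+* A) (hφ : N.map φ = N) (τ : Equiv.Perm (Fin n)) : Rb N n →+* Rb N n :=
  ev ((algebraMap A (Rb N n)).comp φ) (T N n) (fun i => xx N n (τ i)) (by
    rw [Equiv.prod_comp τ (fun i => X - C (xx N n i)), prod_xx, ← Polynomial.map_map, hφ])

section
variable (φ : A →+* A) (hφ : N.map φ = N) (τ : Equiv.Perm (Fin n))
@[simp] theorem Phi_A (a : A) : Phi φ hφ τ (algebraMap A _ a) = algebraMap A _ (φ a) := by
  rw [Phi, ev_A]; rfl
@[simp] theorem Phi_T : Phi φ hφ τ (T N n) = T N n := by rw [Phi, ev_T]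
@[simp] theorem Phi_xx (i : Fin n) : Phi φ hφ τ (xx N n i) = xx N n (τ i) := by rw [Phi, ev_xx]

theorem Phi_mem_G {c : ℕ} {r : Rb N n} (h : r ∈ G N n c) : Phi φ hφ τ r ∈ G N n c := by
  unfold G at h
  induction h using Submodule.span_induction with
  | mem x hx =>
    obtain ⟨i, b, h1, rfl⟩ := hx
    rw [map_mul, map_prod, map_pow, Phi_T]
    simp only [map_pow, Phi_xx]
    have := mono_mem_G (N := N) i (fun l => b (τ.symm l)) c (by
      rwa [Equiv.sum_comp τ.symm b])
    have e : ∏ l, xx N n l ^ b (τ.symm l) = ∏ i, xx N n (τ i) ^ b i := by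
      rw [← Equiv.prod_comp τ (fun l => xx N n l ^ b (τ.symm l))]; simp
    rwa [e] at this
  | zero => simp
  | add x y _ _ hx hy => rw [map_add]; exact add_mem hx hy
  | smul a x _ hx =>
    rw [Algebra.smul_def, map_mul, Phi_A, ← Algebra.smul_def]
    exact Submodule.smul_mem _ _ hx

theorem Phi_Phi (ψ : A →+* A) (hψ : N.map ψ = N) (ρ : Equiv.Perm (Fin n)) (r : Rb N n) :
    Phi φ hφ τ (Phi ψ hψ ρ r) = Phi (φ.comp ψ) (by rw [← Polynomial.map_map, hψ, hφ]) (τ * ρ) r := by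
  have := hom_ext (f := (Phi φ hφ τ).comp (Phi ψ hψ ρ))
    (g := Phi (φ.comp ψ) (by rw [← Polynomial.map_map, hψ, hφ]) (τ * ρ))
    (by intro a; simp) (by simp) (by intro i; simp)
  exact congrArg (fun f => f r) this

theorem Phi_id (r : Rb N n) : Phi (RingHom.id A) (by simp) 1 r = r := by
  have := hom_ext (f := Phi (N := N) (n := n) (RingHom.id A) (by simp) 1) (g := RingHom.id _)
    (by intro a; simp) (by simp) (by intro i; simp)
  exact congrArg (fun f => f r) this
end
end Rb
end

/-! ### Stepanov's method -/

noncomputable section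
namespace Filt
open Module Rb
variable {k R : Type} [Field k] [CommRing R] [Algebra k R] {n : ℕ} {F : Filt k R n}

theorem pow_mem {a : ℕ} {r : R} (h : r ∈ F.G (a + 1)) (m : ℕ) : r ^ m ∈ F.G (m * a + 1) := by
  induction m with
  | zero => simpa using F.one_mem
  | succ m ih =>
    rw [pow_succ]
    convert F.mul_mem ih h using 2; ring

variable [IsDomain R]

/-- Distinct points at which `g` vanishes are independent functionals on `R ⧸ (g)`. -/
theorem card_zeros_le (hn : 0 < n) {g : R} (hg : g ≠ 0) {c : ℕ} (hgc : g ∈ F.G (c + 1))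
    (S : Finset (R →ₐ[k] k)) (hS : ∀ y ∈ S, y g = 0) : S.card ≤ (c / n + 1) * n.factorial := by
  obtain ⟨hfin, hle⟩ := finrank_quot_le hn hg hgc
  refine le_trans ?_ hle
  let L : S → Module.Dual k (R ⧸ Ideal.span {g}) := fun y =>
    (Ideal.Quotient.liftₐ (Ideal.span {g}) y.1 (by
      intro a ha
      obtain ⟨b, rfl⟩ := Ideal.mem_span_singleton.1 ha
      rw [map_mul, hS _ y.2, zero_mul])).toLinearMap
  have hL : LinearIndependent k L := by
    have h1 := linearIndependent_monoidHom R k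
    have h2 : LinearIndependent k (fun y : S => ((y.1 : R →* k) : R → k)) := by
      refine h1.comp (fun y : S => (y.1 : R →* k)) ?_
      intro y z hyz
      refine Subtype.ext (AlgHom.ext fun x => ?_)
      exact DFunLike.congr_fun hyz x
    rw [Fintype.linearIndependent_iff] at h2 ⊢
    intro c hc
    refine h2 c ?_
    funext x
    have := LinearMap.congr_fun hc (Ideal.Quotient.mk _ x)
    have hLv : ∀ y x, L y (Ideal.Quotient.mk _ x) = y.1 x := fun _ _ => rfl
    simpa [hLv] using this
  have := hL.fintype_card_le_finrank
  rwa [Fintype.card_coe, Subspace.dual_finrank_eq] at this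

/-- The order of vanishing at a point unramified over the `T`-line is bounded by the weight. -/
theorem order_le (hn : 0 < n) (ε : R →ₐ[k] PowerSeries k) (b : k)
    (hε : ε F.T = PowerSeries.C b + PowerSeries.X) {u : R} (hu : u ≠ 0) {c : ℕ}
    (huc : u ∈ F.G (c + 1)) {o : ℕ} (ho : PowerSeries.X ^ o ∣ ε u) :
    o ≤ (c / n + 1) * n.factorial := by
  obtain ⟨hfin, hle⟩ := finrank_quot_le hn hu huc
  refine le_trans ?_ hle
  set t : R := F.T - algebraMap k R b
  have ht : ε t = PowerSeries.X := by
    simp only [t, map_sub, hε, AlgHom.commutes]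
    simp [PowerSeries.algebraMap_eq]
  let w : Fin o → R ⧸ Ideal.span {u} := fun i => Ideal.Quotient.mk _ (t ^ (i : ℕ))
  have hw : LinearIndependent k w := by
    rw [Fintype.linearIndependent_iff]
    intro c hc i
    have h1 : Ideal.Quotient.mkₐ k (Ideal.span {u}) (∑ i, c i • t ^ (i : ℕ)) = 0 := by
      rw [map_sum]; simp only [map_smul]; exact hc
    rw [Ideal.Quotient.mkₐ_eq_mk, Ideal.Quotient.eq_zero_iff_mem, Ideal.mem_span_singleton] at h1
    have h2 : PowerSeries.X ^ o ∣ ∑ i : Fin o, c i • (PowerSeries.X : PowerSeries k) ^ (i : ℕ) := by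
      have := map_dvd ε h1
      rw [map_sum] at this
      simp only [map_smul, map_pow, ht] at this
      exact ho.trans this
    rw [PowerSeries.X_pow_dvd_iff] at h2
    have h3 := h2 i i.2
    rw [map_sum] at h3
    simp only [PowerSeries.coeff_smul, PowerSeries.coeff_X_pow, Fin.val_inj] at h3
    simpa using h3
  have := hw.fintype_card_le_finrank
  rwa [Fintype.card_fin] at this

/-- Stepanov's method. A dimension count gives `∑ uᵢ ^ p ^ μ * vᵢ = 0` with `v ≠ 0`, where the `uᵢ`
form a basis of `G (a + 1)`. The function `∑ uᵢ * Ψ(vᵢ) ^ p ^ ν` is then nonzero and vanishes at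
the points of `S`, so their number is at most its number of zeros. -/
theorem stepanov (hn : 0 < n) {p : ℕ} [Fact p.Prime] [CharP k p] (ε : R →ₐ[k] PowerSeries k) (b0 : k)
    (hε : ε F.T = PowerSeries.C b0 + PowerSeries.X) (hinj : Function.Injective ε)
    (Ψ : R →+* R) (hΨ : Function.Injective Ψ) (hΨG : ∀ c r, r ∈ F.G c → Ψ r ∈ F.G c)
    (μ ν : ℕ) (S : Finset (R →ₐ[k] k)) (hS : ∀ y ∈ S, ∀ x, y (Ψ x) ^ p ^ (μ + ν) = y x)
    (a b : ℕ) (h1 : rk n (p ^ μ * a + b + 1) < rk n (a + 1) * rk n (b + 1))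
    (h2 : (a / n + 1) * n.factorial < p ^ ν) :
    S.card ≤ ((a + p ^ ν * b) / n + 1) * n.factorial := by
  have hfin := F.fin
  have hpp : p.Prime := Fact.out
  have : CharP R p := charP_of_injective_algebraMap (algebraMap k R).injective p
  have : CharP (PowerSeries k) p :=
    charP_of_injective_algebraMap (algebraMap k (PowerSeries k)).injective p
  set r := rk n (a + 1)
  let u : Basis (Fin r) k (F.G (a + 1)) := finBasisOfFinrankEq k _ (F.finrank_eq _)
  let L0 : (Fin r → F.G (b + 1)) →ₗ[k] R :=
    ∑ i, ((LinearMap.mulLeft k ((u i : R) ^ p ^ μ)).comp (F.G (b + 1)).subtype).comp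
      (LinearMap.proj i)
  have hL0 : ∀ v, L0 v = ∑ i, (u i : R) ^ p ^ μ * (v i : R) := fun v => by simp [L0]
  let L : (Fin r → F.G (b + 1)) →ₗ[k] F.G (p ^ μ * a + b + 1) := L0.codRestrict _ (by
    intro v
    rw [hL0]
    exact Submodule.sum_mem _ fun i _ => F.mul_mem (pow_mem (u i).2 _) (v i).2)
  have hker : LinearMap.ker L ≠ ⊥ := LinearMap.ker_ne_bot_of_finrank_lt (by
    rw [F.finrank_eq, Module.finrank_pi_fintype]
    simpa [F.finrank_eq] using h1)
  obtain ⟨v, hv, hv0⟩ := Submodule.exists_mem_ne_zero_of_ne_bot hker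
  have hv1 : ∑ i, (u i : R) ^ p ^ μ * (v i : R) = 0 := by
    rw [← hL0]; exact congrArg Subtype.val hv
  set g : R := ∑ i, (u i : R) * Ψ (v i) ^ p ^ ν with hg
  have hgG : g ∈ F.G (a + p ^ ν * b + 1) := Submodule.sum_mem _ fun i _ =>
    F.mul_mem (u i).2 (pow_mem (hΨG _ _ (v i).2) _)
  have hg0 : g ≠ 0 := by
    intro h0
    have h3 : ∑ i, ε (u i) * ε (Ψ (v i)) ^ p ^ ν = 0 := by
      have := congrArg ε h0
      simpa [hg] using this
    have hne : ∃ i, ε (Ψ (v i)) ≠ 0 := by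
      by_contra hall
      push Not at hall
      refine hv0 (funext fun i => Subtype.ext ?_)
      exact hΨ (hinj (by rw [hall i]; simp))
    -- divide all the series by the largest common power of `X`
    have hex : ∃ m, ∃ i, (ε (Ψ (v i))).coeff m ≠ 0 := by
      obtain ⟨i, hi⟩ := hne
      by_contra hall
      push Not at hall
      exact hi (PowerSeries.ext fun m => by simpa using hall m i)
    classical
    set m := Nat.find hex
    obtain ⟨i0, hi0⟩ := Nat.find_spec hex
    have hdiv : ∀ i, PowerSeries.X ^ m ∣ ε (Ψ (v i)) := fun i => by
      rw [PowerSeries.X_pow_dvd_iff]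
      intro j hj
      have := Nat.find_min hex hj
      push Not at this
      exact this i
    choose w hw using hdiv
    have h4 : ∑ i, ε (u i) * w i ^ p ^ ν = 0 := by
      have h5 : (PowerSeries.X ^ m) ^ p ^ ν * ∑ i, ε (u i) * w i ^ p ^ ν = 0 := by
        rw [← h3, Finset.mul_sum]
        refine Finset.sum_congr rfl fun i _ => ?_
        rw [hw i]; ring
      exact (mul_eq_zero.1 h5).resolve_left (pow_ne_zero _ (pow_ne_zero _ PowerSeries.X_ne_zero))
    set c : Fin r → k := fun i => PowerSeries.constantCoeff (w i)
    have hc0 : c i0 ≠ 0 := by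
      have h6 : (ε (Ψ (v i0))).coeff m ≠ 0 := hi0
      rw [hw i0, PowerSeries.coeff_X_pow_mul'] at h6
      simpa [c] using h6
    have hwc : ∀ i, PowerSeries.X ^ p ^ ν ∣ w i ^ p ^ ν - PowerSeries.C (c i ^ p ^ ν) := fun i => by
      rw [map_pow, ← sub_pow_char_pow]
      refine pow_dvd_pow_of_dvd ?_ _
      rw [PowerSeries.X_dvd_iff]
      simp [c]
    -- replacing each `w i` by its constant term changes the relation by a multiple of `X ^ p ^ ν`,
    -- so a nonzero element of `G (a + 1)` vanishes to order at least `p ^ ν`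
    set U : F.G (a + 1) := ∑ i, c i ^ p ^ ν • u i with hU
    have hU0 : (U : R) ≠ 0 := by
      intro h
      have h7 : U = 0 := Subtype.ext h
      have := Fintype.linearIndependent_iff.1 u.linearIndependent _ h7 i0
      exact pow_ne_zero _ hc0 this
    have hUd : PowerSeries.X ^ p ^ ν ∣ ε U := by
      have h8 : ε U = - ∑ i, ε (u i) * (w i ^ p ^ ν - PowerSeries.C (c i ^ p ^ ν)) := by
        simp only [mul_sub, Finset.sum_sub_distrib, h4, zero_sub, neg_neg, hU]
        rw [Submodule.coe_sum, map_sum]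
        refine Finset.sum_congr rfl fun i _ => ?_
        rw [Submodule.coe_smul, map_smul, PowerSeries.smul_eq_C_mul, mul_comm]
      rw [h8, dvd_neg]
      exact Finset.dvd_sum fun i _ => (hwc i).mul_left _
    exact absurd (order_le hn ε b0 hε hU0 U.2 hUd) (by omega)
  -- at a point of `S`, the `p ^ μ`-th power of `g` is the value of the vanishing relation `hv1`
  refine card_zeros_le hn hg0 hgG S fun y hy => ?_
  have : y g ^ p ^ μ = 0 := by
    rw [hg, map_sum, sum_pow_char_pow]
    rw [← map_zero y, ← hv1, map_sum]
    refine Finset.sum_congr rfl fun i _ => ?_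
    rw [map_mul, map_mul, map_pow, map_pow, mul_pow, ← pow_mul, ← pow_add, add_comm ν μ, hS y hy]
  exact eq_zero_of_pow_eq_zero this

theorem rk_zero {n : ℕ} (hn : 0 < n) : rk n 0 = 0 := by
  unfold rk; exact Finset.sum_eq_zero fun a _ => by simp; omega

/-- The Stepanov bound with parameters optimized; the constants depend only on `n`. -/
theorem stepanov_bound (hn : 2 ≤ n) : ∃ C q0 : ℕ, ∀ {k R : Type} [Field k] [CommRing R]
    [Algebra k R] (F : Filt k R n) [IsDomain R] {p : ℕ} [Fact p.Prime] [CharP k p]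
    (ε : R →ₐ[k] PowerSeries k) (b0 : k)
    (_ : ε F.T = PowerSeries.C b0 + PowerSeries.X) (_ : Function.Injective ε)
    (Ψ : R →+* R) (_ : Function.Injective Ψ) (_ : ∀ c r, r ∈ F.G c → Ψ r ∈ F.G c)
    (μ ν : ℕ) (_ : μ ≤ ν) (_ : q0 ≤ p ^ μ) (S : Finset (R →ₐ[k] k))
    (_ : ∀ y ∈ S, ∀ x, y (Ψ x) ^ p ^ (μ + ν) = y x),
    S.card ≤ p ^ (μ + ν) + C * p ^ ν := by
  obtain ⟨h, hh⟩ : ∃ h, h = (n - 1).factorial := ⟨_, rfl⟩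
  have hhpos : 0 < h := hh ▸ Nat.factorial_pos _
  have hnf : n.factorial = n * h := by rw [hh]; exact (Nat.mul_factorial_pred (by omega)).symm
  obtain ⟨D, hD⟩ : ∃ D, D = n * (n - 1) := ⟨_, rfl⟩
  obtain ⟨e, he⟩ : ∃ e, e = 4 * (D + 2) := ⟨_, rfl⟩
  refine ⟨h * D + h * e + 1 + n * h, h * e * D + D + e + 1 + n + 4 * h * (D + 1) + 2 * (n * h) + 1, ?_⟩
  intro k R _ _ _ F _ p _ _ ε b0 hε hinj Ψ hΨ hΨG μ ν hμν hq S hS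
  have hle : p ^ μ ≤ p ^ ν := Nat.pow_le_pow_right (Fact.out : p.Prime).pos hμν
  obtain ⟨q, hqe⟩ : ∃ q, q = p ^ μ := ⟨_, rfl⟩
  obtain ⟨q', hqe'⟩ : ∃ q', q' = p ^ ν := ⟨_, rfl⟩
  have hup : ∀ x, (x / n + 1) * n.factorial ≤ h * x + n * h := fun x => by
    rw [hnf]
    have := Nat.div_mul_le_self x n
    calc (x / n + 1) * (n * h) = (x / n * n) * h + n * h := by ring
      _ ≤ x * h + n * h := by gcongr
      _ = _ := by ring
  set a := q' / (4 * h) with ha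
  set b := D + q / h + e with hb
  have ha1 : 4 * h * a ≤ q' := Nat.mul_div_le _ _
  have ha2 : q' < 4 * h * (a + 1) := by
    have := Nat.lt_mul_div_succ q' (show 0 < 4 * h by omega)
    simpa [ha] using this
  have hb1 : h * (q / h) ≤ q := Nat.mul_div_le _ _
  have hb2 : q < h * (q / h + 1) := Nat.lt_mul_div_succ q hhpos
  have hb3 : q / h ≤ q := Nat.div_le_self _ _
  rw [← hqe, ← hqe'] at hle
  rw [← hqe] at hq
  have haD : D ≤ a := by
    by_contra hlt
    have : 4 * h * (a + 1) ≤ 4 * h * (D + 1) := Nat.mul_le_mul_left _ (by omega)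
    omega
  have key := stepanov (F := F) (by omega) ε b0 hε hinj Ψ hΨ hΨG μ ν S hS a b ?_ ?_
  · refine key.trans ((hup _).trans ?_)
    rw [pow_add, ← hqe, ← hqe']
    have e1 : h * (a + q' * b) = h * a + q' * (h * D + h * (q / h) + h * e) := by rw [hb]; ring
    rw [e1]
    have e2 : q' * (h * D + h * (q / h) + h * e) ≤ q' * (h * D + q + h * e) := by gcongr
    have e3 : q' * (h * D + q + h * e) + q' + (n * h) * q' =
      q * q' + (h * D + h * e + 1 + n * h) * q' := by ring
    have e4 : h * a ≤ q' := by nlinarith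
    have e5 : n * h ≤ n * h * q' := Nat.le_mul_of_pos_right _ (by omega)
    omega
  · rw [← hqe]
    have l1 := rk_lower (n := n) (by omega) (a + 1)
    have l2 := rk_lower (n := n) (by omega) (b + 1)
    have l3 := rk_add_le (n := n) (by omega) 0 (q * a + b + 1)
    rw [zero_add, rk_zero (by omega), zero_add] at l3
    rw [← hh, ← hD] at l1 l2
    obtain ⟨a', ha'⟩ := Nat.exists_eq_add_of_le haD
    have l1' : h * (a' + 1) ≤ rk n (a + 1) := by
      have : h * (a + 1) = h * (a' + 1) + h * D := by rw [ha']; ring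
      omega
    have l2' : h * (q / h + e + 1) ≤ rk n (b + 1) := by
      have : h * (b + 1) = h * (q / h + e + 1) + h * D := by rw [hb]; ring
      omega
    refine lt_of_le_of_lt (l3.trans (hup _)) (lt_of_lt_of_le ?_ (Nat.mul_le_mul l1' l2'))
    have m1 : q + h * e ≤ h * (q / h + e + 1) := by
      have : h * (q / h + e + 1) = h * (q / h + 1) + h * e := by ring
      omega
    refine lt_of_lt_of_le ?_ (Nat.mul_le_mul_left _ m1)
    have m2 : h * (q * a + b + 1) + n * h = h * (q * a + b + 1 + n) := by ring
    rw [m2, mul_assoc]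
    refine Nat.mul_lt_mul_of_pos_left ?_ hhpos
    -- `4 h (a + 1) > q' ≥ q` turns `h e (a + 1)` into more than `(D + 2) q`
    have m3 : (D + 2) * q ≤ h * e * (a + 1) := by
      have : (D + 2) * q ≤ (D + 2) * (4 * h * (a + 1)) := Nat.mul_le_mul_left _ (by omega)
      calc _ ≤ _ := this
        _ = _ := by rw [he]; ring
    have m4 : (a' + 1) * (q + h * e) + D * q + h * e * D = q * a + q + h * e * (a + 1) := by
      rw [ha']; ring
    have m5 : (D + 2) * q = D * q + 2 * q := by ring
    have m6 : q * a + b + 1 + n = q * a + D + q / h + e + 1 + n := by rw [hb]; ring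
    rw [m6]
    omega
  · rw [← hqe']
    refine (hup a).trans_lt ?_
    have : 4 * h * a = 4 * (h * a) := by ring
    omega
end Filt
end

/-! ### Point counts up to an unspecified constant -/

noncomputable section
namespace Rb
open Module
variable {A : Type} [Field A] [IsAlgClosed A] {N : A[X]} {n : ℕ}

theorem natDegree_shift (hN : MorseData N n) (b : A) : (N + C b).natDegree = n := by
  rw [natDegree_add_C, hN.deg]

theorem monic_shift (hN : MorseData N n) (b : A) : (N + C b).Monic :=
  hN.monic.add_of_left (degree_C_le.trans_lt (by
    rw [← natDegree_pos_iff_degree_pos, hN.deg]; have := hN.two_le; omega))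

/-- The values `b` for which `N + b` has a multiple root. -/
def badSet (N : A[X]) : Finset A := by
  classical exact N.derivative.roots.toFinset.image fun β => -N.eval β

theorem card_badSet_le (hN : MorseData N n) : (badSet N).card ≤ n - 1 := by
  classical
  unfold badSet
  calc _ ≤ N.derivative.roots.toFinset.card := Finset.card_image_le
    _ ≤ N.derivative.roots.card := Multiset.toFinset_card_le _
    _ ≤ N.derivative.natDegree := card_roots' _
    _ ≤ n - 1 := hN.deg ▸ natDegree_derivative_le _

theorem nodup_of_not_bad (hN : MorseData N n) {b : A} (hb : b ∉ badSet N) :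
    (N + C b).roots.Nodup := by
  classical
  rw [Multiset.nodup_iff_count_le_one]
  intro β
  rw [count_roots]
  by_contra hlt
  push Not at hlt
  rw [one_lt_rootMultiplicity_iff_isRoot (monic_shift hN b).ne_zero] at hlt
  refine hb ?_
  unfold badSet
  rw [Finset.mem_image]
  refine ⟨β, ?_, ?_⟩
  · rw [Multiset.mem_toFinset, mem_roots (MorseData.deriv_ne hN)]
    simpa using hlt.2
  · have := hlt.1
    simp only [IsRoot, eval_add, eval_C] at this
    linear_combination -this

theorem exists_unramified (hN : MorseData N n) : ∃ b, b ∉ badSet N := by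
  have : Infinite A := IsAlgClosed.instInfinite
  exact Infinite.exists_notMem_finset _

/-- A power series point over an unramified value of `T`. -/
theorem exists_local_hom (hN : MorseData N n) : ∃ (b0 : A) (ε : Rb N n →ₐ[A] PowerSeries A),
    ε (T N n) = PowerSeries.C b0 + PowerSeries.X ∧ Function.Injective ε := by
  obtain ⟨b0, hb⟩ := exists_unramified hN
  have hn := hN.two_le
  set τ : PowerSeries A := PowerSeries.C b0 + PowerSeries.X
  have hdeg : (N.map (PowerSeries.C (R := A)) + C τ).natDegree = n := by
    rw [natDegree_add_C, hN.monic.natDegree_map, hN.deg]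
  obtain ⟨y, hy, -⟩ := hensel_roots (m := n) (N.map (PowerSeries.C (R := A)) + C τ)
    ((hN.monic.map _).add_of_left (degree_C_le.trans_lt (by
      rw [← natDegree_pos_iff_degree_pos, hN.monic.natDegree_map, hN.deg]; omega))) hdeg (by
    have : (N.map (PowerSeries.C (R := A)) + C τ).map (PowerSeries.constantCoeff (R := A))
        = N + C b0 := by
      rw [Polynomial.map_add, Polynomial.map_map, map_C]
      congr 2
      · convert Polynomial.map_id
        ext; simp
      · simp [τ]
    rw [this]
    exact nodup_of_not_bad hN hb)
  let ε : Rb N n →ₐ[A] PowerSeries A :=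
    { ev (PowerSeries.C (R := A)) τ y hy with
      commutes' := fun a => by
        change ev (PowerSeries.C (R := A)) τ y hy _ = _
        rw [ev_A]; rfl }
  have hε : ∀ r, ε r = ev (PowerSeries.C (R := A)) τ y hy r := fun _ => rfl
  refine ⟨b0, ε, by rw [hε, ev_T], ?_⟩
  rw [injective_iff_map_eq_zero]
  intro r hr
  by_contra h0
  obtain ⟨s, g, hs, hg⟩ := exists_poly_multiple hN h0
  have h1 : s.eval₂ (PowerSeries.C (R := A)) τ = 0 := by
    rw [← ev_poly (PowerSeries.C (R := A)) τ y hy s, ← hg, map_mul, ← hε, hr, zero_mul]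
  have h2 : ((s.comp (X + C b0) : A[X]) : PowerSeries A) = s.eval₂ (PowerSeries.C (R := A)) τ := by
    rw [comp, ← Polynomial.coeToPowerSeries.ringHom_apply, hom_eval₂]
    congr 1
    · ext1 a; simp
    · simp [τ, add_comm]
  rw [h1, ← Polynomial.coe_zero, Polynomial.coe_inj] at h2
  have h3 : s = 0 := by
    have := congrArg (fun q : A[X] => q.comp (X - C b0)) h2
    simpa [comp_assoc] using this
  exact hs h3

/-- `y` is an ordered tuple of roots of some translate `N + b`. -/
def Pt (N : A[X]) (n : ℕ) (y : Fin n → A) : Prop := ∃ b, ∏ i, (X - C (y i)) = N + C b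

/-- Points on which the `p ^ k`-power map acts as the permutation `τ` of the coordinates. -/
def Sk (p : ℕ) (N : A[X]) (n k : ℕ) (τ : Equiv.Perm (Fin n)) : Set (Fin n → A) :=
  {y | Pt N n y ∧ ∀ i, y i ^ p ^ k = y (τ i)}

/-- The homomorphism of evaluation at a point. -/
def pointHom (y : Fin n → A) (h : Pt N n y) : Rb N n →ₐ[A] A :=
  { ev (RingHom.id A) h.choose y (by rw [Polynomial.map_id]; exact h.choose_spec) with
    commutes' := fun a => by
      change ev _ _ _ _ _ = _
      rw [ev_A]; rfl }

theorem pointHom_xx (y : Fin n → A) (h : Pt N n y) (i : Fin n) : pointHom y h (xx N n i) = y i :=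
  ev_xx (RingHom.id A) h.choose y (by rw [Polynomial.map_id]; exact h.choose_spec) i

theorem pointHom_T (y : Fin n → A) (h : Pt N n y) :
    ∏ i, (X - C (y i)) = N + C (pointHom y h (T N n)) := by
  have : pointHom y h (T N n) = h.choose :=
    ev_T (RingHom.id A) h.choose y (by rw [Polynomial.map_id]; exact h.choose_spec)
  rw [this]; exact h.choose_spec

section Frob
variable {p : ℕ} [Fact p.Prime] [CharP A p] (hfr : N.map (frobenius A p) = N)
include hfr

theorem map_iterateFrobenius (k : ℕ) : N.map (iterateFrobenius A p k) = N := by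
  induction k with
  | zero => convert Polynomial.map_id; ext; simp [iterateFrobenius_def]
  | succ k ih =>
    have : iterateFrobenius A p (k + 1) = (frobenius A p).comp (iterateFrobenius A p k) := by
      ext x; simp [iterateFrobenius_def, frobenius_def, pow_succ, pow_mul]
    rw [this, ← Polynomial.map_map, ih, hfr]

theorem map_iterateFrobenius_symm (k : ℕ) :
    N.map ((iterateFrobeniusEquiv A p k).symm : A →+* A) = N := by
  conv_lhs => rw [← map_iterateFrobenius hfr k]
  rw [Polynomial.map_map]
  convert Polynomial.map_id
  ext x
  exact (iterateFrobeniusEquiv A p k).symm_apply_apply x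

theorem frob_b {k : ℕ} {τ : Equiv.Perm (Fin n)} {y : Fin n → A} (hy : ∀ i, y i ^ p ^ k = y (τ i))
    {b : A} (hb : ∏ i, (X - C (y i)) = N + C b) : b ^ p ^ k = b := by
  have h1 := congrArg (Polynomial.map (iterateFrobenius A p k)) hb
  rw [Polynomial.map_prod, Polynomial.map_add, map_iterateFrobenius hfr, map_C] at h1
  simp only [Polynomial.map_sub, map_X, map_C, iterateFrobenius_def, hy] at h1
  rw [Equiv.prod_comp τ (fun i => X - C (y i)), hb] at h1
  exact (C_injective (add_left_cancel h1)).symm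

theorem Sk_finite {k : ℕ} (hk : 0 < k) (τ : Equiv.Perm (Fin n)) : (Sk p N n k τ).Finite := by
  classical
  have hp : p.Prime := Fact.out
  have h1 : ∀ y ∈ Sk p N n k τ, ∀ m i, y i ^ p ^ (k * m) = y ((τ ^ m) i) := by
    rintro y ⟨-, hy⟩ m
    induction m with
    | zero => intro i; simp
    | succ m ih =>
      intro i
      rw [mul_add, mul_one, pow_add, pow_mul, ih, hy, pow_succ', Equiv.Perm.mul_apply]
  set Q := p ^ (k * orderOf τ)
  have hQ : 1 < Q := Nat.one_lt_pow (Nat.mul_ne_zero hk.ne' (orderOf_pos τ).ne') hp.one_lt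
  have hQ0 : (X ^ Q - X : A[X]) ≠ 0 := FiniteField.X_pow_card_sub_X_ne_zero A hQ
  refine Set.Finite.subset (Set.Finite.pi' fun _ : Fin n =>
    (X ^ Q - X : A[X]).roots.toFinset.finite_toSet) ?_
  intro y hy i
  have := h1 y hy (orderOf τ) i
  rw [pow_orderOf_eq_one] at this
  simp only [Finset.mem_coe, Multiset.mem_toFinset]
  rw [mem_roots hQ0]
  simp [Q, this]

/-- The Stepanov bound, applied with the automorphism combining the inverse Frobenius on constants
with a permutation of the roots. -/
theorem Sk_upper (hN : MorseData N n) : ∃ C q0 : ℕ, ∀ (μ ν : ℕ), μ ≤ ν → q0 ≤ p ^ μ → 0 < μ + ν →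
    ∀ τ : Equiv.Perm (Fin n), (Sk p N n (μ + ν) τ).ncard ≤ p ^ (μ + ν) + C * p ^ ν := by
  obtain ⟨C0, q0, H⟩ := Filt.stepanov_bound hN.two_le
  refine ⟨C0, q0, fun μ ν hμν hq hpos τ => ?_⟩
  classical
  have := isDomain hN
  obtain ⟨b0, ε, hε, hinj⟩ := exists_local_hom hN
  set k := μ + ν
  have hfin := Sk_finite (n := n) hfr hpos τ
  have hsymm := map_iterateFrobenius_symm hfr k
  set φ : A →+* A := ((iterateFrobeniusEquiv A p k).symm : A →+* A) with hφ
  have hφk : ∀ a, φ a ^ p ^ k = a := fun a =>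
    (iterateFrobeniusEquiv A p k).apply_symm_apply a
  have hφid : (iterateFrobenius A p k).comp φ = RingHom.id A := by
    ext a; simp [iterateFrobenius_def, hφk]
  let Ψ : Rb N n →+* Rb N n := Phi φ hsymm τ⁻¹
  have hΨ : Function.Injective Ψ := by
    have : Function.LeftInverse (Phi (N := N) (n := n) (iterateFrobenius A p k)
        (map_iterateFrobenius hfr k) τ) Ψ := by
      intro r
      rw [Phi_Phi]
      have h1 : ∀ (ψ : A →+* A) (hψ : N.map ψ = N) (ρ : Equiv.Perm (Fin n)), ψ = RingHom.id A →
          ρ = 1 → Phi ψ hψ ρ r = r := by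
        rintro ψ hψ ρ rfl rfl; exact Phi_id r
      exact h1 _ _ _ hφid (mul_inv_cancel τ)
    exact this.injective
  let S : Finset (Rb N n →ₐ[A] A) := (hfin.toFinset.attach).image fun y =>
    pointHom y.1 ((hfin.mem_toFinset.1 y.2).1)
  have hcard : S.card = (Sk p N n k τ).ncard := by
    rw [Finset.card_image_of_injective, Finset.card_attach, Set.ncard_eq_toFinset_card _ hfin]
    intro y z hyz
    refine Subtype.ext (funext fun i => ?_)
    rw [← pointHom_xx y.1 ((hfin.mem_toFinset.1 y.2).1), ← pointHom_xx z.1 ((hfin.mem_toFinset.1 z.2).1)]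
    exact DFunLike.congr_fun hyz _
  rw [← hcard]
  refine H (filt hN) ε b0 hε hinj Ψ hΨ (fun c r hr => Phi_mem_G _ _ _ hr) μ ν hμν hq S ?_
  intro y hy x
  obtain ⟨z, -, rfl⟩ := Finset.mem_image.1 hy
  obtain ⟨hz1, hz2⟩ := hfin.mem_toFinset.1 z.2
  have := hom_ext (f := ((iterateFrobenius A p k).comp ((pointHom z.1 hz1 : Rb N n →ₐ[A] A) :
    Rb N n →+* A)).comp Ψ) (g := ((pointHom z.1 hz1 : Rb N n →ₐ[A] A) : Rb N n →+* A))
    (by intro a; simp [Ψ, iterateFrobenius_def, hφk])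
    (by simp only [Ψ, RingHom.comp_apply, Phi_T]
        exact frob_b hfr hz2 (pointHom_T z.1 hz1))
    (by intro i
        simp only [Ψ, RingHom.comp_apply, Phi_xx, RingHom.coe_coe, pointHom_xx,
          iterateFrobenius_def, hz2]
        simp)
  exact DFunLike.congr_fun this x

/-- Every ordered tuple of roots of `N + b`, for an unramified `b` in the field with `p ^ k`
elements, is permuted by the `p ^ k`-power map. -/
theorem sum_Sk_lower (hN : MorseData N n) {k : ℕ} (hk : 0 < k) :
    n.factorial * (p ^ k - (n - 1)) ≤ ∑ τ : Equiv.Perm (Fin n), (Sk p N n k τ).ncard := by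
  classical
  have hp : p.Prime := Fact.out
  set Q := p ^ k with hQdef
  have hQ : 1 < Q := Nat.one_lt_pow hk.ne' hp.one_lt
  have hQ0 : (X ^ Q - X : A[X]) ≠ 0 := FiniteField.X_pow_card_sub_X_ne_zero A hQ
  set FQ : Finset A := (X ^ Q - X : A[X]).roots.toFinset
  have hFQ : FQ.card = Q := by
    rw [Multiset.toFinset_card_of_nodup
      (nodup_roots (galois_poly_separable p Q (dvd_pow_self p hk.ne'))),
      (splits_iff_card_roots.1 (IsAlgClosed.splits _)),
      FiniteField.X_pow_card_sub_X_natDegree_eq A hQ]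
  have hmem : ∀ b, b ∈ FQ ↔ b ^ Q = b := fun b => by
    rw [Multiset.mem_toFinset, mem_roots hQ0]; simp [sub_eq_zero]
  set E := FQ \ badSet N
  have hE : Q - (n - 1) ≤ E.card := by
    have h1 : FQ.card - (badSet N).card ≤ E.card := Finset.le_card_sdiff (badSet N) FQ
    have := card_badSet_le hN
    rw [hFQ] at h1
    omega
  have henum : ∀ b : E, ∃ y : Fin n → A, Function.Injective y ∧ ∏ i, (X - C (y i)) = N + C b.1 := by
    intro b
    have hb := Finset.mem_sdiff.1 b.2
    obtain ⟨y, h1, h2⟩ := exists_fin_enum (m := n) _ (nodup_of_not_bad hN hb.2) (by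
      rw [(splits_iff_card_roots.1 (IsAlgClosed.splits _)), natDegree_shift hN])
    exact ⟨y, h1, prod_eq_of_roots _ (monic_shift hN _) (natDegree_shift hN _) y h1 fun i =>
      (mem_roots'.1 (h2 i)).2⟩
  choose y hinj hprod using henum
  have hpt : ∀ (b : E) (π : Equiv.Perm (Fin n)), ∏ i, (X - C (y b (π i))) = N + C b.1 := fun b π => by
    rw [Equiv.prod_comp π (fun i => X - C (y b i)), hprod]
  have hfr' : ∀ (b : E) (π : Equiv.Perm (Fin n)), ∃ τ : Equiv.Perm (Fin n),
      ∀ i, y b (π i) ^ Q = y b (π (τ i)) := by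
    intro b π
    have hb := (hmem _).1 (Finset.mem_sdiff.1 b.2).1
    have h1 : ∀ i, ∃ j, y b (π i) ^ Q = y b (π j) := by
      intro i
      have h2 : (N + C b.1).eval (y b (π i) ^ Q) = 0 := by
        have h3 : (N + C b.1).map (iterateFrobenius A p k) = N + C b.1 := by
          rw [Polynomial.map_add, map_iterateFrobenius hfr, map_C, iterateFrobenius_def, hb]
        rw [← h3, ← iterateFrobenius_def, Polynomial.eval_map_apply, ← hpt b π, eval_prod]
        rw [Finset.prod_eq_zero (Finset.mem_univ i) (by simp), map_zero]
      rw [← hpt b π, eval_prod, Finset.prod_eq_zero_iff] at h2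
      obtain ⟨j, -, hj⟩ := h2
      exact ⟨j, by simpa [sub_eq_zero] using hj⟩
    choose τ hτ using h1
    have hτi : Function.Injective τ := by
      intro i j hij
      have h4 : y b (π i) ^ Q = y b (π j) ^ Q := by rw [hτ, hτ, hij]
      exact π.injective (hinj b ((iterateFrobeniusEquiv A p k).injective h4))
    exact ⟨Equiv.ofBijective τ (Finite.injective_iff_bijective.1 hτi), hτ⟩
  have hfin := fun τ => Sk_finite (n := n) hfr hk τ
  let U : Finset (Fin n → A) := Finset.univ.biUnion fun τ => (hfin τ).toFinset
  have hU : (Fintype.card (Equiv.Perm (Fin n) × E)) ≤ U.card := by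
    rw [← Finset.card_univ]
    refine Finset.card_le_card_of_injOn (fun x => y x.2 ∘ x.1) ?_ ?_
    · rintro ⟨π, b⟩ -
      obtain ⟨τ, hτ⟩ := hfr' b π
      simp only [U, Finset.coe_biUnion, Set.mem_iUnion, Finset.mem_coe]
      exact ⟨τ, Finset.mem_univ _, (hfin τ).mem_toFinset.2 ⟨⟨_, hpt b π⟩, hτ⟩⟩
    · rintro ⟨π, b⟩ - ⟨π', b'⟩ - h
      have h' : ∀ i, y b (π i) = y b' (π' i) := fun i => congrFun h i
      have hb : b = b' := by
        refine Subtype.ext (C_injective (add_left_cancel (a := N) ?_))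
        rw [← hpt b π, ← hpt b' π']
        simp only [h']
      subst hb
      have : π = π' := Equiv.ext fun i => hinj b (h' i)
      rw [this]
  have h5 : U.card ≤ ∑ τ : Equiv.Perm (Fin n), (Sk p N n k τ).ncard := by
    refine Finset.card_biUnion_le.trans (Finset.sum_le_sum fun τ _ => ?_)
    rw [Set.ncard_eq_toFinset_card _ (hfin τ)]
  refine le_trans ?_ (hU.trans h5)
  rw [Fintype.card_prod, Fintype.card_perm, Fintype.card_fin, Fintype.card_coe]
  exact Nat.mul_le_mul_left _ hE

/-- The upper bounds for all permutations and the lower bound for the sum give a lower bound for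
each. -/
theorem Sk_bound (hN : MorseData N n) : ∃ C k0 : ℕ, ∀ k, k0 ≤ k → ∀ τ : Equiv.Perm (Fin n),
    |((Sk p N n k τ).ncard : ℝ) - (p : ℝ) ^ k| ≤ C * (p : ℝ) ^ ((k + 1) / 2) := by
  classical
  have hp : p.Prime := Fact.out
  obtain ⟨C0, q0, H⟩ := Sk_upper (n := n) hfr hN
  refine ⟨n.factorial * (n - 1 + C0), 2 * q0 + 1, fun k hk τ => ?_⟩
  set ν := (k + 1) / 2
  obtain ⟨μ, hμ⟩ : ∃ μ, k = μ + ν := ⟨k / 2, by omega⟩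
  have hμν : μ ≤ ν := by omega
  have hq : q0 ≤ p ^ μ := by
    have : q0 ≤ μ := by omega
    exact this.trans (Nat.lt_pow_self hp.one_lt).le
  have hup : ∀ τ, (Sk p N n k τ).ncard ≤ p ^ k + C0 * p ^ ν := fun τ => by
    rw [hμ]; exact H μ ν hμν hq (by omega) τ
  have hlow := sum_Sk_lower (n := n) hfr hN (k := k) (by omega)
  have hfpos : 1 ≤ n.factorial := n.factorial_pos
  have hpν : 1 ≤ p ^ ν := Nat.one_le_pow _ _ hp.pos
  have h1 : n.factorial * p ^ k ≤ n.factorial * (p ^ k - (n - 1)) + n.factorial * (n - 1) := by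
    rw [← mul_add]; exact Nat.mul_le_mul_left _ (by omega)
  have h2 : ∑ τ : Equiv.Perm (Fin n), (Sk p N n k τ).ncard ≤
      (Sk p N n k τ).ncard + (n.factorial - 1) * (p ^ k + C0 * p ^ ν) := by
    rw [← Finset.add_sum_erase _ _ (Finset.mem_univ τ)]
    gcongr
    refine (Finset.sum_le_card_nsmul _ _ (p ^ k + C0 * p ^ ν) fun τ _ => hup τ).trans ?_
    rw [Finset.card_erase_of_mem (Finset.mem_univ _), Finset.card_univ, Fintype.card_perm,
      Fintype.card_fin, smul_eq_mul]
  obtain ⟨f, hf⟩ : ∃ f, n.factorial = f + 1 := ⟨n.factorial - 1, by omega⟩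
  have h3 := hup τ
  rw [hf] at h1 hlow h2 ⊢
  rw [Nat.add_sub_cancel] at h2
  have h4 : (f + 1) * p ^ k ≤ (Sk p N n k τ).ncard + f * (p ^ k + C0 * p ^ ν) + (f + 1) * (n - 1) := by
    omega
  have h5 : p ^ k ≤ (Sk p N n k τ).ncard + (f + 1) * (n - 1 + C0) * p ^ ν := by
    have e1 : (f + 1) * (n - 1 + C0) * p ^ ν = (f + 1) * (n - 1) * p ^ ν + f * (C0 * p ^ ν) +
      C0 * p ^ ν := by ring
    have e2 : (f + 1) * (n - 1) ≤ (f + 1) * (n - 1) * p ^ ν := Nat.le_mul_of_pos_right _ hpν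
    have e3 : (f + 1) * p ^ k = f * p ^ k + p ^ k := by ring
    have e4 : f * (p ^ k + C0 * p ^ ν) = f * p ^ k + f * (C0 * p ^ ν) := by ring
    have e5 := Nat.zero_le (C0 * p ^ ν)
    omega
  have h6 : (Sk p N n k τ).ncard ≤ p ^ k + (f + 1) * (n - 1 + C0) * p ^ ν := by
    refine h3.trans ?_
    gcongr
    calc C0 ≤ n - 1 + C0 := Nat.le_add_left _ _
      _ ≤ _ := Nat.le_mul_of_pos_left _ (by omega)
  have h5' : (p : ℝ) ^ k ≤ (Sk p N n k τ).ncard + (((f + 1) * (n - 1 + C0) : ℕ) : ℝ) * (p : ℝ) ^ ν := by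
    exact_mod_cast h5
  have h6' : ((Sk p N n k τ).ncard : ℝ) ≤ (p : ℝ) ^ k + (((f + 1) * (n - 1 + C0) : ℕ) : ℝ) * (p : ℝ) ^ ν := by
    exact_mod_cast h6
  rw [abs_le]
  constructor <;> linarith
end Frob
end Rb
end

/-! ### Lang's theorem and descent along a semilinear map -/

noncomputable section

namespace Descent
open Module
variable {p : ℕ} [Fact p.Prime] {A R : Type} [Field A] [CharP A p] [Algebra (ZMod p) A]
  [CommRing R] [Algebra A R] [Algebra (ZMod p) R] [IsScalarTower (ZMod p) A R]

theorem exists_zmod_of_pow_eq {a : A} (h : a ^ p = a) : ∃ c : ZMod p, algebraMap (ZMod p) A c = a := by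
  have h1 : a ∈ (⊥ : Subfield A) := (Subfield.mem_bot_iff_pow_eq_self A p).2 h
  have h2 : (⊥ : Subfield A) ≤ (algebraMap (ZMod p) A).fieldRange := bot_le
  obtain ⟨c, hc⟩ := h2 h1
  exact ⟨c, hc⟩

theorem zmod_pow (c : ZMod p) : algebraMap (ZMod p) A c ^ p = algebraMap (ZMod p) A c := by
  rw [← map_pow, ZMod.pow_card]

variable (Φ : R →+* R) (hA : ∀ a, Φ (algebraMap A R a) = algebraMap A R (a ^ p))
include hA

theorem smul_semi (a : A) (r : R) : Φ (a • r) = a ^ p • Φ r := by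
  rw [Algebra.smul_def, map_mul, hA, ← Algebra.smul_def]

/-- Independence over the prime field is preserved for vectors fixed by a semilinear map. -/
theorem fixed_linearIndependent {ι : Type*} (v : ι → R) (hv : ∀ i, Φ (v i) = v i)
    (hli : LinearIndependent (ZMod p) v) : LinearIndependent A v := by
  classical
  rw [linearIndependent_iff']
  intro s
  induction s using Finset.strongInduction with
  | H s ih =>
    intro a ha
    by_contra! hne
    obtain ⟨i0, hi0, hne⟩ := hne
    set b : ι → A := fun i => (a i0)⁻¹ * a i
    have hb0 : b i0 = 1 := inv_mul_cancel₀ hne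
    have hb : ∑ i ∈ s, b i • v i = 0 := by
      have := congrArg (fun r => (a i0)⁻¹ • r) ha
      simpa [Finset.smul_sum, smul_smul] using this
    have hb' : ∑ i ∈ s, (b i ^ p) • v i = 0 := by
      have := congrArg Φ hb
      simpa [map_sum, smul_semi Φ hA, hv] using this
    have hd : ∑ i ∈ s, (b i ^ p - b i) • v i = 0 := by
      simp only [sub_smul, Finset.sum_sub_distrib, hb, hb', sub_zero]
    rw [← Finset.sum_erase (a := i0) _ (by rw [hb0]; simp)] at hd
    have h1 := ih _ (Finset.erase_ssubset hi0) _ hd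
    have h2 : ∀ i ∈ s, b i ^ p = b i := by
      intro i hi
      by_cases h : i = i0
      · rw [h, hb0, one_pow]
      · exact sub_eq_zero.1 (h1 i (Finset.mem_erase.2 ⟨h, hi⟩))
    have h3 : ∀ i, ∃ c : ZMod p, i ∈ s → algebraMap (ZMod p) A c = b i := fun i => by
      by_cases hi : i ∈ s
      · obtain ⟨c, hc⟩ := exists_zmod_of_pow_eq (h2 i hi); exact ⟨c, fun _ => hc⟩
      · exact ⟨0, fun h => absurd h hi⟩
    choose c hc using h3
    have h4 : ∑ i ∈ s, c i • v i = 0 := by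
      rw [← hb]
      refine Finset.sum_congr rfl fun i hi => ?_
      rw [← hc i hi, algebraMap_smul]
    have h5 := linearIndependent_iff'.1 hli s c h4 i0 hi0
    have := hc i0 hi0
    rw [h5, map_zero, hb0] at this
    exact zero_ne_one this

/-- Lang's theorem for a vector space spanned by fixed vectors. -/
theorem lang [IsAlgClosed A] (W : Set R) (hW : ∀ w ∈ W, Φ w = w) {z : R}
    (hz : z ∈ Submodule.span A W) : ∃ y ∈ Submodule.span A W, Φ y - y = z := by
  induction hz using Submodule.closure_induction with
  | zero => exact ⟨0, zero_mem _, by simp⟩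
  | add x y _ _ hx hy =>
    obtain ⟨a, ha, rfl⟩ := hx
    obtain ⟨b, hb, rfl⟩ := hy
    exact ⟨a + b, add_mem ha hb, by rw [map_add]; ring⟩
  | smul_mem a w hw =>
    have hp : 1 < p := (Fact.out : p.Prime).one_lt
    obtain ⟨b, hb⟩ := IsAlgClosed.exists_root (X ^ p - X - C a : A[X]) (by
      have h1 : (X ^ p - X - C a : A[X]).degree = p := by
        rw [sub_sub, degree_sub_eq_left_of_degree_lt, degree_X_pow]
        rw [degree_X_pow]
        refine (degree_X_add_C a).trans_lt ?_
        exact_mod_cast hp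
      rw [h1]
      exact_mod_cast (Fact.out : p.Prime).ne_zero)
    refine ⟨b • w, Submodule.smul_mem _ _ (Submodule.subset_span hw), ?_⟩
    rw [smul_semi Φ hA, hW w hw, ← sub_smul]
    congr 1
    have : b ^ p - b - a = 0 := by simpa [IsRoot.def] using hb
    linear_combination this

theorem iterate_smul (i : ℕ) (a : A) (r : R) : Φ^[i] (a • r) = a ^ p ^ i • Φ^[i] r := by
  induction i with
  | zero => simp
  | succ i ih => rw [Function.iterate_succ_apply', ih, smul_semi Φ hA, Function.iterate_succ_apply',
      ← pow_mul, pow_succ]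

omit [CommRing R] [Algebra A R] [Algebra (ZMod p) R] [IsScalarTower (ZMod p) A R] [Algebra (ZMod p) A] hA in
/-- A generator of the field with `p ^ n` elements. -/
theorem exists_theta [IsAlgClosed A] {n : ℕ} (hn : 2 ≤ n) :
    ∃ θ : A, θ ^ p ^ n = θ ∧ ∀ i < n, i ≠ 0 → θ ^ p ^ i ≠ θ := by
  have hp : 2 ≤ p := (Fact.out : p.Prime).two_le
  have hpn : 4 ≤ p ^ n := calc
    4 = 2 ^ 2 := rfl
    _ ≤ p ^ 2 := Nat.pow_le_pow_left hp 2
    _ ≤ p ^ n := Nat.pow_le_pow_right (by omega) hn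
  have : NeZero ((p ^ n - 1 : ℕ) : A) := ⟨by
    rw [Nat.cast_sub (by omega)]
    simp [show n ≠ 0 by omega]⟩
  obtain ⟨θ, hθ⟩ := HasEnoughRootsOfUnity.exists_primitiveRoot A (p ^ n - 1)
  refine ⟨θ, ?_, fun i hi h0 h => ?_⟩
  · have := hθ.pow_eq_one
    calc θ ^ p ^ n = θ ^ (p ^ n - 1 + 1) := by rw [Nat.sub_add_cancel (by omega)]
      _ = θ := by rw [pow_succ, this, one_mul]
  · have h1 : p ^ i * 2 ≤ p ^ n := calc
      p ^ i * 2 ≤ p ^ i * p := by gcongr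
      _ = p ^ (i + 1) := (pow_succ _ _).symm
      _ ≤ p ^ n := Nat.pow_le_pow_right (by omega) hi
    have h2 := hθ.pow_inj (i := p ^ i) (j := 1) (by omega) (by omega) (by simpa using h)
    have h3 : 1 < p ^ i := Nat.one_lt_pow h0 (by omega)
    omega

/-- A vector of finite period is a combination of its traces, which are fixed. -/
theorem mem_span_fixed [IsAlgClosed A] {n : ℕ} (hn : 2 ≤ n) (W : Submodule A R)
    (hW : ∀ r ∈ W, Φ r ∈ W) {v : R} (hv : v ∈ W) (hper : Φ^[n] v = v) :
    v ∈ Submodule.span A {w | w ∈ W ∧ Φ w = w} := by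
  obtain ⟨θ, h1, h2⟩ := exists_theta (p := p) (A := A) hn
  have hWi : ∀ i, ∀ r ∈ W, Φ^[i] r ∈ W := fun i r hr => by
    induction i with
    | zero => exact hr
    | succ i ih => rw [Function.iterate_succ_apply']; exact hW _ ih
  have ht : ∀ j : ℕ, ∑ i ∈ Finset.range n, Φ^[i] (θ ^ j • v) ∈ {w | w ∈ W ∧ Φ w = w} := fun j => by
    refine ⟨sum_mem fun i _ => hWi i _ (W.smul_mem _ hv), ?_⟩
    rw [map_sum]
    simp only [← Function.iterate_succ_apply' Φ]
    rw [← add_left_inj (Φ^[0] (θ ^ j • v)), ← Finset.sum_range_succ' (fun i => Φ^[i] (θ ^ j • v)) n,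
      Finset.sum_range_succ, iterate_smul Φ hA, hper, ← pow_mul, mul_comm j, pow_mul, h1]
    rfl
  set L : A[X] := ∏ i ∈ (Finset.range n).erase 0, (X - C (θ ^ p ^ i))
  have hL0 : L.eval θ ≠ 0 := by
    rw [eval_prod, Finset.prod_ne_zero_iff]
    intro i hi
    rw [Finset.mem_erase, Finset.mem_range] at hi
    simpa [sub_eq_zero] using (h2 i hi.2 hi.1).symm
  have key : ∑ j ∈ Finset.range (L.natDegree + 1), L.coeff j • ∑ i ∈ Finset.range n, Φ^[i] (θ ^ j • v)
      = L.eval θ • v := by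
    simp only [iterate_smul Φ hA, Finset.smul_sum, smul_smul]
    rw [Finset.sum_comm]
    have : ∀ i ∈ Finset.range n, ∑ j ∈ Finset.range (L.natDegree + 1),
        (L.coeff j * (θ ^ j) ^ p ^ i) • Φ^[i] v = L.eval (θ ^ p ^ i) • Φ^[i] v := fun i _ => by
      rw [← Finset.sum_smul, eval_eq_sum_range]
      congr 1
      refine Finset.sum_congr rfl fun j _ => ?_
      rw [← pow_mul, ← pow_mul, mul_comm j]
    rw [Finset.sum_congr rfl this, Finset.sum_eq_single_of_mem 0 (Finset.mem_range.2 (by omega))]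
    · simp
    · intro i hi h0
      have : L.eval (θ ^ p ^ i) = 0 := by
        rw [eval_prod]
        exact Finset.prod_eq_zero (Finset.mem_erase.2 ⟨h0, hi⟩) (by simp)
      rw [this, zero_smul]
  have h3 : L.eval θ • v ∈ Submodule.span A {w | w ∈ W ∧ Φ w = w} := by
    rw [← key]
    exact sum_mem fun j _ => Submodule.smul_mem _ _ (Submodule.subset_span (ht j))
  have := Submodule.smul_mem _ (L.eval θ)⁻¹ h3
  rwa [smul_smul, inv_mul_cancel₀ hL0, one_smul] at this

end Descent
end

/-! ### The ring of fixed elements -/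

noncomputable section

namespace Descent
open Module
variable {p : ℕ} [Fact p.Prime] {A R : Type} [Field A] [CharP A p] [Algebra (ZMod p) A]
  [CommRing R] [Algebra A R] [Algebra (ZMod p) R] [IsScalarTower (ZMod p) A R]
variable (Φ : R →+* R) (hA : ∀ a, Φ (algebraMap A R a) = algebraMap A R (a ^ p))

/-- The ring of elements fixed by the semilinear endomorphism `Φ`. -/
def fix : Subalgebra (ZMod p) R where
  carrier := {r | Φ r = r}
  mul_mem' {a b} ha hb := by
    change Φ _ = _
    rw [map_mul]; exact congrArg₂ _ ha hb
  add_mem' {a b} ha hb := by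
    change Φ _ = _
    rw [map_add]; exact congrArg₂ _ ha hb
  algebraMap_mem' c := by
    change Φ _ = _
    rw [IsScalarTower.algebraMap_apply (ZMod p) A R, hA, zmod_pow]

theorem mem_fix {r : R} : r ∈ fix Φ hA ↔ Φ r = r := Iff.rfl

/-- The fixed elements of `W`, inside the fixed ring. -/
def fixG (W : Submodule A R) : Submodule (ZMod p) (fix Φ hA) :=
  (W.restrictScalars (ZMod p)).comap (fix Φ hA).val.toLinearMap

theorem mem_fixG (W : Submodule A R) (r : fix Φ hA) : r ∈ fixG Φ hA W ↔ (r : R) ∈ W := Iff.rfl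

/-- If `W` is spanned by fixed vectors, a basis of its fixed part over the prime field is a basis of
`W` over `A`. -/
theorem fixG_basis (W : Submodule A R)
    (hW : W ≤ Submodule.span A {w | w ∈ W ∧ Φ w = w}) {ι : Type*} (b : Basis ι (ZMod p) (fixG Φ hA W)) :
    ∃ _ : Basis ι A W, True := by
  set v : ι → R := fun i => ((b i : fix Φ hA) : R)
  have h1 : LinearIndependent (ZMod p) v := by
    have := b.linearIndependent
    have := this.map' ((fix Φ hA).val.toLinearMap ∘ₗ (fixG Φ hA W).subtype)
      (LinearMap.ker_eq_bot.2 (Subtype.val_injective.comp Subtype.val_injective))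
    exact this
  have h2 := fixed_linearIndependent Φ hA v (fun i => ((b i : fix Φ hA)).2) h1
  have h3 : Submodule.span A (Set.range v) = W := by
    apply le_antisymm
    · rw [Submodule.span_le]
      rintro _ ⟨i, rfl⟩
      exact (b i).2
    · refine hW.trans (Submodule.span_le.2 ?_)
      rintro w ⟨hw, hf⟩
      have h4 := b.mem_span (⟨⟨w, hf⟩, hw⟩ : fixG Φ hA W)
      have h5 := Submodule.mem_map_of_mem (f := (fix Φ hA).val.toLinearMap ∘ₗ (fixG Φ hA W).subtype) h4
      rw [Submodule.map_span, ← Set.range_comp] at h5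
      exact Submodule.span_le_restrictScalars (ZMod p) A _ h5
  exact ⟨(Basis.span h2).map (LinearEquiv.ofEq _ _ h3), trivial⟩

theorem fixG_finite (W : Submodule A R) [Module.Finite A W]
    (hW : W ≤ Submodule.span A {w | w ∈ W ∧ Φ w = w}) : Module.Finite (ZMod p) (fixG Φ hA W) := by
  have b := Basis.ofVectorSpace (ZMod p) (fixG Φ hA W)
  obtain ⟨bA, -⟩ := fixG_basis Φ hA W hW b
  have := Module.Finite.finite_basis bA
  exact Module.Finite.of_basis b

theorem fixG_finrank (W : Submodule A R)
    (hW : W ≤ Submodule.span A {w | w ∈ W ∧ Φ w = w}) :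
    finrank (ZMod p) (fixG Φ hA W) = finrank A W := by
  have b := Basis.ofVectorSpace (ZMod p) (fixG Φ hA W)
  obtain ⟨bA, -⟩ := fixG_basis Φ hA W hW b
  rw [finrank_eq_nat_card_basis b, finrank_eq_nat_card_basis bA]

/-- The filtration induced on the fixed ring. -/
def fixFilt [IsAlgClosed A] {n : ℕ} (hn : 2 ≤ n) (F : Filt A R n) (hG : ∀ c, ∀ r ∈ F.G c, Φ r ∈ F.G c)
    (hT : Φ F.T = F.T) (hspan : ∀ c, F.G c ≤ Submodule.span A {w | w ∈ F.G c ∧ Φ w = w}) :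
    Filt (ZMod p) (fix Φ hA) n where
  G c := fixG Φ hA (F.G c)
  T := ⟨F.T, hT⟩
  mono := fun _ _ h _ hr => F.mono h hr
  exh := fun r => F.exh r
  one_mem := F.one_mem
  mul_mem := fun hr hs => F.mul_mem hr hs
  T_mem := F.T_mem
  cancel := fun h => F.cancel h
  reduce := by
    intro c x hc hx
    have hcn : n < c := (Nat.le_mul_of_pos_right n (by omega)).trans_lt hc
    obtain ⟨y, hy, hxy⟩ := F.reduce hc hx
    change (x : R) - F.T * y ∈ F.G c at hxy
    have h1 : F.T * (Φ y - y) ∈ F.G (c - n + n) := by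
      have h2 := hG _ _ hxy
      rw [map_sub, map_mul, hT, x.2] at h2
      have := sub_mem hxy h2
      refine F.mono (show c ≤ c - n + n by omega) ?_
      convert this using 1
      ring
    obtain ⟨z, hz, hzy⟩ := lang Φ hA _ (fun w hw => hw.2) (hspan _ (F.cancel h1))
    have hz' : z ∈ F.G (c - n) := (Submodule.span_le.2 (fun w hw => hw.1) :
      Submodule.span A {w | w ∈ F.G (c - n) ∧ Φ w = w} ≤ _) hz
    refine ⟨⟨y - z, ?_⟩, ?_, ?_⟩
    · rw [mem_fix, map_sub]; linear_combination -hzy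
    · exact sub_mem hy (F.mono (by omega) hz')
    · change (x : R) - F.T * (y - z) ∈ F.G c
      have : F.T * z ∈ F.G c := by
        have := F.mul_mem (a := n) (b := c - n - 1) F.T_mem (F.mono (by omega) hz')
        exact F.mono (by omega) this
      have := add_mem hxy this
      convert this using 1
      ring
  fin c := by
    have := F.fin c
    exact fixG_finite Φ hA _ (hspan c)
  finrank_eq c := by rw [fixG_finrank Φ hA _ (hspan c), F.finrank_eq]

theorem fix_dvd [IsDomain R] {a b : fix Φ hA} (hb : b ≠ 0) (h : (b : R) ∣ a) : b ∣ a := by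
  obtain ⟨w, hw⟩ := h
  have hb' : (b : R) ≠ 0 := fun h => hb (Subtype.ext h)
  refine ⟨⟨w, mul_left_cancel₀ hb' ?_⟩, Subtype.ext hw⟩
  rw [← hw]
  have := congrArg Φ hw
  rw [map_mul, b.2, a.2] at this
  exact this.symm

/-- Integral closedness, in denominator-free form, descends to the fixed ring. -/
theorem fix_isIntegrallyClosed [IsDomain R]
    (hR : ∀ (r f : R), f ≠ 0 → ∀ q : R[X], q.Monic → (q.scaleRoots f).eval r = 0 → f ∣ r) :
    IsIntegrallyClosed (fix Φ hA) := by
  rw [isIntegrallyClosed_iff (FractionRing (fix Φ hA))]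
  rintro x ⟨q, hq, hx⟩
  obtain ⟨a, b, hb, rfl⟩ := IsFractionRing.div_surjective (A := fix Φ hA) x
  have hb0 : b ≠ 0 := nonZeroDivisors.ne_zero hb
  have h1 : (q.scaleRoots b).eval a = 0 := by
    apply IsFractionRing.injective (fix Φ hA) (FractionRing (fix Φ hA))
    rw [map_zero, ← aeval_algebraMap_apply_eq_algebraMap_eval]
    exact scaleRoots_aeval_eq_zero_of_aeval_div_eq_zero (IsFractionRing.injective (fix Φ hA) (FractionRing (fix Φ hA))) hx hb
  have h2 : b ∣ a := by
    refine fix_dvd Φ hA hb0 (hR _ _ (fun h => hb0 (Subtype.ext h)) (q.map (fix Φ hA).val.toRingHom)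
      (hq.map _) ?_)
    have h3 := congrArg (fix Φ hA).val.toRingHom h1
    rw [← eval₂_at_apply, ← eval_map, map_scaleRoots _ _ _ (by rw [hq.leadingCoeff, map_one]; exact one_ne_zero),
      map_zero] at h3
    exact h3
  obtain ⟨w, rfl⟩ := h2
  refine ⟨w, ?_⟩
  rw [map_mul, mul_div_cancel_left₀]
  exact fun h => hb0 (IsFractionRing.injective (fix Φ hA) (FractionRing (fix Φ hA)) (by rw [h, map_zero]))
end Descent
end

/-! ### Points of the fixed ring -/

noncomputable section

namespace Descent
open Module TensorProduct
variable {p : ℕ} [Fact p.Prime] {A R : Type} [Field A] [CharP A p] [Algebra (ZMod p) A]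
  [CommRing R] [Algebra A R] [Algebra (ZMod p) R] [IsScalarTower (ZMod p) A R]
variable (Φ : R →+* R) (hA : ∀ a, Φ (algebraMap A R a) = algebraMap A R (a ^ p))

/-- Base change of the fixed ring to `A` recovers `R`, so `A`-points extend. -/
theorem exists_extension (hsp : ⊤ ≤ Submodule.span A {w | Φ w = w})
    (f : fix Φ hA →ₐ[ZMod p] A) : ∃ g : R →ₐ[A] A, ∀ r : fix Φ hA, g r = f r := by
  let μ : A ⊗[ZMod p] fix Φ hA →ₐ[A] R :=
    Algebra.TensorProduct.lift (Algebra.ofId A R) (fix Φ hA).val (fun _ _ => Commute.all _ _)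
  have hμ : ∀ a r, μ (a ⊗ₜ r) = a • (r : R) := fun a r => by
    rw [Algebra.TensorProduct.lift_tmul, Algebra.smul_def]; rfl
  have hinj : Function.Injective μ := by
    let b := Basis.ofVectorSpace (ZMod p) (fix Φ hA)
    have h1 : LinearIndependent (ZMod p) (fun i => (b i : R)) :=
      b.linearIndependent.map' (fix Φ hA).val.toLinearMap (LinearMap.ker_eq_bot.2 Subtype.val_injective)
    have h2 := fixed_linearIndependent Φ hA _ (fun i => (b i).2) h1
    have h3 : LinearIndependent A (μ.toLinearMap ∘ (b.baseChange A)) := by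
      convert h2 using 1
      ext i
      simp [hμ]
    exact LinearMap.injective_of_linearIndependent (b.baseChange A).span_eq h3
  have hsurj : Function.Surjective μ := by
    intro r
    have : Submodule.span A {w | Φ w = w} ≤ LinearMap.range μ.toLinearMap := by
      rw [Submodule.span_le]
      intro w hw
      exact ⟨1 ⊗ₜ ⟨w, hw⟩, by simpa using hμ 1 ⟨w, hw⟩⟩
    exact this (hsp trivial)
  let e := AlgEquiv.ofBijective μ ⟨hinj, hsurj⟩
  refine ⟨(Algebra.TensorProduct.lift (AlgHom.id A A) f (fun _ _ => Commute.all _ _)).comp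
    e.symm.toAlgHom, fun r => ?_⟩
  have : e.symm r = 1 ⊗ₜ r := by
    rw [AlgEquiv.symm_apply_eq]
    exact ((hμ 1 r).trans (one_smul _ _)).symm
  simp [this]

theorem semi_ext (hsp : ⊤ ≤ Submodule.span A {w | Φ w = w}) {D : Type*} [CommRing D] {f g : R →+* D}
    (h1 : ∀ a, f (algebraMap A R a) = g (algebraMap A R a)) (h2 : ∀ r, Φ r = r → f r = g r) : f = g := by
  ext r
  have hr : r ∈ Submodule.span A {w | Φ w = w} := hsp trivial
  induction hr using Submodule.closure_induction with
  | zero => simp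
  | add x y _ _ hx hy => rw [map_add, map_add, hx, hy]
  | smul_mem a x hx => rw [Algebra.smul_def, map_mul, map_mul, h1, h2 x hx]
end Descent
end

/-! ### The twisted curve over the prime field -/

noncomputable section

namespace Rb
open Module
variable {p : ℕ} [Fact p.Prime] {A : Type} [Field A] [CharP A p] [Algebra (ZMod p) A] [IsAlgClosed A]
 {N : A[X]} {n : ℕ} (hfr : N.map (frobenius A p) = N) (σ : Equiv.Perm (Fin n))

instance tower_zmod : IsScalarTower (ZMod p) A (Rb N n) := IsScalarTower.of_algebraMap_eq' rfl

/-- The Frobenius of the curve twisted by the permutation `σ` of the roots. -/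
def Fr : Rb N n →+* Rb N n := Phi (frobenius A p) hfr σ

theorem Fr_A (a : A) : Fr hfr σ (algebraMap A _ a) = algebraMap A _ (a ^ p) := by
  rw [Fr, Phi_A, frobenius_def]

theorem Fr_iter_A (k : ℕ) (a : A) :
    (Fr hfr σ)^[k] (algebraMap A _ a) = algebraMap A _ (a ^ p ^ k) := by
  induction k with
  | zero => simp
  | succ k ih => rw [Function.iterate_succ_apply', ih, Fr_A, ← pow_mul, pow_succ]

theorem Fr_iter_T (k : ℕ) : (Fr hfr σ)^[k] (T N n) = T N n := by
  induction k with
  | zero => rfl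
  | succ k ih => rw [Function.iterate_succ_apply', ih, Fr, Phi_T]

theorem Fr_iter_xx (k : ℕ) (i : Fin n) : (Fr hfr σ)^[k] (xx N n i) = xx N n ((σ ^ k) i) := by
  induction k with
  | zero => rfl
  | succ k ih => rw [Function.iterate_succ_apply', ih, Fr, Phi_xx, pow_succ']; rfl

/-- The twisted Frobenius has period `n` on the monomials, so `G c` is spanned by fixed vectors. -/
theorem Fr_span (hn : 2 ≤ n) (hσ : σ ^ n = 1) (c : ℕ) :
    G N n c ≤ Submodule.span A {w | w ∈ G N n c ∧ Fr hfr σ w = w} := by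
  conv_lhs => rw [G]
  rw [Submodule.span_le]
  rintro r ⟨i, b, h, rfl⟩
  refine Descent.mem_span_fixed _ (Fr_A hfr σ) hn _ (fun r hr => Phi_mem_G _ _ _ hr)
    (mono_mem_G i b c h) ?_
  rw [← RingHom.coe_pow, map_mul, map_pow, map_prod, RingHom.coe_pow, Fr_iter_T]
  congr 1
  refine Finset.prod_congr rfl fun l _ => ?_
  rw [← RingHom.coe_pow, map_pow, RingHom.coe_pow, Fr_iter_xx, hσ]
  rfl

theorem Fr_span_top (hn : 2 ≤ n) (hσ : σ ^ n = 1) :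
    ⊤ ≤ Submodule.span A {w : Rb N n | Fr hfr σ w = w} := by
  intro r _
  obtain ⟨c, hc⟩ := exists_mem_G r
  exact Submodule.span_mono (fun w hw => hw.2) (Fr_span hfr σ hn hσ c hc)

/-- Coordinate ring of the twisted curve over the prime field. -/
abbrev Rσ : Subalgebra (ZMod p) (Rb N n) := Descent.fix (Fr hfr σ) (Fr_A hfr σ)

/-- The weight filtration of the twisted coordinate ring. -/
def filtσ (hN : MorseData N n) (hσ : σ ^ n = 1) : Filt (ZMod p) (Rσ hfr σ) n :=
  Descent.fixFilt (Fr hfr σ) (Fr_A hfr σ) hN.two_le (filt hN) (fun _ _ hr => Phi_mem_G _ _ _ hr)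
    (Phi_T _ _ _) (Fr_span hfr σ hN.two_le hσ)

theorem Rσ_isIntegrallyClosed (hN : MorseData N n) : IsIntegrallyClosed (Rσ hfr σ) := by
  have := isDomain hN
  exact Descent.fix_isIntegrallyClosed _ _ (dvd_of_scaleRoots hN)

theorem Rσ_isDomain (hN : MorseData N n) : IsDomain (Rσ hfr σ) := by
  have := isDomain hN
  infer_instance

/-- Points of the twisted curve over the field with `p ^ k` elements. -/
theorem card_points (hn : 2 ≤ n) (hσ : σ ^ n = 1) (k : ℕ) :
    Set.ncard {f : Rσ hfr σ →ₐ[ZMod p] A | ∀ r, f r ^ p ^ k = f r} =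
      (Sk p N n k (σ ^ k)).ncard := by
  have key : ∀ y (hy : Pt N n y), (∀ i, y i ^ p ^ k = y ((σ ^ k) i)) ↔
      ∀ r : Rσ hfr σ, (pointHom y hy r) ^ p ^ k = pointHom y hy r := by
    intro y hy
    have hfix : ∀ r, Fr hfr σ r = r → (Fr hfr σ)^[k] r = r := fun r hr =>
      Function.iterate_fixed hr k
    constructor
    · intro h r
      have e : (iterateFrobenius A p k).comp (pointHom y hy).toRingHom =
          (pointHom y hy).toRingHom.comp (Fr hfr σ ^ k) := by
        apply hom_ext
        · intro c
          simp [RingHom.coe_pow, Fr_iter_A, iterateFrobenius_def]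
        · have := frob_b hfr (k := k) (τ := σ ^ k) h (pointHom_T y hy)
          simp [RingHom.coe_pow, Fr_iter_T, iterateFrobenius_def, this]
        · intro i
          simp [RingHom.coe_pow, Fr_iter_xx, iterateFrobenius_def, pointHom_xx, h]
      have := congrArg (fun f => f (r : Rb N n)) e
      simpa [RingHom.coe_pow, iterateFrobenius_def, hfix _ r.2] using this
    · intro h i
      have e : (iterateFrobenius A p k).comp (pointHom y hy).toRingHom =
          (pointHom y hy).toRingHom.comp (Fr hfr σ ^ k) := by
        apply Descent.semi_ext (Fr hfr σ) (Fr_span_top hfr σ hn hσ)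
        · intro c
          simp [RingHom.coe_pow, Fr_iter_A, iterateFrobenius_def]
        · intro r hr
          simpa [RingHom.coe_pow, iterateFrobenius_def, hfix r hr] using h ⟨r, hr⟩
      have := congrArg (fun f => f (xx N n i)) e
      simpa [iterateFrobenius_def, RingHom.coe_pow, Fr_iter_xx, pointHom_xx] using this
  symm
  refine Set.ncard_congr (fun y hy => ((pointHom y hy.1).restrictScalars (ZMod p)).comp (Rσ hfr σ).val)
    ?_ ?_ ?_
  · intro y hy
    exact (key y hy.1).1 hy.2
  · intro y z hy hz h
    have e : (pointHom y hy.1).toRingHom = (pointHom z hz.1).toRingHom := by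
      apply Descent.semi_ext (Fr hfr σ) (Fr_span_top hfr σ hn hσ)
      · intro a; simp
      · intro r hr
        exact congrArg (fun f => f (⟨r, hr⟩ : Rσ hfr σ)) h
    ext i
    rw [← pointHom_xx y hy.1, ← pointHom_xx z hz.1]
    exact congrArg (fun f => f (xx N n i)) e
  · intro f hf
    obtain ⟨g, hg⟩ := Descent.exists_extension _ _ (Fr_span_top hfr σ hn hσ) f
    set y : Fin n → A := fun i => g (xx N n i)
    have hy : Pt N n y := ⟨g (T N n), by
      have := congrArg (Polynomial.map g.toRingHom) (prod_xx (N := N) (n := n))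
      rw [Polynomial.map_add, Polynomial.map_map, map_C, Polynomial.map_prod] at this
      simp only [Polynomial.map_sub, map_X, map_C] at this
      have e : g.toRingHom.comp (algebraMap A (Rb N n)) = RingHom.id A := by ext; simp
      rw [e, Polynomial.map_id] at this
      exact this⟩
    have e : (pointHom y hy).toRingHom = g.toRingHom := by
      apply hom_ext
      · intro c; simp
      · have h1 := pointHom_T y hy
        have h2 : ∏ i, (X - C (y i)) = N + C (g (T N n)) := by
          have := congrArg (Polynomial.map g.toRingHom) (prod_xx (N := N) (n := n))
          rw [Polynomial.map_add, Polynomial.map_map, map_C, Polynomial.map_prod] at this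
          simp only [Polynomial.map_sub, map_X, map_C] at this
          have e : g.toRingHom.comp (algebraMap A (Rb N n)) = RingHom.id A := by ext; simp
          rw [e, Polynomial.map_id] at this
          exact this
        rw [h1] at h2
        exact C_injective (add_left_cancel h2)
      · intro i; exact pointHom_xx y hy i
    have e' : ∀ r, pointHom y hy r = g r := fun r => congrArg (fun f => f r) e
    refine ⟨y, ⟨hy, (key y hy).2 fun r => ?_⟩, ?_⟩
    · rw [e', hg]; exact hf r
    · ext r
      change pointHom y hy r = f r
      rw [e', hg]
end Rb
end

noncomputable section

/-! ### Ideals of a Dedekind domain over a prime field -/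

namespace Zeta
open Module UniqueFactorizationMonoid
variable (p : ℕ) [Fact p.Prime] {R : Type} [CommRing R] [IsDedekindDomain R] [Algebra (ZMod p) R]
  [Ring.HasFiniteQuotients R]

/-- The degree of an ideal: the dimension of its residue ring. -/
def deg (I : Ideal R) : ℕ := finrank (ZMod p) (R ⧸ I)

theorem finite_quot {I : Ideal R} (hI : I ≠ ⊥) : Module.Finite (ZMod p) (R ⧸ I) := by
  have := Ring.HasFiniteQuotients.finiteQuotient hI
  exact Module.Finite.of_finite

theorem cardQuot_eq {I : Ideal R} (hI : I ≠ ⊥) : Submodule.cardQuot I = p ^ deg p I := by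
  have := finite_quot p hI
  rw [Submodule.cardQuot_apply, deg, Module.natCard_eq_pow_finrank (K := ZMod p), Nat.card_zmod]

theorem cardQuot_mul' [Infinite R] (I J : Ideal R) :
    Submodule.cardQuot (I * J) = Submodule.cardQuot I * Submodule.cardQuot J :=
  UniqueFactorizationMonoid.multiplicative_of_coprime Submodule.cardQuot I J
      (Submodule.cardQuot_bot _ _)
      (fun {I J} hI => by simp [Ideal.isUnit_iff.mp hI, Ideal.mul_top])
      (fun {I} i hI =>
        have : Ideal.IsPrime I := Ideal.isPrime_of_prime hI
        cardQuot_pow_of_prime hI.ne_zero)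
      fun {I J} hIJ => cardQuot_mul_of_coprime <| Ideal.isCoprime_iff_sup_eq.mpr
        (Ideal.isUnit_iff.mp
          (hIJ (Ideal.dvd_iff_le.mpr le_sup_left) (Ideal.dvd_iff_le.mpr le_sup_right)))

theorem deg_mul [Infinite R] {I J : Ideal R} (hI : I ≠ ⊥) (hJ : J ≠ ⊥) :
    deg p (I * J) = deg p I + deg p J := by
  have h := cardQuot_mul' I J
  rw [cardQuot_eq p hI, cardQuot_eq p hJ, cardQuot_eq p (mul_ne_zero hI hJ), ← pow_add] at h
  exact Nat.pow_right_injective (Fact.out : p.Prime).two_le h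

theorem deg_one : deg p (1 : Ideal R) = 0 := by
  have : Subsingleton (R ⧸ (1 : Ideal R)) := Ideal.Quotient.subsingleton_iff.2 Ideal.one_eq_top
  exact finrank_zero_of_subsingleton

theorem deg_pow [Infinite R] {I : Ideal R} (hI : I ≠ ⊥) (j : ℕ) : deg p (I ^ j) = j * deg p I := by
  induction j with
  | zero => rw [pow_zero, deg_one, zero_mul]
  | succ j ih => rw [pow_succ, deg_mul p (pow_ne_zero j hI) hI, ih, add_mul, one_mul]

theorem deg_pos {I : Ideal R} (hI : I ≠ ⊥) (h : I ≠ ⊤) : 0 < deg p I := by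
  have := finite_quot p hI
  have : Nontrivial (R ⧸ I) := Ideal.Quotient.nontrivial_iff.2 h
  exact finrank_pos

theorem eq_one_of_deg {I : Ideal R} (hI : I ≠ ⊥) (h : deg p I = 0) : I = 1 := by
  by_contra h1
  exact (deg_pos p hI (by rwa [← Ideal.one_eq_top])).ne' h

theorem deg_prod [Infinite R] (s : Multiset (Ideal R)) (hs : ∀ I ∈ s, I ≠ ⊥) :
    deg p s.prod = (s.map (deg p)).sum := by
  induction s using Multiset.induction with
  | empty => rw [Multiset.prod_zero, deg_one, Multiset.map_zero, Multiset.sum_zero]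
  | cons I s ih =>
    have h1 : ∀ J ∈ s, J ≠ ⊥ := fun J hJ => hs J (Multiset.mem_cons_of_mem hJ)
    rw [Multiset.prod_cons, Multiset.map_cons, Multiset.sum_cons,
      deg_mul p (hs I (Multiset.mem_cons_self _ _)) (Multiset.prod_ne_zero fun h => h1 _ h rfl), ih h1]

variable (R) in
theorem finite_deg_le (d : ℕ) : {I : Ideal R | I ≠ ⊥ ∧ deg p I ≤ d}.Finite :=
  (Ring.HasFiniteQuotients.finite_cardQuot_le (R := R) (p ^ d)).subset fun I hI => by
    rw [Set.mem_ofPred_eq, cardQuot_eq p hI.1]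
    exact Nat.pow_le_pow_right (Fact.out : p.Prime).pos hI.2

variable (R) in
/-- The ideals of degree at most `d`. -/
def ILE (d : ℕ) : Finset (Ideal R) := (finite_deg_le p R d).toFinset

theorem mem_ILE {d : ℕ} {I : Ideal R} : I ∈ ILE p R d ↔ I ≠ ⊥ ∧ deg p I ≤ d := by simp [ILE]

open Classical in
variable (R) in
/-- The ideals of degree `d`. -/
def IS (d : ℕ) : Finset (Ideal R) := (ILE p R d).filter fun I => deg p I = d

theorem mem_IS {d : ℕ} {I : Ideal R} : I ∈ IS p R d ↔ I ≠ ⊥ ∧ deg p I = d := by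
  simp only [IS, Finset.mem_filter, mem_ILE]
  constructor
  · rintro ⟨⟨h, -⟩, h2⟩; exact ⟨h, h2⟩
  · rintro ⟨h, h2⟩; exact ⟨⟨h, h2.le⟩, h2⟩

open Classical in
variable (R) in
/-- The nonzero primes of degree at most `d`. -/
def PR (d : ℕ) : Finset (Ideal R) := (ILE p R d).filter fun I => Prime I

theorem mem_PR {d : ℕ} {P : Ideal R} : P ∈ PR p R d ↔ Prime P ∧ deg p P ≤ d := by
  simp only [PR, Finset.mem_filter, mem_ILE]
  constructor
  · rintro ⟨⟨h, h1⟩, h2⟩; exact ⟨h2, h1⟩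
  · rintro ⟨h, h2⟩; exact ⟨⟨h.ne_zero, h2⟩, h⟩

theorem deg_prime_pos {P : Ideal R} (h : Prime P) : 0 < deg p P :=
  deg_pos p h.ne_zero (fun h1 => h.not_isUnit (Ideal.isUnit_iff.2 h1))

theorem IS_zero : IS p R 0 = {1} := by
  ext I
  rw [mem_IS, Finset.mem_singleton]
  constructor
  · rintro ⟨h, h1⟩; exact eq_one_of_deg p h h1
  · rintro rfl; exact ⟨one_ne_zero, deg_one p⟩

theorem deg_le_of_dvd [Infinite R] {I J : Ideal R} (hJ : J ≠ ⊥) (h : I ∣ J) : deg p I ≤ deg p J := by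
  obtain ⟨K, rfl⟩ := h
  rw [deg_mul p (left_ne_zero_of_mul hJ) (right_ne_zero_of_mul hJ)]
  exact Nat.le_add_right _ _

open Classical in
theorem deg_eq_sum [Infinite R] {d : ℕ} {I : Ideal R} (hI : I ∈ IS p R d) :
    d = ∑ P ∈ PR p R d, ∑ j ∈ Finset.Icc 1 d, if P ^ j ∣ I then deg p P else 0 := by
  rw [mem_IS] at hI
  obtain ⟨h0, hd⟩ := hI
  have hsub : (normalizedFactors I).toFinset ⊆ PR p R d := by
    intro P hP
    rw [Multiset.mem_toFinset] at hP
    rw [mem_PR]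
    exact ⟨prime_of_normalized_factor _ hP, hd ▸ deg_le_of_dvd p h0 (dvd_of_mem_normalizedFactors hP)⟩
  have h1 : d = ∑ P ∈ PR p R d, (normalizedFactors I).count P * deg p P := by
    conv_lhs => rw [← hd, ← Ideal.prod_normalizedFactors_eq_self h0,
      deg_prod p _ (fun P hP => (prime_of_normalized_factor _ hP).ne_zero), Finset.sum_multiset_map_count]
    refine Finset.sum_subset hsub fun P _ hP => ?_
    rw [Multiset.mem_toFinset] at hP
    rw [Multiset.count_eq_zero_of_notMem hP, smul_eq_mul, zero_mul]
  conv_lhs => rw [h1]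
  refine Finset.sum_congr rfl fun P hP => ?_
  rw [mem_PR] at hP
  have hpos := deg_prime_pos p hP.1
  have hiff : ∀ j, P ^ j ∣ I ↔ j ≤ (normalizedFactors I).count P := fun j => by
    rw [pow_dvd_iff_le_emultiplicity, emultiplicity_eq_count_normalizedFactors hP.1.irreducible h0,
      normalize_eq]
    exact Nat.cast_le
  have hle : (normalizedFactors I).count P ≤ d := by
    have := deg_le_of_dvd p h0 ((hiff _).2 le_rfl)
    rw [deg_pow p hP.1.ne_zero, hd] at this
    exact (Nat.le_mul_of_pos_right _ hpos).trans this
  simp only [hiff]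
  rw [← Finset.sum_filter, Finset.sum_const, smul_eq_mul]
  congr 1
  have : (Finset.Icc 1 d).filter (fun j => j ≤ (normalizedFactors I).count P) =
      Finset.Icc 1 ((normalizedFactors I).count P) := by
    ext j; simp only [Finset.mem_filter, Finset.mem_Icc]; omega
  rw [this]; simp

open Classical in
theorem card_multiples [Infinite R] {d : ℕ} {Q : Ideal R} (hQ : Q ≠ ⊥) (h : deg p Q ≤ d) :
    ((IS p R d).filter fun I => Q ∣ I).card = (IS p R (d - deg p Q)).card := by
  symm
  refine Finset.card_bij (fun I _ => Q * I) ?_ ?_ ?_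
  · intro I hI
    rw [mem_IS] at hI
    rw [Finset.mem_filter, mem_IS]
    exact ⟨⟨mul_ne_zero hQ hI.1, by rw [deg_mul p hQ hI.1, hI.2]; omega⟩, dvd_mul_right _ _⟩
  · intro I _ J _ h
    exact mul_left_cancel₀ hQ h
  · intro I hI
    rw [Finset.mem_filter, mem_IS] at hI
    obtain ⟨⟨h0, h1⟩, J, rfl⟩ := hI
    have hJ := right_ne_zero_of_mul h0
    refine ⟨J, mem_IS p |>.2 ⟨hJ, ?_⟩, rfl⟩
    rw [deg_mul p hQ hJ] at h1
    omega

open Classical in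
variable (R) in
/-- Weighted count of primes whose degree divides `k`. -/
def NN (k : ℕ) : ℕ := ∑ P ∈ (PR p R k).filter (fun P => deg p P ∣ k), deg p P

open Classical in
/-- The logarithmic derivative of the Euler product. -/
theorem euler [Infinite R] (d : ℕ) :
    d * (IS p R d).card = ∑ k ∈ Finset.Icc 1 d, NN p R k * (IS p R (d - k)).card := by
  have h1 : d * (IS p R d).card = ∑ I ∈ IS p R d, ∑ P ∈ PR p R d, ∑ j ∈ Finset.Icc 1 d,
      if P ^ j ∣ I then deg p P else 0 := by
    rw [← Finset.sum_congr rfl fun I hI => deg_eq_sum p hI, Finset.sum_const, smul_eq_mul, mul_comm]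
  rw [h1, Finset.sum_comm]
  have h2 : ∀ P ∈ PR p R d, ∑ I ∈ IS p R d, ∑ j ∈ Finset.Icc 1 d, (if P ^ j ∣ I then deg p P else 0) =
      ∑ k ∈ Finset.Icc 1 d, if deg p P ∣ k then deg p P * (IS p R (d - k)).card else 0 := by
    intro P hP
    rw [mem_PR] at hP
    have hpos := deg_prime_pos p hP.1
    rw [Finset.sum_comm]
    have h3 : ∀ j ∈ Finset.Icc 1 d, ∑ I ∈ IS p R d, (if P ^ j ∣ I then deg p P else 0) =
        if j * deg p P ≤ d then deg p P * (IS p R (d - j * deg p P)).card else 0 := by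
      intro j _
      rw [← Finset.sum_filter, Finset.sum_const, smul_eq_mul, mul_comm]
      split_ifs with h
      · rw [card_multiples p (pow_ne_zero j hP.1.ne_zero) (by rwa [deg_pow p hP.1.ne_zero]),
          deg_pow p hP.1.ne_zero]
      · rw [Finset.filter_false_of_mem, Finset.card_empty, mul_zero]
        intro I hI hd
        rw [mem_IS] at hI
        have := deg_le_of_dvd p hI.1 hd
        rw [deg_pow p hP.1.ne_zero] at this
        omega
    rw [Finset.sum_congr rfl h3, ← Finset.sum_filter, ← Finset.sum_filter]
    refine Finset.sum_bij (fun j _ => j * deg p P) ?_ ?_ ?_ ?_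
    · intro j hj
      simp only [Finset.mem_filter, Finset.mem_Icc] at hj ⊢
      have := Nat.mul_pos hj.1.1 hpos
      exact ⟨⟨this, hj.2⟩, Dvd.intro_left _ rfl⟩
    · intro a _ b _ h
      exact Nat.eq_of_mul_eq_mul_right hpos h
    · intro k hk
      simp only [Finset.mem_filter, Finset.mem_Icc] at hk
      obtain ⟨⟨h1, h2⟩, j, rfl⟩ := hk
      refine ⟨j, ?_, mul_comm _ _⟩
      simp only [Finset.mem_filter, Finset.mem_Icc]
      refine ⟨⟨Nat.pos_of_mul_pos_left h1, (Nat.le_mul_of_pos_left _ hpos).trans h2⟩, by rwa [mul_comm]⟩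
    · intro j _; rfl
  rw [Finset.sum_congr rfl h2, Finset.sum_comm]
  refine Finset.sum_congr rfl fun k hk => ?_
  rw [Finset.mem_Icc] at hk
  rw [NN, Finset.sum_mul, ← Finset.sum_filter]
  refine Finset.sum_congr ?_ fun _ _ => rfl
  ext P
  simp only [Finset.mem_filter, mem_PR]
  constructor
  · rintro ⟨⟨h1, h2⟩, h3⟩
    exact ⟨⟨h1, Nat.le_of_dvd (by omega) h3⟩, h3⟩
  · rintro ⟨⟨h1, h2⟩, h3⟩
    exact ⟨⟨h1, by omega⟩, h3⟩
end Zeta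
end

/-! ### Points and primes -/

noncomputable section

namespace Zeta
open Module
variable (p : ℕ) [Fact p.Prime] {R : Type} [CommRing R] [IsDedekindDomain R] [Algebra (ZMod p) R]
  [Ring.HasFiniteQuotients R] {A : Type} [Field A] [Algebra (ZMod p) A] [IsAlgClosed A]

/-- A prime of degree `d` is the kernel of exactly `d` points over the algebraic closure. -/
theorem card_homs_ker {P : Ideal R} (hP : Prime P) :
    {f : R →ₐ[ZMod p] A | RingHom.ker f = P}.ncard = deg p P := by
  have hprime : P.IsPrime := Ideal.isPrime_of_prime hP
  have hmax : P.IsMaximal := hprime.isMaximal hP.ne_zero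
  letI := Ideal.Quotient.field P
  have := finite_quot p hP.ne_zero
  have : Finite (R ⧸ P) := Ring.HasFiniteQuotients.finiteQuotient hP.ne_zero
  have h1 := AlgHom.natCard_of_splits (ZMod p) (R ⧸ P) A (fun _ => IsAlgClosed.splits _)
  rw [deg, ← h1, ← Nat.card_coe_set_eq]
  refine Nat.card_congr ⟨fun f => Ideal.Quotient.liftₐ P f.1 (fun a ha => ?_),
    fun g => ⟨g.comp (Ideal.Quotient.mkₐ (ZMod p) P), ?_⟩, ?_, ?_⟩
  · have h2 : RingHom.ker f.1 = P := f.2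
    rw [← h2] at ha; exact ha
  · change RingHom.ker _ = P
    ext r
    rw [RingHom.mem_ker, AlgHom.comp_apply, map_eq_zero_iff g (RingHom.injective g.toRingHom)]
    exact Ideal.Quotient.eq_zero_iff_mem
  · intro f; ext r; rfl
  · intro g
    apply Ideal.Quotient.algHom_ext
    ext r; rfl

/-- The residue field of `P` embeds in the field with `p ^ k` elements exactly when its degree divides
`k`. -/
theorem deg_dvd_iff {P : Ideal R} (hP : Prime P) (k : ℕ) :
    deg p P ∣ k ↔ ∀ r : R ⧸ P, r ^ p ^ k = r := by
  have hprime : P.IsPrime := Ideal.isPrime_of_prime hP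
  have hmax : P.IsMaximal := hprime.isMaximal hP.ne_zero
  letI := Ideal.Quotient.field P
  have := finite_quot p hP.ne_zero
  have : Finite (R ⧸ P) := Ring.HasFiniteQuotients.finiteQuotient hP.ne_zero
  have h := FiniteField.orderOf_frobeniusAlgHom (ZMod p) (R ⧸ P)
  rw [deg, ← h, orderOf_dvd_iff_pow_eq_one]
  have h2 : ∀ r, (FiniteField.frobeniusAlgHom (ZMod p) (R ⧸ P) ^ k) r = r ^ p ^ k := by
    intro r
    induction k generalizing r with
    | zero => simp
    | succ k ih => rw [pow_succ, AlgHom.mul_apply, ih, FiniteField.frobeniusAlgHom_apply, ZMod.card,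
        ← pow_mul, pow_succ']
  constructor
  · intro h r
    rw [← h2, h]; rfl
  · intro h
    ext r
    rw [h2, h]; rfl

/-- The weighted prime count is the number of points over the field with `p ^ k` elements. -/
theorem NN_eq [Infinite R] {k : ℕ} (hk : 0 < k) :
    NN p R k = {f : R →ₐ[ZMod p] A | ∀ r, f r ^ p ^ k = f r}.ncard := by
  classical
  set S := {f : R →ₐ[ZMod p] A | ∀ r, f r ^ p ^ k = f r}
  set Q := (PR p R k).filter (fun P => deg p P ∣ k)
  have hQ : ∀ P ∈ Q, Prime P := fun P hP => ((mem_PR p).1 (Finset.mem_filter.1 hP).1).1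
  have hker : ∀ f ∈ S, RingHom.ker f ∈ Q := by
    intro f hf
    have hpr : (RingHom.ker f).IsPrime := RingHom.ker_isPrime _
    have h0 : RingHom.ker f ≠ ⊥ := by
      intro h
      have hinj : Function.Injective f := (RingHom.injective_iff_ker_eq_bot f.toRingHom).2 h
      have h1 : (X ^ p ^ k - X : A[X]) ≠ 0 :=
        FiniteField.X_pow_card_sub_X_ne_zero A (Nat.one_lt_pow hk.ne' (Fact.out : p.Prime).one_lt)
      have h2 : Set.range f ⊆ {a | a ∈ (X ^ p ^ k - X : A[X]).roots.toFinset} := by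
        rintro _ ⟨r, rfl⟩
        rw [Set.mem_ofPred_eq, Multiset.mem_toFinset, mem_roots h1]
        simpa [sub_eq_zero] using hf r
      exact (Set.infinite_range_of_injective hinj) ((Finset.finite_toSet _).subset h2)
    have hP := Ideal.prime_of_isPrime h0 hpr
    have hd : deg p (RingHom.ker f) ∣ k := by
      rw [deg_dvd_iff p hP]
      intro r
      obtain ⟨r, rfl⟩ := Ideal.Quotient.mk_surjective r
      rw [← map_pow, Ideal.Quotient.eq, RingHom.mem_ker, map_sub, map_pow, hf, sub_self]
    exact Finset.mem_filter.2 ⟨(mem_PR p).2 ⟨hP, Nat.le_of_dvd hk hd⟩, hd⟩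
  have hmem : ∀ f : R →ₐ[ZMod p] A, RingHom.ker f ∈ Q → f ∈ S := by
    intro f hf r
    have hd := (Finset.mem_filter.1 hf).2
    rw [deg_dvd_iff p (hQ _ hf)] at hd
    have := hd (Ideal.Quotient.mk _ r)
    rw [← map_pow, Ideal.Quotient.eq, RingHom.mem_ker, map_sub, map_pow, sub_eq_zero] at this
    exact this
  have hfinP : ∀ P ∈ Q, {f : R →ₐ[ZMod p] A | RingHom.ker f = P}.Finite := fun P hP =>
    Set.finite_of_ncard_pos (by rw [card_homs_ker p (hQ P hP)]; exact deg_prime_pos p (hQ P hP))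
  have hfin : S.Finite := (Q.finite_toSet.biUnion hfinP).subset fun f hf => by
    simp only [Set.mem_iUnion]
    exact ⟨_, hker f hf, rfl⟩
  rw [Set.ncard_eq_toFinset_card S hfin, Finset.card_eq_sum_card_fiberwise
    (f := fun f : R →ₐ[ZMod p] A => RingHom.ker f) (t := Q)
    (fun f hf => hker f (hfin.mem_toFinset.1 hf)), NN]
  refine Finset.sum_congr rfl fun P hP => ?_
  rw [← card_homs_ker p (A := A) (hQ P hP), Set.ncard_eq_toFinset_card _ (hfinP P hP)]
  congr 1
  ext f
  simp only [Set.Finite.mem_toFinset, Finset.mem_filter]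
  constructor
  · intro h
    have h' : RingHom.ker f = P := h
    exact ⟨hmem f (by rw [h']; exact hP), h⟩
  · exact fun h => h.2
end Zeta
end

noncomputable section

/-! ### The functional equation for the number of ideals of given degree -/

namespace Filt
open Module
variable {p : ℕ} [Fact p.Prime] {R : Type} [CommRing R] [IsDomain R] [Algebra (ZMod p) R] {n : ℕ}
  (F : Filt (ZMod p) R n)

include F in
theorem hasFiniteQuotients (hn : 2 ≤ n) : Ring.HasFiniteQuotients R := by
  refine ⟨fun {I} hI => ?_⟩
  obtain ⟨u, huI, hu⟩ := Submodule.exists_mem_ne_zero_of_ne_bot hI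
  obtain ⟨c, hc⟩ := F.exh u
  have h1 := (F.finrank_quot_le (by omega) hu (F.mono (Nat.le_succ c) hc)).1
  have : Finite (R ⧸ Ideal.span {u}) := Module.finite_of_finite (ZMod p)
  exact Finite.of_surjective _ (Ideal.Quotient.factor_surjective
    ((Ideal.span_singleton_le_iff_mem I).2 huI))

include F in
theorem infinite (hn : 2 ≤ n) : Infinite R := by
  by_contra h
  rw [not_infinite_iff_finite] at h
  have key : ∀ m, 0 < m → m ≤ Nat.card R := fun m hm => by
    have h1 : finrank (ZMod p) (R ⧸ Ideal.span {F.T ^ m}) = m * n.factorial :=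
      IsTop.finrank_quot (F := F) (by omega) hm (by simp [IsTop])
    have h2 : Nat.card (R ⧸ Ideal.span {F.T ^ m}) ≤ Nat.card R :=
      Nat.card_le_card_of_surjective _ Ideal.Quotient.mk_surjective
    rw [Module.natCard_eq_pow_finrank (K := ZMod p), Nat.card_zmod, h1] at h2
    have h3 := Nat.lt_pow_self (Fact.out : p.Prime).one_lt (n := m * n.factorial)
    have h4 := Nat.le_mul_of_pos_right m n.factorial_pos
    omega
  have := key (Nat.card R + 1) (by omega)
  omega

include F in
/-- Proper quotients are finite, hence the dimension is at most one and the ring is Noetherian. -/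
theorem isDedekindDomain [IsIntegrallyClosed R] (hn : 2 ≤ n) : IsDedekindDomain R := by
  have := F.hasFiniteQuotients hn
  have h1 : IsNoetherianRing R := inferInstance
  have h2 : Ring.DimensionLEOne R := inferInstance
  have h3 : IsDedekindRing R := { }
  exact { }

theorem finite_tops (m : ℕ) : {h | F.IsTop m h}.Finite := by
  have := F.fin (m * n)
  have : Finite (F.G (m * n)) := Module.finite_of_finite (ZMod p)
  have h1 : ((F.G (m * n) : Set R)).Finite := Set.toFinite _
  refine Set.Finite.of_finite_image (f := fun h => h - F.T ^ m) (h1.subset ?_) ?_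
  · rintro _ ⟨h, hh, rfl⟩; exact hh
  · intro a _ b _ h; simpa using h

/-- The elements with leading part `T ^ m`, as a finite set. -/
def tops (m : ℕ) : Finset R := (F.finite_tops m).toFinset

theorem mem_tops {m : ℕ} {h : R} : h ∈ F.tops m ↔ F.IsTop m h := by simp [tops]

open Classical in
/-- Elements with leading part `T ^ m` are equidistributed modulo `J` when `m` is large. -/
theorem card_tops_mem (hn : 2 ≤ n) (J : Ideal R) [Module.Finite (ZMod p) (R ⧸ J)] {m : ℕ}
    (hm : finrank (ZMod p) (R ⧸ J) + (n.factorial * (2 * n - 3) + 1) ≤ m * n.factorial) :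
    ((F.tops m).filter fun h => h ∈ J).card * p ^ finrank (ZMod p) (R ⧸ J)
      = p ^ finrank (ZMod p) (F.G (m * n)) := by
  have := F.fin (m * n)
  let φ : F.G (m * n) →ₗ[ZMod p] R ⧸ J :=
    (Ideal.Quotient.mkₐ (ZMod p) J).toLinearMap.comp (F.G (m * n)).subtype
  have hφ : ∀ g, φ g = Ideal.Quotient.mk J g := fun g => rfl
  have hsurj : Function.Surjective φ := fun x => by
    obtain ⟨r, rfl⟩ := Ideal.Quotient.mk_surjective x
    obtain ⟨g, hg, h⟩ := F.sup_eq_top hn J hm r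
    exact ⟨⟨g, hg⟩, ((Ideal.Quotient.eq).2 h).symm⟩
  obtain ⟨g0, hg0⟩ := hsurj (Ideal.Quotient.mk J (-F.T ^ m))
  have hk : finrank (ZMod p) (R ⧸ J) + finrank (ZMod p) (LinearMap.ker φ)
      = finrank (ZMod p) (F.G (m * n)) := by
    rw [← LinearMap.finrank_range_add_finrank_ker φ, LinearMap.range_eq_top.2 hsurj, finrank_top]
  have hc : ((F.tops m).filter fun h => h ∈ J).card = Nat.card (LinearMap.ker φ) := by
    rw [← Nat.card_eq_finsetCard]
    have hmem : ∀ h : R, h ∈ (F.tops m).filter (fun h => h ∈ J) ↔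
        h - F.T ^ m ∈ F.G (m * n) ∧ h ∈ J := fun h => by
      rw [Finset.mem_filter, mem_tops]; rfl
    refine Nat.card_congr ⟨fun h => ⟨⟨h - F.T ^ m, ((hmem h).1 h.2).1⟩ - g0, ?_⟩,
      fun g => ⟨(g.1 + g0 : R) + F.T ^ m, ?_⟩, fun h => ?_, fun g => ?_⟩
    · rw [LinearMap.mem_ker, map_sub, hg0, hφ, ← map_sub, Ideal.Quotient.eq_zero_iff_mem]
      convert ((hmem h).1 h.2).2 using 1; simp
    · rw [hmem]
      have h1 := g.2
      rw [LinearMap.mem_ker, hφ] at h1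
      refine ⟨by simpa using (g.1 + g0).2, ?_⟩
      rw [← Ideal.Quotient.eq_zero_iff_mem, map_add, map_add, h1, ← hφ, hg0, map_neg]
      simp
    · apply Subtype.ext; simp
    · apply Subtype.ext; apply Subtype.ext; simp
  rw [hc, Module.natCard_eq_pow_finrank (K := ZMod p), Nat.card_zmod, ← pow_add, ← hk, add_comm]

variable [IsDedekindDomain R] [Ring.HasFiniteQuotients R] [Infinite R]
open Zeta

include F in
open Classical in
/-- The pairs of an element `h` with leading part `T ^ m` and a divisor `J` of `(h)` of degree `d` are
counted in two ways; the complementary divisor `(h) / J` has degree `d'`. -/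
theorem card_symm (hn : 2 ≤ n) {m d d' : ℕ} (h : d + d' = m * n.factorial)
    (hd : n.factorial * (2 * n - 3) + 1 ≤ d) (hd' : n.factorial * (2 * n - 3) + 1 ≤ d') :
    (IS p R d').card * p ^ d = (IS p R d).card * p ^ d' := by
  have hm : 0 < m := by
    rcases Nat.eq_zero_or_pos m with rfl | h1
    · simp at h; omega
    · exact h1
  set r := finrank (ZMod p) (F.G (m * n))
  have hcount : ∀ {a b : ℕ}, a + b = m * n.factorial → n.factorial * (2 * n - 3) + 1 ≤ a →
      (∑ J ∈ IS p R b, ((F.tops m).filter fun h => h ∈ J).card) * p ^ b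
        = (IS p R b).card * p ^ r := by
    intro a b hab ha
    rw [Finset.sum_mul, Finset.sum_const_nat]
    intro J hJ
    rw [mem_IS] at hJ
    have := finite_quot p hJ.1
    have hdeg : finrank (ZMod p) (R ⧸ J) = b := hJ.2
    have := F.card_tops_mem hn J (m := m) (by rw [hdeg]; omega)
    rwa [hdeg] at this
  have hswap : ∀ b, ∑ J ∈ IS p R b, ((F.tops m).filter fun h => h ∈ J).card
      = ∑ h ∈ F.tops m, ((IS p R b).filter fun J => J ∣ Ideal.span {h}).card := by
    intro b
    simp_rw [Finset.card_filter]
    rw [Finset.sum_comm]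
    simp only [Ideal.dvd_span_singleton]
  -- sending a divisor of `(h)` to the complementary divisor is injective
  have hcompl : ∀ {a b : ℕ}, a + b = m * n.factorial → ∀ h ∈ F.tops m,
      ((IS p R b).filter fun J => J ∣ Ideal.span {h}).card
        ≤ ((IS p R a).filter fun J => J ∣ Ideal.span {h}).card := by
    intro a b hab h hh
    rw [mem_tops] at hh
    have h0 : Ideal.span {h} ≠ ⊥ := by
      rw [Ne, Ideal.span_singleton_eq_bot]; exact hh.ne_zero (by omega) hm
    have hdeg : deg p (Ideal.span {h}) = m * n.factorial := hh.finrank_quot (by omega) hm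
    choose! c hc using fun (J : Ideal R) (hJ : J ∣ Ideal.span {h}) => hJ
    refine Finset.card_le_card_of_injOn c ?_ ?_
    · intro J hJ
      simp only [Finset.coe_filter, Set.mem_ofPred_eq, mem_IS] at hJ ⊢
      have h1 := hc J hJ.2
      have h2 : c J ≠ ⊥ := by
        intro h2; rw [h2] at h1; apply h0; rw [h1]; exact mul_zero J
      refine ⟨⟨h2, ?_⟩, ?_⟩
      · have := deg_mul p hJ.1.1 h2
        rw [← h1, hdeg, hJ.1.2] at this
        omega
      · exact ⟨J, by rw [h1]; ring⟩
    · intro J hJ J' hJ' he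
      simp only [Finset.coe_filter, Set.mem_ofPred_eq, mem_IS] at hJ hJ'
      have h1 := hc J hJ.2
      have h2 := hc J' hJ'.2
      rw [← he] at h2
      have h3 : c J ≠ 0 := by
        intro h3; rw [h3, mul_zero] at h1; exact h0 h1
      exact mul_right_cancel₀ h3 (h1.symm.trans h2)
  have e : ∑ J ∈ IS p R d, ((F.tops m).filter fun h => h ∈ J).card
      = ∑ J ∈ IS p R d', ((F.tops m).filter fun h => h ∈ J).card := by
    rw [hswap, hswap]
    exact Finset.sum_congr rfl fun x hx =>
      le_antisymm (hcompl (by omega) x hx) (hcompl h x hx)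
  have e1 := hcount h hd
  have e2 := hcount ((add_comm d' d).trans h) hd'
  rw [e] at e2
  have hp : 0 < p ^ r := pow_pos (Fact.out : p.Prime).pos _
  refine Nat.eq_of_mul_eq_mul_right hp ?_
  calc _ = (IS p R d').card * p ^ r * p ^ d := by ring
    _ = (IS p R d).card * p ^ r * p ^ d' := by rw [← e1, ← e2]; ring
    _ = _ := by ring

include F in
/-- Two applications of the symmetry give a linear recursion for the number of ideals. -/
theorem card_add (hn : 2 ≤ n) {d : ℕ} (hd : n.factorial * (2 * n - 3) + 1 ≤ d) :
    (IS p R (d + n.factorial)).card = p ^ n.factorial * (IS p R d).card := by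
  set D := n.factorial * (2 * n - 3) + 1
  have hf := n.factorial_pos
  set m := d + D
  have hm : m ≤ m * n.factorial := Nat.le_mul_of_pos_right m hf
  have h1 := F.card_symm (p := p) hn (m := m) (d := d) (d' := m * n.factorial - d) (by omega) hd
    (by omega)
  have h2 := F.card_symm (p := p) hn (m := m + 1) (d := d + n.factorial)
    (d' := m * n.factorial - d) (by rw [Nat.succ_mul]; omega) (by omega) (by omega)
  have hp : 0 < p ^ (m * n.factorial - d) := pow_pos (Fact.out : p.Prime).pos _
  refine Nat.eq_of_mul_eq_mul_right hp ?_
  rw [← h2, pow_add, mul_assoc, ← h1]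
  ring

end Filt
end

noncomputable section

/-! ### From asymptotic to exact square-root bounds -/

namespace PowerSum

/-- An identity `f * Q = V` of power series can be evaluated where `f` converges absolutely. -/
theorem eval_of_mul_eq (f : PowerSeries ℂ) (Q V : ℂ[X]) (α : ℂ)
    (hs : Summable fun k => ‖PowerSeries.coeff k f * α ^ k‖)
    (h : f * (Q : PowerSeries ℂ) = (V : PowerSeries ℂ)) :
    (∑' k, PowerSeries.coeff k f * α ^ k) * Q.eval α = V.eval α := by
  have hfin : ∀ Q : ℂ[X], ∀ k ∉ Finset.range (Q.natDegree + 1), Q.coeff k * α ^ k = 0 := by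
    intro Q k hk
    rw [coeff_eq_zero_of_natDegree_lt (by simpa [Nat.lt_succ_iff] using hk), zero_mul]
  have hev : ∀ Q : ℂ[X], Q.eval α = ∑' k, Q.coeff k * α ^ k := by
    intro Q
    rw [eval_eq_sum_range, tsum_eq_sum (hfin Q)]
  have hsum : Summable fun k => ‖Q.coeff k * α ^ k‖ :=
    summable_of_ne_finset_zero (s := Finset.range (Q.natDegree + 1)) fun k hk => by
      rw [hfin Q k hk, norm_zero]
  rw [hev Q, hev V, tsum_mul_tsum_eq_tsum_sum_antidiagonal_of_summable_norm hs hsum]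
  congr 1
  ext k
  rw [← Polynomial.coeff_coe, ← h, PowerSeries.coeff_mul, Finset.sum_mul]
  refine Finset.sum_congr rfl fun x hx => ?_
  rw [← Finset.HasAntidiagonal.mem_antidiagonal.1 hx, pow_add, Polynomial.coeff_coe]
  ring

theorem deriv_aux (α : ℂ) (a : ℕ) (P : ℂ[X]) :
    (X - C α) * derivative ((X - C α) ^ a * P)
      = (X - C α) ^ a * (C (a : ℂ) * P + (X - C α) * derivative P) := by
  rw [derivative_mul, derivative_X_sub_C_pow]
  cases a with
  | zero => simp
  | succ a => simp only [Nat.add_sub_cancel]; ring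

/-- If the logarithmic derivative `X * (P / Φ)' / (P / Φ)` is a power series converging at
`α ≠ 0`, then `P / Φ` has neither a zero nor a pole at `α`. -/
theorem rootMultiplicity_eq (f : PowerSeries ℂ) (P Φ : ℂ[X]) (hP : P ≠ 0) (hΦ : Φ ≠ 0)
    (h : f * ((P * Φ : ℂ[X]) : PowerSeries ℂ)
      = ((X * (derivative P * Φ - P * derivative Φ) : ℂ[X]) : PowerSeries ℂ))
    (α : ℂ) (hα : α ≠ 0) (hs : Summable fun k => ‖PowerSeries.coeff k f * α ^ k‖) :
    P.rootMultiplicity α = Φ.rootMultiplicity α := by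
  obtain ⟨P1, hP1, hP2⟩ := exists_eq_pow_rootMultiplicity_mul_and_not_dvd P hP α
  obtain ⟨Φ1, hΦ1, hΦ2⟩ := exists_eq_pow_rootMultiplicity_mul_and_not_dvd Φ hΦ α
  set a := P.rootMultiplicity α
  set b := Φ.rootMultiplicity α
  rw [dvd_iff_isRoot, IsRoot.def] at hP2 hΦ2
  set V : ℂ[X] := X * ((C (a : ℂ) * P1 + (X - C α) * derivative P1) * Φ1
    - P1 * (C (b : ℂ) * Φ1 + (X - C α) * derivative Φ1)) with hV
  have e1 : (X - C α) * (X * (derivative P * Φ - P * derivative Φ)) = (X - C α) ^ (a + b) * V := by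
    have h1 := deriv_aux α a P1
    have h2 := deriv_aux α b Φ1
    rw [← hP1] at h1
    rw [← hΦ1] at h2
    calc _ = X * (((X - C α) * derivative P) * Φ - P * ((X - C α) * derivative Φ)) := by ring
      _ = _ := by rw [h1, h2, hV]; linear_combination X * ((X - C α) ^ a * (C (a : ℂ) * P1 + (X - C α) * derivative P1)) * hΦ1 - X * ((X - C α) ^ b * (C (b : ℂ) * Φ1 + (X - C α) * derivative Φ1)) * hP1
  have e2 : (X - C α) * (P * Φ) = (X - C α) ^ (a + b) * ((X - C α) * (P1 * Φ1)) := by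
    rw [hP1, hΦ1]; ring
  have e3 : f * (((X - C α) * (P1 * Φ1) : ℂ[X]) : PowerSeries ℂ) = (V : PowerSeries ℂ) := by
    have hne : (((X - C α) ^ (a + b) : ℂ[X]) : PowerSeries ℂ) ≠ 0 := by
      rw [Ne, Polynomial.coe_eq_zero_iff]; exact pow_ne_zero _ (X_sub_C_ne_zero α)
    refine mul_left_cancel₀ hne ?_
    rw [mul_left_comm, ← Polynomial.coe_mul, ← Polynomial.coe_mul, ← e1, ← e2,
      Polynomial.coe_mul (X - C α) (P * Φ), Polynomial.coe_mul (X - C α) (X * _), ← h]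
    ring
  have := eval_of_mul_eq f _ _ α hs e3
  rw [hV] at this
  simp only [eval_mul, eval_sub, eval_X, eval_C, sub_self, zero_mul, mul_zero, eval_add,
    add_zero] at this
  have h3 : α * P1.eval α * Φ1.eval α * ((a : ℂ) - b) = 0 := by rw [this]; ring
  rcases mul_eq_zero.1 h3 with h4 | h4
  · exact absurd h4 (mul_ne_zero (mul_ne_zero hα hP2) hΦ2)
  · exact_mod_cast sub_eq_zero.1 h4

/-- The linear coefficient of `W` is the sum of the negated inverse roots when `W(0) = 1`. -/
theorem coeff_one_bound (W : ℂ[X]) (r : ℝ) (hr : 0 < r) (h0 : W.coeff 0 = 1)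
    (h : ∀ α, W.IsRoot α → r⁻¹ ≤ ‖α‖) : ‖W.coeff 1‖ ≤ W.natDegree * r := by
  have hW0 : W.eval 0 = 1 := by rw [← coeff_zero_eq_eval_zero, h0]
  have h1 := (IsAlgClosed.splits W).eval_derivative_div_eval_of_ne_zero (x := 0)
    (by rw [hW0]; exact one_ne_zero)
  rw [hW0, div_one, ← coeff_zero_eq_eval_zero, coeff_derivative] at h1
  simp only [zero_add, Nat.cast_zero, mul_one] at h1
  rw [h1]
  refine (norm_multiset_sum_le _).trans ?_
  rw [Multiset.map_map]
  refine (Multiset.sum_le_card_nsmul _ r ?_).trans ?_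
  · intro x hx
    obtain ⟨α, hα, rfl⟩ := Multiset.mem_map.1 hx
    have h2 := h α (isRoot_of_mem_roots hα)
    have h3 : 0 < r⁻¹ := inv_pos.2 hr
    simp only [Function.comp_apply, zero_sub, one_div, norm_inv, norm_neg]
    rw [← inv_inv r]
    exact inv_anti₀ h3 h2
  · rw [Multiset.card_map, nsmul_eq_mul]
    gcongr
    exact card_roots' W

/-- Here `a d` counts ideals and `N k` counts points. The recursion makes the zeta series
`Z = ∑ a d t ^ d` rational, with `(1 - p t) Z = P / Φ` for polynomials `P` and
`Φ = ∑ (p t) ^ i` with `i < e`. By the asymptotic bound its logarithmic derivative converges for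
`|t| < p ^ (-1/2)`, so `P` and `Φ` have the same zeros in that disc. As all `e - 1` zeros of `Φ` lie
there, `P / Φ` is a polynomial of degree at most `D` with no zeros in the disc, and `N 1 - p` is its
linear coefficient. -/
theorem bound (p e D : ℕ) (hp : 2 ≤ p) (he : 0 < e) (a N : ℕ → ℂ) (ha0 : a 0 = 1)
    (heuler : ∀ d : ℕ, d * a d = ∑ k ∈ Finset.Icc 1 d, N k * a (d - k))
    (hrec : ∀ d, D ≤ d → a (d + e) = p ^ e * a d)
    (C0 : ℝ) (k0 : ℕ) (hb : ∀ k ≥ k0, ‖N k - p ^ k‖ ≤ C0 * p ^ ((k + 1) / 2)) :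
    ‖N 1 - p‖ ≤ D * Real.sqrt p := by
  have hp0 : (p : ℂ) ≠ 0 := by exact_mod_cast (by omega : p ≠ 0)
  have hpr : (1 : ℝ) < p := by exact_mod_cast hp
  have hsq : 1 < Real.sqrt p := by rw [Real.lt_sqrt zero_le_one]; simpa using hpr
  let Z : PowerSeries ℂ := PowerSeries.mk a
  let Lg : PowerSeries ℂ := PowerSeries.mk fun k => if k = 0 then 0 else N k
  let Lp : PowerSeries ℂ := PowerSeries.mk fun k => if k = 0 then 0 else (p : ℂ) ^ k
  let q : PowerSeries ℂ := PowerSeries.C (p : ℂ) * PowerSeries.X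
  have hZ : PowerSeries.X * PowerSeries.derivative ℂ Z = Lg * Z := by
    ext d
    rw [PowerSeries.coeff_mul (φ := Lg), Finset.Nat.sum_antidiagonal_eq_sum_range_succ_mk,
      Finset.range_eq_Ico, Finset.sum_eq_sum_Ico_succ_bot (by omega)]
    have h1 : PowerSeries.coeff d (PowerSeries.X * PowerSeries.derivative ℂ Z) = d * a d := by
      cases d with
      | zero => simp
      | succ d =>
        rw [PowerSeries.coeff_succ_X_mul, PowerSeries.coeff_derivative, PowerSeries.coeff_mk]
        push_cast; ring
    rw [h1, heuler]
    simp only [Lg, Z, PowerSeries.coeff_mk, if_true, zero_mul, zero_add]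
    refine Finset.sum_congr (by ext; simp) fun k hk => ?_
    rw [if_neg (by have := (Finset.mem_Ico.1 hk).1; omega)]
  have hLp : Lp * (1 - q) = q := by
    ext d
    have : Lp * (1 - q) = Lp - PowerSeries.C (p : ℂ) * (PowerSeries.X * Lp) := by
      simp only [q]; ring
    rw [this, map_sub, PowerSeries.coeff_C_mul, PowerSeries.coeff_C_mul]
    rcases d with _ | _ | d
    · simp [Lp]
    · rw [PowerSeries.coeff_succ_X_mul]; simp [Lp]
    · rw [PowerSeries.coeff_succ_X_mul]; simp [Lp, PowerSeries.coeff_X]; ring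
  let z : PowerSeries ℂ := (1 - q) * Z
  let f : PowerSeries ℂ := Lg - Lp
  have hqd : PowerSeries.derivative ℂ q = PowerSeries.C (p : ℂ) := by
    simp [q]
  have hz : f * z = PowerSeries.X * PowerSeries.derivative ℂ z := by
    have h1 : PowerSeries.derivative ℂ z
        = (1 - q) * PowerSeries.derivative ℂ Z - PowerSeries.C (p : ℂ) * Z := by
      simp only [z]
      rw [Derivation.leibniz, map_sub, hqd, PowerSeries.derivative_one, smul_eq_mul, smul_eq_mul]
      ring
    rw [h1]
    calc f * z = (1 - q) * (Lg * Z) - (Lp * (1 - q)) * Z := by simp only [f, z]; ring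
      _ = _ := by rw [← hZ, hLp]; simp only [q]; ring
  let Φ : ℂ[X] := ∑ i ∈ Finset.range e, (C (p : ℂ) * X) ^ i
  have hΦ : (1 - C (p : ℂ) * X) * Φ = 1 - C ((p : ℂ) ^ e) * X ^ e := by
    rw [mul_neg_geom_sum, mul_pow, C_pow]
  have hΦ0 : Φ ≠ 0 := by
    intro h
    have h1 := congrArg (eval 0) hΦ
    rw [h] at h1
    simp [he.ne'] at h1
  have hqc : ((1 - C (p : ℂ) * X : ℂ[X]) : PowerSeries ℂ) = 1 - q := by simp [q, -map_natCast]
  let P : ℂ[X] := PowerSeries.trunc (D + e) (z * (Φ : PowerSeries ℂ))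
  have hzΦ : z * (Φ : PowerSeries ℂ)
      = Z - PowerSeries.C ((p : ℂ) ^ e) * (PowerSeries.X ^ e * Z) := by
    have h1 : (1 - q) * (Φ : PowerSeries ℂ)
        = 1 - PowerSeries.C ((p : ℂ) ^ e) * PowerSeries.X ^ e := by
      rw [← hqc, ← Polynomial.coe_mul, hΦ]; simp [-map_natCast, -map_pow]
    calc _ = ((1 - q) * (Φ : PowerSeries ℂ)) * Z := by simp only [z]; ring
      _ = _ := by rw [h1]; ring
  have hPz : (P : PowerSeries ℂ) = z * (Φ : PowerSeries ℂ) := by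
    ext d
    rw [Polynomial.coeff_coe, PowerSeries.coeff_trunc]
    split_ifs with hd
    · rfl
    · obtain ⟨d', rfl⟩ := Nat.exists_eq_add_of_le' (show e ≤ d by omega)
      rw [hzΦ, map_sub, PowerSeries.coeff_C_mul, PowerSeries.coeff_X_pow_mul]
      simp only [Z, PowerSeries.coeff_mk]
      rw [hrec d' (by omega), sub_self]
  have hz0 : PowerSeries.coeff 0 z = 1 := by simp [z, Z, q, ha0]
  have hz1 : PowerSeries.coeff 1 z = N 1 - p := by
    have h1 := heuler 1
    simp [ha0] at h1
    have : z = Z - PowerSeries.C (p : ℂ) * (PowerSeries.X * Z) := by simp only [z, q]; ring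
    rw [this, map_sub, PowerSeries.coeff_C_mul, PowerSeries.coeff_succ_X_mul]
    simp [Z, h1, ha0]
  have hz' : z ≠ 0 := by intro h; rw [h] at hz0; simp at hz0
  have hP0 : P ≠ 0 := by
    rw [Ne, ← Polynomial.coe_eq_zero_iff, hPz]
    exact mul_ne_zero hz' (by rwa [Ne, Polynomial.coe_eq_zero_iff])
  have hPdeg : P.natDegree < D + e := by
    have : P.degree < (D + e : ℕ) := PowerSeries.degree_trunc_lt _ _
    exact (natDegree_lt_iff_degree_lt hP0).2 this
  have hlog : f * ((P * Φ : ℂ[X]) : PowerSeries ℂ)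
      = ((X * (derivative P * Φ - P * derivative Φ) : ℂ[X]) : PowerSeries ℂ) := by
    rw [Polynomial.coe_mul, Polynomial.coe_mul, Polynomial.coe_sub, Polynomial.coe_mul,
      Polynomial.coe_mul, Polynomial.coe_X, ← PowerSeries.derivative_coe,
      ← PowerSeries.derivative_coe, hPz, Derivation.leibniz, smul_eq_mul, smul_eq_mul]
    calc _ = (f * z) * ((Φ : PowerSeries ℂ) * Φ) := by ring
      _ = _ := by rw [hz]; ring
  -- convergence of the logarithmic derivative in the open disc of radius `p ^ (-1/2)`
  have hsum : ∀ α : ℂ, ‖α‖ < (Real.sqrt p)⁻¹ →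
      Summable fun k => ‖PowerSeries.coeff k f * α ^ k‖ := by
    intro α hα
    have hx : Real.sqrt p * ‖α‖ < 1 := by
      have := mul_lt_mul_of_pos_left hα (show 0 < Real.sqrt p by linarith)
      rwa [mul_inv_cancel₀ (by linarith)] at this
    have hg := (summable_geometric_of_lt_one (r := Real.sqrt p * ‖α‖) (by positivity) hx).mul_left
      (|C0| * Real.sqrt p)
    rw [← summable_nat_add_iff (k0 + 1)] at hg ⊢
    refine Summable.of_nonneg_of_le (fun k => norm_nonneg _) (fun k => ?_) hg
    set j := k + (k0 + 1)
    have h1 : PowerSeries.coeff j f = N j - p ^ j := by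
      simp [f, Lg, Lp, show j ≠ 0 by omega]
    rw [norm_mul, norm_pow, h1, mul_pow]
    have h2 : (p : ℝ) ^ ((j + 1) / 2) ≤ Real.sqrt p * Real.sqrt p ^ j := by
      rw [← pow_succ']
      nth_rw 1 [← Real.sq_sqrt (show (0 : ℝ) ≤ p by positivity)]
      rw [← pow_mul]
      exact pow_le_pow_right₀ hsq.le (by omega)
    calc _ ≤ (|C0| * (Real.sqrt p * Real.sqrt p ^ j)) * ‖α‖ ^ j := by
          gcongr
          refine (hb j (by omega)).trans ?_
          gcongr
          exact le_abs_self C0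
      _ = _ := by ring
  have hmult : ∀ α : ℂ, α ≠ 0 → ‖α‖ < (Real.sqrt p)⁻¹ →
      P.rootMultiplicity α = Φ.rootMultiplicity α := fun α h1 h2 =>
    rootMultiplicity_eq f P Φ hP0 hΦ0 hlog α h1 (hsum α h2)
  have hΦroot : ∀ α : ℂ, Φ.IsRoot α → α ≠ 0 ∧ ‖α‖ < (Real.sqrt p)⁻¹ := by
    intro α hα
    have h1 := congrArg (eval α) hΦ
    rw [eval_mul, IsRoot.def.1 hα, mul_zero] at h1
    simp only [eval_sub, eval_one, eval_mul, eval_C, eval_pow, eval_X] at h1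
    rw [← mul_pow] at h1
    have h2 : ((p : ℂ) * α) ^ e = 1 := (sub_eq_zero.1 h1.symm).symm
    have h3 : ‖(p : ℂ) * α‖ = 1 := Complex.norm_eq_one_of_pow_eq_one h2 he.ne'
    rw [norm_mul, Complex.norm_natCast] at h3
    refine ⟨fun h => by simp [h] at h3, ?_⟩
    rw [eq_inv_of_mul_eq_one_right h3]
    refine inv_strictAnti₀ (by linarith) ?_
    calc Real.sqrt p < Real.sqrt p * Real.sqrt p := by nlinarith
      _ = p := Real.mul_self_sqrt (by positivity)
  have hdvd : Φ ∣ P := by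
    classical
    rw [IsAlgClosed.dvd_iff_roots_le_roots hΦ0 hP0, Multiset.le_iff_count]
    intro α
    rw [count_roots, count_roots]
    by_cases h : Φ.IsRoot α
    · exact (hmult α (hΦroot α h).1 (hΦroot α h).2).ge
    · rw [rootMultiplicity_eq_zero h]; exact Nat.zero_le _
  obtain ⟨W, hW⟩ := hdvd
  have hWz : (W : PowerSeries ℂ) = z := by
    refine mul_left_cancel₀ (a := (Φ : PowerSeries ℂ)) (by rwa [Ne, Polynomial.coe_eq_zero_iff]) ?_
    rw [← Polynomial.coe_mul, ← hW, hPz, mul_comm]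
  have hW0 : W ≠ 0 := by rintro rfl; simp at hW; exact hP0 hW
  have hc0 : W.coeff 0 = 1 := by rw [← Polynomial.coeff_coe, hWz, hz0]
  have hc1 : W.coeff 1 = N 1 - p := by rw [← Polynomial.coeff_coe, hWz, hz1]
  have hroots : ∀ α, W.IsRoot α → (Real.sqrt p)⁻¹ ≤ ‖α‖ := by
    intro α hα
    by_contra hlt
    have hα0 : α ≠ 0 := by
      rintro rfl
      rw [IsRoot.def, ← coeff_zero_eq_eval_zero, hc0] at hα
      exact one_ne_zero hα
    have h1 := hmult α hα0 (not_le.1 hlt)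
    rw [hW, rootMultiplicity_mul (hW ▸ hP0)] at h1
    have := (rootMultiplicity_pos hW0).2 hα
    omega
  have hΦdeg : Φ.natDegree + 1 = e := by
    have h1 := congrArg natDegree hΦ
    have h2 : (1 - C (p : ℂ) * X : ℂ[X]).natDegree = 1 := by
      rw [show (1 - C (p : ℂ) * X : ℂ[X]) = C (-(p : ℂ)) * X + C 1 by simp; ring]
      exact natDegree_linear (neg_ne_zero.2 hp0)
    have h3 : (1 - C ((p : ℂ) ^ e) * X ^ e : ℂ[X]).natDegree = e := by
      rw [natDegree_sub, natDegree_sub_eq_left_of_natDegree_lt] <;>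
        rw [natDegree_C_mul_X_pow _ _ (pow_ne_zero _ hp0)]
      simpa using he
    rw [natDegree_mul (fun h => by rw [h] at h2; simp at h2) hΦ0, h2, h3] at h1
    omega
  have hWdeg : W.natDegree ≤ D := by
    have := natDegree_mul hΦ0 hW0
    rw [← hW] at this
    omega
  rw [← hc1]
  refine (coeff_one_bound W _ (by linarith) hc0 hroots).trans ?_
  gcongr

end PowerSum
end

noncomputable section

/-! ### Existence of an irreducible shift over the prime field -/

namespace Rb
open Zeta
variable {p : ℕ} [Fact p.Prime] {A : Type} [Field A] [CharP A p] [Algebra (ZMod p) A] [IsAlgClosed A]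
 {N : A[X]} {n : ℕ} (hfr : N.map (frobenius A p) = N) (σ : Equiv.Perm (Fin n))

include hfr in
/-- The Weil bound for the twisted curve of ordered factorizations of `N + b`. -/
theorem card_Sk_one (hN : MorseData N n) (hσ : σ ^ n = 1) :
    |((Sk p N n 1 σ).ncard : ℝ) - p| ≤
      ((n.factorial * (2 * n - 3) + 1 : ℕ) : ℝ) * Real.sqrt p := by
  have hn := hN.two_le
  have hp : p.Prime := Fact.out
  have := Rσ_isDomain hfr σ hN
  have := Rσ_isIntegrallyClosed hfr σ hN
  let F := filtσ hfr σ hN hσ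
  have := F.hasFiniteQuotients hn
  have := F.infinite hn
  have := F.isDedekindDomain hn
  have hNN : ∀ k, 0 < k → NN p (Rσ hfr σ) k = (Sk p N n k (σ ^ k)).ncard := fun k hk => by
    rw [NN_eq p (A := A) hk, card_points hfr σ hn hσ k]
  obtain ⟨C0, k0, hC⟩ := Sk_bound (n := n) hfr hN
  have key := PowerSum.bound p n.factorial (n.factorial * (2 * n - 3) + 1) hp.two_le
    n.factorial_pos (fun d => ((IS p (Rσ hfr σ) d).card : ℂ)) (fun k => (NN p (Rσ hfr σ) k : ℂ))
    (by simp [IS_zero]) (fun d => by exact_mod_cast euler p (R := Rσ hfr σ) d)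
    (fun d hd => by exact_mod_cast F.card_add hn hd) C0 (k0 + 1) (fun k hk => by
      rw [hNN k (by omega)]
      have h1 := hC k (by omega) (σ ^ k)
      rw [← Real.norm_eq_abs, ← Complex.norm_real] at h1
      push_cast at h1
      exact h1)
  rw [hNN 1 one_pos, pow_one] at key
  rw [← Real.norm_eq_abs, ← Complex.norm_real]
  push_cast at key ⊢
  exact key

/-- The `n`-cycle, with the property that powers move `i0` to every index. -/
theorem exists_cycle {n : ℕ} (i0 : Fin n) :
    ∃ σ : Equiv.Perm (Fin n), σ ^ n = 1 ∧ ∀ i, ∃ k, (σ ^ k) i0 = i := by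
  have := i0.pos
  have : NeZero n := ⟨by omega⟩
  have hval : ∀ k : ℕ, (k • (1 : Fin n)).val = k % n := fun k => by
    induction k with
    | zero => simp
    | succ k ih => rw [succ_nsmul, Fin.val_add, ih, Fin.val_one', ← Nat.add_mod]
  refine ⟨Equiv.addRight 1, ?_, fun i => ⟨(i - i0 : Fin n).val, ?_⟩⟩
  · ext i; simp [hval, Fin.val_add, Nat.mod_eq_of_lt i.isLt]
  · apply Fin.ext
    have h1 := (i - i0).isLt
    have h2 : ((Equiv.addRight (1 : Fin n) ^ (i - i0).val) i0) = i0 + (i - i0).val • 1 := by simp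
    rw [h2, Fin.val_add, hval, Nat.mod_eq_of_lt h1, ← Fin.val_add, add_sub_cancel]

include hfr in
/-- For large `p`, some shift `N + b` has `n` distinct roots permuted cyclically by Frobenius. -/
theorem exists_good_point (hN : MorseData N n) (hp : (2 * n * n.factorial) ^ 2 ≤ p) (i0 : Fin n)
    (hσ : σ ^ n = 1) (hcyc : ∀ i, ∃ k, (σ ^ k) i0 = i) :
    ∃ y ∈ Sk p N n 1 σ, Function.Injective y := by
  classical
  have hn := hN.two_le
  have hiter : ∀ y ∈ Sk p N n 1 σ, ∀ k i, y i ^ p ^ k = y ((σ ^ k) i) := by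
    intro y hy k
    induction k with
    | zero => intro i; simp
    | succ k ih =>
      intro i
      rw [pow_succ p, pow_mul, ih, pow_succ' σ]
      simpa using hy.2 ((σ ^ k) i)
  by_contra hno
  push Not at hno
  -- a repeated coordinate spreads along the cycle, so `y i0` is a critical point of `N`
  have hbad : ∀ y ∈ Sk p N n 1 σ, y i0 ∈ N.derivative.roots.toFinset := by
    intro y hy
    rw [Multiset.mem_toFinset, mem_roots ((MorseData.deriv_ne hN)), IsRoot.def]
    by_contra hne
    apply hno y hy
    obtain ⟨b, hb⟩ := hy.1
    have hder : N.derivative.eval (y i0) = ∏ j ∈ Finset.univ.erase i0, (y i0 - y j) := by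
      have h1 : N.derivative = derivative (∏ i, (X - C (y i))) := by rw [hb]; simp
      rw [h1, ← Finset.mul_prod_erase _ _ (Finset.mem_univ i0), derivative_mul]
      simp [eval_prod]
    have h0 : ∀ j, y i0 = y j → j = i0 := by
      intro j hj
      by_contra hji
      apply hne
      rw [hder]
      exact Finset.prod_eq_zero (Finset.mem_erase.2 ⟨hji, Finset.mem_univ j⟩) (sub_eq_zero.2 hj)
    intro i j hij
    obtain ⟨k, rfl⟩ := hcyc i
    obtain ⟨j', rfl⟩ := (σ ^ k).surjective j
    rw [← hiter y hy, ← hiter y hy] at hij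
    rw [h0 j' (iterateFrobenius_inj A p k (by simpa [iterateFrobenius_def] using hij))]
  have hcard : (Sk p N n 1 σ).ncard ≤ n - 1 := by
    calc _ ≤ (N.derivative.roots.toFinset : Set A).ncard := by
          refine Set.ncard_le_ncard_of_injOn (fun y => y i0) hbad ?_ (Finset.finite_toSet _)
          intro y hy y' hy' h
          funext i
          obtain ⟨k, rfl⟩ := hcyc i
          rw [← hiter y hy, ← hiter y' hy']
          exact congrArg (· ^ p ^ k) h
      _ = _ := Set.ncard_coe_finset _
      _ ≤ Multiset.card N.derivative.roots := Multiset.toFinset_card_le _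
      _ ≤ N.derivative.natDegree := card_roots' _
      _ ≤ N.natDegree - 1 := natDegree_derivative_le N
      _ = n - 1 := by rw [hN.deg]
  have hw := (abs_le.1 (card_Sk_one hfr σ hN hσ)).1
  have hs : ((2 * n * n.factorial : ℕ) : ℝ) ≤ Real.sqrt p :=
    Real.le_sqrt_of_sq_le (by exact_mod_cast hp)
  have hss : Real.sqrt p * Real.sqrt p = p := Real.mul_self_sqrt (by positivity)
  have hf := n.factorial_pos
  have hD : n.factorial * (2 * n - 3) + 1 + 2 ≤ 2 * n * n.factorial := by
    obtain ⟨q, rfl⟩ := Nat.exists_eq_add_of_le hn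
    rw [show 2 * (2 + q) - 3 = 2 * q + 1 by omega]
    nlinarith
  have hnn : n ≤ 2 * n * n.factorial := by nlinarith
  have hD' : ((n.factorial * (2 * n - 3) + 1 : ℕ) : ℝ) + 2 ≤ Real.sqrt p :=
    le_trans (by exact_mod_cast hD) hs
  have hn' : (n : ℝ) ≤ Real.sqrt p := le_trans (by exact_mod_cast hnn) hs
  have hc' : ((Sk p N n 1 σ).ncard : ℝ) ≤ n := by exact_mod_cast (by omega : _ ≤ n)
  have hn2 : (2 : ℝ) ≤ n := by exact_mod_cast hn
  nlinarith

/-- The coordinates of a good point are the conjugates of one element, so its minimal polynomial has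
degree `n`. -/
theorem exists_irreducible {M : (ZMod p)[X]} (hM : M.Monic)
    (hN : MorseData (M.map (algebraMap (ZMod p) A)) n) (hp : (2 * n * n.factorial) ^ 2 ≤ p) :
    ∃ b : ZMod p, Irreducible (M + C b) := by
  have hn := hN.two_le
  have hdeg : M.natDegree = n := by rw [← hN.deg, natDegree_map]
  have hfr : (M.map (algebraMap (ZMod p) A)).map (frobenius A p)
      = M.map (algebraMap (ZMod p) A) := by
    rw [Polynomial.map_map]; congr 1; exact Subsingleton.elim _ _
  let i0 : Fin n := ⟨0, by omega⟩
  obtain ⟨σ, hσ, hcyc⟩ := exists_cycle i0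
  obtain ⟨y, hy, hinj⟩ := exists_good_point hfr σ hN hp i0 hσ hcyc
  obtain ⟨b, hb⟩ := hy.1
  have hbp : b ^ p = b := by simpa using frob_b hfr hy.2 hb
  obtain ⟨c, rfl⟩ := Descent.exists_zmod_of_pow_eq (p := p) hbp
  refine ⟨c, ?_⟩
  have hmon : (M + C c).Monic := hM.add_of_left (degree_C_le.trans_lt (by
    rw [← natDegree_pos_iff_degree_pos, hdeg]; omega))
  have hroot : aeval (y i0) (M + C c) = 0 := by
    have h1 : (M + C c).map (algebraMap (ZMod p) A) = ∏ i, (X - C (y i)) := by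
      rw [hb]; simp
    rw [aeval_def, ← eval_map, h1, eval_prod]
    exact Finset.prod_eq_zero (Finset.mem_univ i0) (by simp)
  have hintegral : IsIntegral (ZMod p) (y i0) := ⟨M + C c, hmon, hroot⟩
  set g := minpoly (ZMod p) (y i0)
  have hg : ∀ i, aeval (y i) g = 0 := by
    have hstep : ∀ x : A, aeval x g = 0 → aeval (x ^ p) g = 0 := fun x hx => by
      have h1 := congrArg (frobenius A p) hx
      rw [map_zero, aeval_def, hom_eval₂, Subsingleton.elim ((frobenius A p).comp _)
        (algebraMap (ZMod p) A)] at h1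
      exact h1
    intro i
    obtain ⟨k, rfl⟩ := hcyc i
    induction k with
    | zero => exact minpoly.aeval _ _
    | succ k ih =>
      have := hy.2 ((σ ^ k) i0)
      rw [pow_one] at this
      rw [pow_succ', Equiv.Perm.mul_apply, ← this]
      exact hstep _ ih
  have hgm : g.Monic := minpoly.monic hintegral
  have hgn : n ≤ g.natDegree := by
    classical
    have h1 : (Finset.univ.image y).card = n := by
      rw [Finset.card_image_of_injective _ hinj, Finset.card_univ, Fintype.card_fin]
    rw [← h1, ← natDegree_map (algebraMap (ZMod p) A)]
    refine Polynomial.card_le_degree_of_subset_roots (p := g.map (algebraMap (ZMod p) A)) ?_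
    intro x hx
    rw [Finset.mem_val, Finset.mem_image] at hx
    obtain ⟨i, -, rfl⟩ := hx
    rw [mem_roots (hgm.map _).ne_zero, IsRoot.def, eval_map]
    exact hg i
  have : g = M + C c := by
    refine (eq_of_monic_of_dvd_of_natDegree_le hgm hmon (minpoly.dvd _ _ hroot) ?_).symm
    rw [natDegree_add_C, hdeg]; exact hgn
  rw [← this]
  exact minpoly.irreducible hintegral

end Rb
end

noncomputable section
namespace Rb

/-! ### Lifting to the p-adic integers -/

theorem mem_span_pow_iff_repr {R O ι : Type*} [CommRing R] [CommRing O] [Algebra R O] [Fintype ι]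
    (b : Module.Basis ι R O) (ϖ : R) (k : ℕ) (x : O) :
    x ∈ ((Ideal.span {algebraMap R O ϖ}) ^ k • ⊤ : Submodule O O) ↔
      ∀ i, b.equivFun x i ∈ ((Ideal.span {ϖ}) ^ k • ⊤ : Submodule R R) := by
  simp only [smul_eq_mul, Ideal.mul_top, Ideal.span_singleton_pow, Ideal.mem_span_singleton]
  constructor
  · rintro ⟨y, rfl⟩ i
    refine ⟨b.equivFun y i, ?_⟩
    rw [← map_pow, ← Algebra.smul_def, map_smul]
    rfl
  · intro h
    choose c hc using h
    refine ⟨b.equivFun.symm c, ?_⟩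
    apply b.equivFun.injective
    rw [← map_pow, ← Algebra.smul_def, map_smul, LinearEquiv.apply_symm_apply]
    ext i
    exact hc i

/-- A finite free algebra over a `ϖ`-adically complete ring is `ϖ`-adically complete:
convergence is checked coordinatewise. -/
theorem isAdicComplete_of_basis {R O ι : Type*} [CommRing R] [CommRing O] [Algebra R O] [Fintype ι]
    (b : Module.Basis ι R O) (ϖ : R) [IsAdicComplete (Ideal.span {ϖ}) R] :
    IsAdicComplete (Ideal.span {algebraMap R O ϖ}) O where
  haus' x hx := by
    apply b.equivFun.injective
    rw [map_zero]
    ext i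
    apply IsHausdorff.haus (I := Ideal.span {ϖ}) (M := R) inferInstance
    intro k
    rw [SModEq.zero]
    exact (mem_span_pow_iff_repr b ϖ k x).1 (SModEq.zero.1 (hx k)) i
  prec' f hf := by
    have h : ∀ i, ∃ L : R, ∀ k, b.equivFun (f k) i ≡ L
        [SMOD ((Ideal.span {ϖ}) ^ k • ⊤ : Submodule R R)] := by
      intro i
      apply IsPrecomplete.prec (I := Ideal.span {ϖ}) (M := R) inferInstance
      intro m k hmk
      rw [SModEq.sub_mem]
      have := (mem_span_pow_iff_repr b ϖ m _).1 (SModEq.sub_mem.1 (hf hmk)) i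
      rwa [map_sub] at this
    choose L hL using h
    refine ⟨b.equivFun.symm L, fun k => ?_⟩
    rw [SModEq.sub_mem, mem_span_pow_iff_repr b]
    intro i
    rw [map_sub, LinearEquiv.apply_symm_apply]
    exact SModEq.sub_mem.1 (hL i k)

variable {p : ℕ} [Fact p.Prime] {f : ℤ_[p][X]}

/-- Reduction modulo `p` on `ℤ_p[X]/(f)`. -/
def redMap (f : ℤ_[p][X]) :
    AdjoinRoot f →+* AdjoinRoot (f.map (PadicInt.toZMod : ℤ_[p] →+* ZMod p)) :=
  AdjoinRoot.map PadicInt.toZMod f _ dvd_rfl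

theorem redMap_mk (g : ℤ_[p][X]) :
    redMap f (AdjoinRoot.mk f g) = AdjoinRoot.mk _ (g.map (PadicInt.toZMod : ℤ_[p] →+* ZMod p)) := by
  induction g using Polynomial.induction_on' with
  | add a b ha hb => simp [ha, hb]
  | monomial k a =>
    rw [← C_mul_X_pow_eq_monomial]
    simp [redMap]

theorem redMap_surjective : Function.Surjective (redMap f) := by
  intro y
  obtain ⟨g, rfl⟩ := AdjoinRoot.mk_surjective y
  obtain ⟨h, rfl⟩ := Polynomial.map_surjective (PadicInt.toZMod : ℤ_[p] →+* ZMod p)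
    (ZMod.ringHom_surjective _) g
  exact ⟨_, redMap_mk h⟩

theorem redMap_eq_zero_iff (x : AdjoinRoot f) :
    redMap f x = 0 ↔ x ∈ Ideal.span {algebraMap ℤ_[p] (AdjoinRoot f) (p : ℤ_[p])} := by
  rw [Ideal.mem_span_singleton]
  constructor
  · obtain ⟨g, rfl⟩ := AdjoinRoot.mk_surjective x
    rw [redMap_mk, AdjoinRoot.mk_eq_zero]
    rintro ⟨h, hh⟩
    obtain ⟨h, rfl⟩ := Polynomial.map_surjective (PadicInt.toZMod : ℤ_[p] →+* ZMod p)
      (ZMod.ringHom_surjective _) h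
    have h0 : (g - f * h).map (PadicInt.toZMod : ℤ_[p] →+* ZMod p) = 0 := by
      rw [Polynomial.map_sub, Polynomial.map_mul, hh, sub_self]
    have h1 : C (p : ℤ_[p]) ∣ g - f * h := by
      rw [Polynomial.C_dvd_iff_dvd_coeff]
      intro i
      rw [← Ideal.mem_span_singleton, ← PadicInt.maximalIdeal_eq_span_p, ← PadicInt.ker_toZMod,
        RingHom.mem_ker, ← Polynomial.coeff_map, h0, Polynomial.coeff_zero]
    have h2 := map_dvd (AdjoinRoot.mk f) h1
    rw [map_sub, map_mul, AdjoinRoot.mk_self, zero_mul, sub_zero] at h2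
    exact h2
  · rintro ⟨y, rfl⟩
    rw [map_mul]
    have : redMap f (algebraMap ℤ_[p] (AdjoinRoot f) (p : ℤ_[p])) = 0 := by
      rw [map_natCast, map_natCast, ← map_natCast (AdjoinRoot.of _), CharP.cast_eq_zero, map_zero]
    rw [this, zero_mul]

/-- Teichmüller lifts: each residue class contains a root of `X ^ (p ^ n) - X`, by Hensel's lemma
in the `p`-adically complete ring `ℤ_p[X]/(f)`. -/
theorem exists_teichmuller {n : ℕ} (hf : f.Monic) (hn : f.natDegree = n) (hn0 : 1 ≤ n)
    (hirr : Irreducible (f.map (PadicInt.toZMod : ℤ_[p] →+* ZMod p)))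
    (y : AdjoinRoot (f.map (PadicInt.toZMod : ℤ_[p] →+* ZMod p))) :
    ∃ t : AdjoinRoot f, t ^ (p ^ n) = t ∧ redMap f t = y := by
  have hp : p.Prime := Fact.out
  have : Fact (Irreducible (f.map (PadicInt.toZMod : ℤ_[p] →+* ZMod p))) := ⟨hirr⟩
  have hfin : Module.Finite (ZMod p) (AdjoinRoot (f.map (PadicInt.toZMod : ℤ_[p] →+* ZMod p))) :=
    (AdjoinRoot.powerBasis hirr.ne_zero).finite
  have : Finite (AdjoinRoot (f.map (PadicInt.toZMod : ℤ_[p] →+* ZMod p))) :=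
    Module.finite_of_finite (ZMod p)
  let := Fintype.ofFinite (AdjoinRoot (f.map (PadicInt.toZMod : ℤ_[p] →+* ZMod p)))
  have hcard : Fintype.card (AdjoinRoot (f.map (PadicInt.toZMod : ℤ_[p] →+* ZMod p))) = p ^ n := by
    rw [Module.card_eq_pow_finrank (K := ZMod p), ZMod.card,
      (AdjoinRoot.powerBasis hirr.ne_zero).finrank, AdjoinRoot.powerBasis_dim,
      hf.natDegree_map, hn]
  have hcompl : IsAdicComplete (Ideal.span {(p : ℤ_[p])}) ℤ_[p] := by
    rw [← PadicInt.maximalIdeal_eq_span_p]; infer_instance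
  have := isAdicComplete_of_basis (AdjoinRoot.powerBasis' hf).basis (p : ℤ_[p])
  have hens := (IsAdicComplete.henselianRing (AdjoinRoot f)
    (Ideal.span {algebraMap ℤ_[p] (AdjoinRoot f) (p : ℤ_[p])})).is_henselian
  obtain ⟨a, rfl⟩ := redMap_surjective y
  have h1 : 1 < p ^ n := Nat.one_lt_pow (by omega) hp.one_lt
  have : Nontrivial (AdjoinRoot f) := (redMap f).domain_nontrivial
  obtain ⟨t, ht, hta⟩ := hens (X ^ (p ^ n) - X)
    (monic_X_pow_sub (by rw [degree_X]; exact_mod_cast h1)) a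
    (by
      rw [← redMap_eq_zero_iff]
      simp only [eval_sub, eval_pow, eval_X, map_sub, map_pow]
      rw [← hcard, FiniteField.pow_card, sub_self])
    (by
      have : Ideal.Quotient.mk (Ideal.span {algebraMap ℤ_[p] (AdjoinRoot f) (p : ℤ_[p])})
          ((derivative (X ^ (p ^ n) - X : (AdjoinRoot f)[X])).eval a) = -1 := by
        rw [← sub_eq_zero, sub_neg_eq_add, ← map_one (Ideal.Quotient.mk _), ← map_add,
          Ideal.Quotient.eq_zero_iff_mem, Ideal.mem_span_singleton]
        simp only [derivative_sub, derivative_X_pow, derivative_X, eval_sub, eval_mul,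
          eval_pow, eval_X, eval_one, sub_add_cancel, map_natCast]
        refine Dvd.dvd.mul_right ?_ _
        rw [eval_natCast]
        exact Nat.cast_dvd_cast (dvd_pow_self p (by omega))
      rw [this]
      exact isUnit_one.neg)
  refine ⟨t, ?_, ?_⟩
  · simpa [sub_eq_zero] using ht
  · rw [← sub_eq_zero, ← map_sub, redMap_eq_zero_iff]
    exact hta

/-- The inclusion of `ℤ_p[X]/(f)` into `ℚ_p[X]/(f)`. -/
def incl (f : ℤ_[p][X]) : AdjoinRoot f →+* AdjoinRoot (f.map (algebraMap ℤ_[p] ℚ_[p])) :=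
  AdjoinRoot.map (algebraMap ℤ_[p] ℚ_[p]) f _ dvd_rfl

theorem incl_mk (g : ℤ_[p][X]) :
    incl f (AdjoinRoot.mk f g) = AdjoinRoot.mk _ (g.map (algebraMap ℤ_[p] ℚ_[p])) := by
  induction g using Polynomial.induction_on' with
  | add a b ha hb => simp [ha, hb]
  | monomial k a =>
    rw [← C_mul_X_pow_eq_monomial]
    simp only [map_mul, map_pow, AdjoinRoot.mk_C, AdjoinRoot.mk_X, incl, AdjoinRoot.map_of,
      AdjoinRoot.map_root, Polynomial.map_mul, Polynomial.map_pow, map_C, map_X]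

theorem incl_injective (hf : f.Monic) : Function.Injective (incl f) := by
  rw [injective_iff_map_eq_zero]
  intro x
  obtain ⟨g, rfl⟩ := AdjoinRoot.mk_surjective x
  rw [incl_mk, AdjoinRoot.mk_eq_zero, AdjoinRoot.mk_eq_zero,
    Polynomial.map_dvd_map _ (IsFractionRing.injective ℤ_[p] ℚ_[p]) hf]
  exact id

/-- Irreducibility modulo `p` lifts to `ℤ_p`, and passes to `ℚ_p` by Gauss's lemma. -/
theorem irreducible_map_padic (hf : f.Monic)
    (hirr : Irreducible (f.map (PadicInt.toZMod : ℤ_[p] →+* ZMod p))) :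
    Irreducible (f.map (algebraMap ℤ_[p] ℚ_[p])) :=
  (hf.irreducible_iff_irreducible_map_fraction_map (K := ℚ_[p])).1
    (hf.irreducible_of_irreducible_map _ _ hirr)

/-- A polynomial over `ℤ_p` vanishing on a lift of the root of `f mod p` has degree at least
`deg f`. -/
theorem natDegree_le_of_eval₂ {n : ℕ} (hf : f.Monic) (hn : f.natDegree = n)
    {t : AdjoinRoot f} (ht : redMap f t = AdjoinRoot.root _) {g : ℤ_[p][X]} (hg : g.Monic)
    (h : eval₂ (AdjoinRoot.of f) t g = 0) : n ≤ g.natDegree := by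
  have h1 := congrArg (redMap f) h
  rw [Polynomial.hom_eval₂, map_zero, ht] at h1
  have h2 : (redMap f).comp (AdjoinRoot.of f) =
      (AdjoinRoot.of (f.map (PadicInt.toZMod : ℤ_[p] →+* ZMod p))).comp PadicInt.toZMod := by
    ext x; simp [redMap]
  rw [h2, ← Polynomial.eval₂_map] at h1
  have h3 : f.map (PadicInt.toZMod : ℤ_[p] →+* ZMod p) ∣
      g.map (PadicInt.toZMod : ℤ_[p] →+* ZMod p) := by
    rw [← AdjoinRoot.mk_eq_zero, ← AdjoinRoot.aeval_eq, ← h1]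
    rfl
  have := Polynomial.natDegree_le_of_dvd h3 (hg.map _).ne_zero
  rwa [hf.natDegree_map, hg.natDegree_map, hn] at this

/-- If `f` is monic of degree `n` and irreducible modulo `p`, then `ℚ_p[X]/(f)` is the splitting
field of `X ^ (p ^ n) - X`. -/
theorem isSplittingField_adjoinRoot {n : ℕ} (hf : f.Monic) (hn : f.natDegree = n) (hn0 : 1 ≤ n)
    (hirr : Irreducible (f.map (PadicInt.toZMod : ℤ_[p] →+* ZMod p)))
    [Fact (Irreducible (f.map (algebraMap ℤ_[p] ℚ_[p])))] :
    IsSplittingField ℚ_[p] (AdjoinRoot (f.map (algebraMap ℤ_[p] ℚ_[p])))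
      ((X : ℚ_[p][X]) ^ (p ^ n) - X) := by
  have hp : p.Prime := Fact.out
  have hq : Irreducible (f.map (algebraMap ℤ_[p] ℚ_[p])) := Fact.out
  have h1 : 1 < p ^ n := Nat.one_lt_pow (by omega) hp.one_lt
  choose τ hτ hred using exists_teichmuller hf hn hn0 hirr
  set K := AdjoinRoot (f.map (algebraMap ℤ_[p] ℚ_[p])) with hK
  have hmap : ((X : ℚ_[p][X]) ^ (p ^ n) - X).map (algebraMap ℚ_[p] K) = X ^ (p ^ n) - X := by simp
  have hroot : ∀ y, (incl f (τ y)) ∈ (X ^ (p ^ n) - X : K[X]).roots := by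
    intro y
    rw [mem_roots (FiniteField.X_pow_card_sub_X_ne_zero K h1)]
    simp only [IsRoot.def, eval_sub, eval_pow, eval_X]
    rw [← map_pow, hτ, sub_self]
  have hinj : Function.Injective fun y => incl f (τ y) := by
    intro y z hyz
    have := incl_injective hf hyz
    rw [← hred y, this, hred]
  have : Fact (Irreducible (f.map (PadicInt.toZMod : ℤ_[p] →+* ZMod p))) := ⟨hirr⟩
  have hcard : Nat.card (AdjoinRoot (f.map (PadicInt.toZMod : ℤ_[p] →+* ZMod p))) = p ^ n := by
    have : Module.Finite (ZMod p) (AdjoinRoot (f.map (PadicInt.toZMod : ℤ_[p] →+* ZMod p))) :=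
      (AdjoinRoot.powerBasis hirr.ne_zero).finite
    rw [Module.natCard_eq_pow_finrank (K := ZMod p), Nat.card_zmod,
      (AdjoinRoot.powerBasis hirr.ne_zero).finrank, AdjoinRoot.powerBasis_dim,
      hf.natDegree_map, hn]
  rw [isSplittingField_iff_intermediateField]
  constructor
  · rw [hmap, Polynomial.splits_iff_card_roots]
    refine le_antisymm (card_roots' _) ?_
    rw [FiniteField.X_pow_card_sub_X_natDegree_eq K h1]
    classical
    refine le_trans hcard.ge (le_trans ?_ (Multiset.toFinset_card_le _))
    rw [← Nat.card_eq_finsetCard]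
    exact Nat.card_le_card_of_injective
      (fun y => ⟨incl f (τ y), Multiset.mem_toFinset.2 (hroot y)⟩)
      (fun y z h => hinj (congrArg Subtype.val h))
  · set θ := incl f (τ (AdjoinRoot.root _)) with hθ
    have : FiniteDimensional ℚ_[p] K := (AdjoinRoot.powerBasis hq.ne_zero).finite
    have hfr : Module.finrank ℚ_[p] K = n := by
      rw [(AdjoinRoot.powerBasis hq.ne_zero).finrank, AdjoinRoot.powerBasis_dim,
        hf.natDegree_map, hn]
    have hintegral : IsIntegral ℤ_[p] θ := by
      refine ⟨X ^ (p ^ n) - X, monic_X_pow_sub (by rw [degree_X]; exact_mod_cast h1), ?_⟩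
      have := hτ (AdjoinRoot.root _)
      simp only [eval₂_sub, eval₂_X_pow, eval₂_X]
      rw [hθ, ← map_pow, this, sub_self]
    have hmin : minpoly ℚ_[p] θ = (minpoly ℤ_[p] θ).map (algebraMap ℤ_[p] ℚ_[p]) :=
      minpoly.isIntegrallyClosed_eq_field_fractions' ℚ_[p] hintegral
    have hdeg : n ≤ (minpoly ℤ_[p] θ).natDegree := by
      apply natDegree_le_of_eval₂ hf hn (hred (AdjoinRoot.root _)) (minpoly.monic hintegral)
      apply incl_injective hf
      rw [hom_eval₂, map_zero, ← minpoly.aeval ℤ_[p] θ, aeval_def]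
      congr 1
      ext x
      simp only [incl, RingHom.comp_apply, AdjoinRoot.map_of]
      rfl
    have htop : IntermediateField.adjoin ℚ_[p] {θ} = ⊤ := by
      apply IntermediateField.eq_of_le_of_finrank_le le_top
      rw [IntermediateField.finrank_top', hfr,
        IntermediateField.adjoin.finrank (hintegral.tower_top), hmin,
        (minpoly.monic hintegral).natDegree_map]
      exact hdeg
    rw [eq_top_iff, ← htop, IntermediateField.adjoin_simple_le_iff]
    apply IntermediateField.subset_adjoin
    rw [Polynomial.mem_rootSet']
    have := hroot (AdjoinRoot.root _)
    rw [mem_roots (FiniteField.X_pow_card_sub_X_ne_zero K h1), IsRoot.def] at this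
    refine ⟨?_, ?_⟩
    · rw [hmap]; exact FiniteField.X_pow_card_sub_X_ne_zero K h1
    · rw [← this]; simp [hθ]

/-- The class of `X` in `ℚ_p[X]/(f)`, transported to the splitting field of `X ^ (p ^ n) - X`. -/
theorem exists_primitive_root {n : ℕ} (hf : f.Monic) (hn : f.natDegree = n) (hn0 : 1 ≤ n)
    (hirr : Irreducible (f.map (PadicInt.toZMod : ℤ_[p] →+* ZMod p))) :
    ∃ x : SplittingField ((X : ℚ_[p][X]) ^ (p ^ n) - X),
      aeval x (f.map (algebraMap ℤ_[p] ℚ_[p])) = 0 ∧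
        IntermediateField.adjoin ℚ_[p] {x} = ⊤ := by
  have : Fact (Irreducible (f.map (algebraMap ℤ_[p] ℚ_[p]))) := ⟨irreducible_map_padic hf hirr⟩
  have := isSplittingField_adjoinRoot hf hn hn0 hirr
  let e := IsSplittingField.algEquiv (AdjoinRoot (f.map (algebraMap ℤ_[p] ℚ_[p])))
    ((X : ℚ_[p][X]) ^ (p ^ n) - X)
  refine ⟨e (AdjoinRoot.root _), ?_, ?_⟩
  · have h := aeval_algHom_apply e.toAlgHom (AdjoinRoot.root _)
      (f.map (algebraMap ℤ_[p] ℚ_[p]))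
    refine h.trans ?_
    rw [AdjoinRoot.aeval_eq, AdjoinRoot.mk_self, map_zero]
  · have h : IntermediateField.adjoin ℚ_[p]
        {AdjoinRoot.root (f.map (algebraMap ℤ_[p] ℚ_[p]))} = ⊤ := by
      apply IntermediateField.adjoin_eq_top_of_algebra
      exact AdjoinRoot.adjoinRoot_eq_top
    have h2 := congrArg (IntermediateField.map e.toAlgHom) h
    rw [IntermediateField.adjoin_map, Set.image_singleton] at h2
    refine h2.trans ?_
    rw [← AlgHom.fieldRange_eq_map, AlgHom.fieldRange_eq_top]
    exact e.surjective

end Rb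
end

theorem stmt_11 (n : ℕ) (hn : 2 ≤ n) (p : ℕ) [Fact p.Prime]
    (hp : (2 * n * n.factorial) ^ 2 ≤ p)
    (M : Polynomial ℤ_[p]) (hmonic : M.Monic) (hdeg : M.natDegree = n)
    (hMorse : IsMorse (M.map (PadicInt.toZMod : ℤ_[p] →+* ZMod p))) :
    ∃ b : ℤ_[p],
      Irreducible ((M + C b).map (algebraMap ℤ_[p] ℚ_[p])) ∧
      ∃ x : UnramifiedExt p n,
        Polynomial.aeval x ((M + C b).map (algebraMap ℤ_[p] ℚ_[p])) = 0 ∧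
        IntermediateField.adjoin ℚ_[p] {x} = ⊤ := by
  have hchar : CharP (AlgebraicClosure (ZMod p)) p :=
    charP_of_injective_algebraMap (algebraMap (ZMod p) (AlgebraicClosure (ZMod p))).injective p
  have hnp : n < p := by
    have h1 : 1 ≤ n.factorial := n.factorial_pos
    nlinarith [Nat.mul_le_mul_left (2 * n) h1]
  have hM : (M.map (PadicInt.toZMod : ℤ_[p] →+* ZMod p)).Monic := hmonic.map _
  have hN : MorseData ((M.map (PadicInt.toZMod : ℤ_[p] →+* ZMod p)).map
      (algebraMap (ZMod p) (AlgebraicClosure (ZMod p)))) n :=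
    { monic := hM.map _
      deg := by rw [hM.natDegree_map, hmonic.natDegree_map, hdeg]
      two_le := hn
      cast_ne := by
        rw [Ne, CharP.cast_eq_zero_iff (AlgebraicClosure (ZMod p)) p]
        exact fun h => absurd (Nat.le_of_dvd (by omega) h) (by omega)
      nodup := hMorse.1
      crit := hMorse.2 }
  obtain ⟨c, hc⟩ := Rb.exists_irreducible hM hN hp
  obtain ⟨b, rfl⟩ := ZMod.ringHom_surjective (PadicInt.toZMod : ℤ_[p] →+* ZMod p) c
  have hred : Irreducible ((M + C b).map (PadicInt.toZMod : ℤ_[p] →+* ZMod p)) := by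
    rwa [Polynomial.map_add, Polynomial.map_C]
  have hmon : (M + C b).Monic := by
    refine hmonic.add_of_left (lt_of_le_of_lt degree_C_le ?_)
    rw [← natDegree_pos_iff_degree_pos]
    omega
  exact ⟨b, Rb.irreducible_map_padic hmon hred,
    Rb.exists_primitive_root hmon (by rw [natDegree_add_C, hdeg]) (by omega) hred⟩
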